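/- Suppose α ∈ 𝕋 ∖ ℚ is Diophantine, i.e., there exist C > 0 and τ > 0 such that |α − p/q| ≥ C q^{−τ} for all integers p and all q ∈ ℤ₊. Then for every ω ∈ 𝕋 and every γ ∈ (0, 1/2), the set of γ-Hölder continuous functions f ∈ C^γ(𝕋,ℝ) for which the discrete Schrödinger operator on ℓ²(ℤ) with potential V(n) = f(ω + nα) has pure point spectrum is dense in C^γ(𝕋,ℝ) with respect to the Hölder norm. -/

import Mathlib

open MeasureTheory

noncomputable section

/-- `ψ ∈ ℓ²(ℤ)` is an eigenfunction of the discrete Schrödinger operator with potential `V`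
corresponding to the eigenvalue `E`: `ψ ≠ 0` and `ψ(n+1) + ψ(n-1) + V(n)ψ(n) = Eψ(n)`. -/
def IsEigenfunction (V : ℤ → ℝ) (E : ℝ) (ψ : lp (fun _ : ℤ => ℝ) 2) : Prop :=
  ψ ≠ 0 ∧ ∀ n : ℤ, (ψ : ∀ _ : ℤ, ℝ) (n + 1) + (ψ : ∀ _ : ℤ, ℝ) (n - 1)
    + V n * (ψ : ∀ _ : ℤ, ℝ) n = E * (ψ : ∀ _ : ℤ, ℝ) n

/-- The discrete Schrödinger operator with potential `V` has pure point spectrum: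
its eigenfunctions span a dense subspace of `ℓ²(ℤ)`. -/
def HasPurePointSpectrum (V : ℤ → ℝ) : Prop :=
  (Submodule.span ℝ
    {ψ : lp (fun _ : ℤ => ℝ) 2 | ∃ E : ℝ, IsEigenfunction V E ψ}).topologicalClosure = ⊤

/-- `f : 𝕋 → ℝ` is `γ`-Hölder continuous. -/
def IsHolder (γ : ℝ) (f : AddCircle (1:ℝ) → ℝ) : Prop :=
  ∃ C : ℝ, 0 ≤ C ∧ ∀ x y : AddCircle (1:ℝ), |f x - f y| ≤ C * dist x y ^ γ

/-!
`f` is corrected by a summable series of small Hölder functions, the `m`-th of which adds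
`N m ^ (3 d - 1/2) * s` to the potential on `[-N m, N m]`, where `γ = 1/2 - 4 d` and the sequence
`s` takes values in `[0, 1]`. The Diophantine condition keeps the points `ω + nα`, `|n| ≤ N m`,
apart, so every such `s` is interpolated by bumps of `γ`-Hölder norm at most a multiple of
`N m ^ (-d)`.

The sequence `s` does two things. Random bits near `±N m` create barriers: averaging over the bits
of two consecutive sites contracts `L²(ℝ²)` by a factor `1 - c l²` with `l = N m ^ (3 d - 1/2)`, so
a string of `k` bits leaves the transfer matrix small only with probability exponentially small in
`k l²`, and a finite net of energies is served at once because `l² N m` is a positive power of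
`N m`. The values at the sites `0` and `1`, whose delta functions are cyclic for the operator, are
chosen by averaging rank one perturbations, so that the finitely many energies that are resonant
for the earlier scales carry little spectral weight. Away from these energies the eigenvectors of
large boxes decay beyond the barriers, so they form a tight family, and their limits are
eigenfunctions that span `ℓ²(ℤ)`.
-/

/-! ### Averaged shears of the plane -/

/-- Square integrable functions on the plane. -/
abbrev PlaneL2 := Lp ℝ 2 (volume : Measure (ℝ × ℝ))

lemma PlaneL2.norm_sq (f : PlaneL2) : ‖f‖ ^ 2 = ∫ v, f v ^ 2 := by
  rw [← real_inner_self_eq_norm_sq, L2.inner_def]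
  simp only [real_inner_self_eq_norm_sq, Real.norm_eq_abs, sq_abs]

lemma PlaneL2.integrable_sq (f : PlaneL2) : Integrable (fun v => f v ^ 2) :=
  (Lp.memLp f).integrable_sq

/-- The horizontal shear `(x, y) ↦ (x + e y, y)` of the plane. -/
def shear (e : ℝ) : ℝ × ℝ →ₗ[ℝ] ℝ × ℝ :=
  (LinearMap.fst ℝ ℝ ℝ + e • LinearMap.snd ℝ ℝ ℝ).prod (LinearMap.snd ℝ ℝ ℝ)

/-- The rotation `(x, y) ↦ (-y, x)` of the plane by a quarter turn. -/
def quarterTurn : ℝ × ℝ →ₗ[ℝ] ℝ × ℝ := (-LinearMap.snd ℝ ℝ ℝ).prod (LinearMap.fst ℝ ℝ ℝ)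

lemma shear_apply (e : ℝ) (v : ℝ × ℝ) : shear e v = (v.1 + e * v.2, v.2) := rfl

lemma quarterTurn_apply (v : ℝ × ℝ) : quarterTurn v = (-v.2, v.1) := rfl

lemma shear_zero : shear 0 = LinearMap.id := by
  ext <;> simp [shear]

lemma shear_comp_shear (a b : ℝ) : shear b ∘ₗ shear a = shear (a + b) := by
  ext <;> simp [shear]

lemma shear_injective (e : ℝ) : Function.Injective (shear e) := by
  refine Function.LeftInverse.injective (g := shear (-e)) fun v => ?_
  rw [← LinearMap.comp_apply, shear_comp_shear, add_neg_cancel, shear_zero, LinearMap.id_apply]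

lemma quarterTurn_injective : Function.Injective quarterTurn := fun v w h => by
  simp only [quarterTurn_apply, Prod.mk.injEq, neg_inj] at h
  exact Prod.ext h.2 h.1

lemma measurableEmbedding_of_injective {T : ℝ × ℝ →ₗ[ℝ] ℝ × ℝ} (hT : Function.Injective T) :
    MeasurableEmbedding T :=
  T.continuous_of_finiteDimensional.measurableEmbedding hT

lemma measurePreserving_shear (e : ℝ) :
    MeasurePreserving (shear e) (volume : Measure (ℝ × ℝ)) volume := by
  have hswap : MeasurePreserving (Prod.swap : ℝ × ℝ → ℝ × ℝ) volume volume :=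
    Measure.measurePreserving_swap
  have hvert : MeasurePreserving (fun v : ℝ × ℝ => (v.1, v.2 + e * v.1)) volume volume :=
    (MeasurePreserving.id volume).skew_product (g := fun x y => y + e * x) (by fun_prop)
      (.of_forall fun x => (measurePreserving_add_right volume (e * x)).map_eq)
  exact hswap.comp (hvert.comp hswap)

lemma measurePreserving_quarterTurn :
    MeasurePreserving quarterTurn (volume : Measure (ℝ × ℝ)) volume :=
  ((Measure.measurePreserving_neg volume).prod (MeasurePreserving.id volume)).comp
    Measure.measurePreserving_swap

/-- Composition with a shear. -/
def shearPullback (e : ℝ) : PlaneL2 →ₗᵢ[ℝ] PlaneL2 :=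
  Lp.compMeasurePreservingₗᵢ ℝ (shear e) (measurePreserving_shear e)

/-- Composition with the quarter turn. -/
def quarterPullback : PlaneL2 →ₗᵢ[ℝ] PlaneL2 :=
  Lp.compMeasurePreservingₗᵢ ℝ quarterTurn measurePreserving_quarterTurn

lemma coeFn_shearPullback (e : ℝ) (f : PlaneL2) : shearPullback e f =ᵐ[volume] f ∘ shear e :=
  Lp.coeFn_compMeasurePreserving f (measurePreserving_shear e)

lemma coeFn_quarterPullback (f : PlaneL2) : quarterPullback f =ᵐ[volume] f ∘ quarterTurn :=
  Lp.coeFn_compMeasurePreserving f measurePreserving_quarterTurn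

lemma shearPullback_shearPullback (a b : ℝ) (f : PlaneL2) :
    shearPullback a (shearPullback b f) = shearPullback (a + b) f := by
  simp only [shearPullback, ← shear_comp_shear a b]
  exact (Lp.compMeasurePreserving_comp_apply f (measurePreserving_shear b)
    (measurePreserving_shear a)).symm

lemma shearPullback_zero (f : PlaneL2) : shearPullback 0 f = f := by
  simp only [shearPullback, shear_zero]
  exact Lp.compMeasurePreserving_id_apply f

/-- The slope `x / y` of the line through `(x, y)`, truncated to `[-2, 2]`. On vectors with
`|x| ≤ |y|` a shear by `e` raises it by exactly `e`. -/
def clampSlope (v : ℝ × ℝ) : ℝ := max (-2) (min 2 (v.1 / v.2))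

lemma measurable_clampSlope : Measurable clampSlope := by
  unfold clampSlope; fun_prop

lemma abs_clampSlope_le (v : ℝ × ℝ) : |clampSlope v| ≤ 2 :=
  abs_le.2 ⟨le_max_left _ _, max_le (by norm_num) (min_le_left _ _)⟩

/-- The cone of the vectors that are at least as close to the vertical axis as to the horizontal
one. -/
def verticalCone : Set (ℝ × ℝ) := {v | |v.1| ≤ |v.2| ∧ v.2 ≠ 0}

/-- The cone of the vectors that are at least as close to the horizontal axis as to the vertical
one. -/
def horizontalCone : Set (ℝ × ℝ) := {v | |v.2| ≤ |v.1| ∧ v.1 ≠ 0}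

lemma quarterTurn_preimage_horizontalCone : quarterTurn ⁻¹' horizontalCone = verticalCone := by
  ext v
  simp only [Set.mem_preimage, horizontalCone, verticalCone, Set.mem_ofPred_eq, quarterTurn_apply,
    abs_neg, ne_eq, neg_eq_zero]

lemma measurableSet_horizontalCone : MeasurableSet horizontalCone := by
  have hle : MeasurableSet {v : ℝ × ℝ | |v.2| ≤ |v.1|} :=
    measurableSet_le (by fun_prop) (by fun_prop)
  have hne : MeasurableSet {v : ℝ × ℝ | v.1 ≠ 0} :=
    (measurableSet_eq_fun (by fun_prop) (by fun_prop)).compl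
  exact hle.inter hne

lemma measurableSet_verticalCone : MeasurableSet verticalCone :=
  quarterTurn_preimage_horizontalCone ▸
    measurePreserving_quarterTurn.measurable measurableSet_horizontalCone

lemma compl_singleton_zero_subset_cones :
    ({0}ᶜ : Set (ℝ × ℝ)) ⊆ verticalCone ∪ horizontalCone := by
  intro v hv
  rcases eq_or_ne v.2 0 with h2 | h2
  · have h1 : v.1 ≠ 0 := fun h1 => hv (Prod.ext h1 h2)
    exact Or.inr ⟨by rw [h2, abs_zero]; exact abs_nonneg _, h1⟩
  · rcases le_or_gt |v.1| |v.2| with h | h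
    · exact Or.inl ⟨h, h2⟩
    · exact Or.inr ⟨h.le, abs_pos.1 ((abs_nonneg _).trans_lt h)⟩

lemma clampSlope_le_shear {e : ℝ} (he : 0 ≤ e) (v : ℝ × ℝ) :
    clampSlope v ≤ clampSlope (shear e v) := by
  simp only [clampSlope, shear_apply]
  rcases eq_or_ne v.2 0 with h | h
  · simp only [h, div_zero, mul_zero, add_zero, le_refl]
  · have : v.1 / v.2 ≤ (v.1 + e * v.2) / v.2 := by
      rw [add_div, mul_div_cancel_right₀ _ h]; linarith
    gcongr

lemma clampSlope_shear_of_mem {e : ℝ} (he : 0 ≤ e) (he1 : e ≤ 1) {v : ℝ × ℝ}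
    (hv : v ∈ verticalCone) : clampSlope (shear e v) = clampSlope v + e := by
  obtain ⟨hle, h⟩ := hv
  have hslope : |v.1 / v.2| ≤ 1 := by
    rw [abs_div]; exact div_le_one_of_le₀ hle (abs_nonneg _)
  rw [abs_le] at hslope
  have hshear : (v.1 + e * v.2) / v.2 = v.1 / v.2 + e := by
    rw [add_div, mul_div_cancel_right₀ _ h]
  simp only [clampSlope, shear_apply, hshear]
  rw [min_eq_right (by linarith), min_eq_right (by linarith), max_eq_right (by linarith),
    max_eq_right (by linarith)]

lemma integrable_clampSlope_mul_sq (f : PlaneL2) :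
    Integrable (fun v => clampSlope v * f v ^ 2) :=
  (PlaneL2.integrable_sq f).bdd_mul measurable_clampSlope.aestronglyMeasurable
    (.of_forall abs_clampSlope_le)

lemma integrable_clampSlope_shear_mul_sq (e : ℝ) (f : PlaneL2) :
    Integrable (fun v => clampSlope (shear e v) * f v ^ 2) :=
  (PlaneL2.integrable_sq f).bdd_mul
    (measurable_clampSlope.comp (measurePreserving_shear e).measurable).aestronglyMeasurable
    (.of_forall fun v => abs_clampSlope_le (shear e v))

lemma integral_clampSlope_shear_mul_sq (e : ℝ) (g : PlaneL2) :
    ∫ v, clampSlope (shear e v) * shearPullback e g v ^ 2 = ∫ v, clampSlope v * g v ^ 2 := by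
  rw [← (measurePreserving_shear e).integral_comp
    (measurableEmbedding_of_injective (shear_injective e)) fun v => clampSlope v * g v ^ 2]
  refine integral_congr_ae ?_
  filter_upwards [coeFn_shearPullback e g] with v hv
  rw [hv, Function.comp_apply]

lemma mul_setIntegral_verticalCone_le {e : ℝ} (he : 0 ≤ e) (he1 : e ≤ 1) (g : PlaneL2) :
    e * ∫ v in verticalCone, g v ^ 2 ≤
      ∫ v, clampSlope (shear e v) * (g v ^ 2 - shearPullback e g v ^ 2) := by
  have hpoint (v : ℝ × ℝ) : verticalCone.indicator (fun v => e * g v ^ 2) v ≤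
      clampSlope (shear e v) * g v ^ 2 - clampSlope v * g v ^ 2 := by
    rw [← sub_mul]
    by_cases hv : v ∈ verticalCone
    · rw [Set.indicator_of_mem hv, clampSlope_shear_of_mem he he1 hv, add_sub_cancel_left]
    · rw [Set.indicator_of_notMem hv]
      exact mul_nonneg (sub_nonneg.2 (clampSlope_le_shear he v)) (sq_nonneg _)
  have hmono := integral_mono
    (((PlaneL2.integrable_sq g).const_mul e).indicator measurableSet_verticalCone)
    ((integrable_clampSlope_shear_mul_sq e g).sub (integrable_clampSlope_mul_sq g)) hpoint
  rw [integral_indicator measurableSet_verticalCone, integral_const_mul] at hmono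
  refine hmono.trans_eq ?_
  simp only [Pi.sub_apply, mul_sub]
  rw [integral_sub (integrable_clampSlope_shear_mul_sq e g) (integrable_clampSlope_mul_sq g),
    integral_sub (integrable_clampSlope_shear_mul_sq e g)
      (integrable_clampSlope_shear_mul_sq e (shearPullback e g)),
    integral_clampSlope_shear_mul_sq]

lemma mul_sq_sub_sq_le {w t : ℝ} (hw : |w| ≤ 2) (ht : 0 < t) (a b : ℝ) :
    w * (a ^ 2 - b ^ 2) ≤ t * (a - b) ^ 2 + 2 / t * (a ^ 2 + b ^ 2) := by
  have hw2 : w ^ 2 ≤ 2 ^ 2 := sq_le_sq' (abs_le.1 hw).1 (abs_le.1 hw).2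
  have hcross : t * (w * (a ^ 2 - b ^ 2)) ≤ t ^ 2 * (a - b) ^ 2 + (a + b) ^ 2 := by
    nlinarith [sq_nonneg (t * (a - b) - w / 2 * (a + b)),
      mul_nonneg (sub_nonneg.2 hw2) (sq_nonneg (a + b))]
  refine le_of_mul_le_mul_left ?_ ht
  calc t * (w * (a ^ 2 - b ^ 2)) ≤ t ^ 2 * (a - b) ^ 2 + ((a + b) ^ 2 + (a - b) ^ 2) := by
        linarith [sq_nonneg (a - b)]
    _ = t * (t * (a - b) ^ 2 + 2 / t * (a ^ 2 + b ^ 2)) := by field_simp; ring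

lemma integral_mul_sq_sub_sq_le {W : ℝ × ℝ → ℝ} (hW : ∀ v, |W v| ≤ 2) (hWm : Measurable W) {t : ℝ}
    (ht : 0 < t) (f g : PlaneL2) :
    ∫ v, W v * (f v ^ 2 - g v ^ 2) ≤ t * ‖f - g‖ ^ 2 + 2 / t * (‖f‖ ^ 2 + ‖g‖ ^ 2) := by
  have hf := PlaneL2.integrable_sq f
  have hg := PlaneL2.integrable_sq g
  have hsub := (PlaneL2.integrable_sq (f - g)).const_mul t
  have hadd : Integrable fun v => 2 / t * (f v ^ 2 + g v ^ 2) := (hf.add hg).const_mul (2 / t)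
  simp only [PlaneL2.norm_sq]
  rw [← integral_add hf hg, ← integral_const_mul, ← integral_const_mul, ← integral_add hsub hadd]
  refine integral_mono_ae ((hf.sub hg).bdd_mul hWm.aestronglyMeasurable (.of_forall hW))
    (hsub.add hadd) ?_
  filter_upwards [Lp.coeFn_sub f g] with v hv
  rw [hv]
  exact mul_sq_sub_sq_le (hW v) ht (f v) (g v)

lemma mul_setIntegral_verticalCone_le_norm {e t : ℝ} (he : 0 ≤ e) (he1 : e ≤ 1) (ht : 0 < t)
    (g : PlaneL2) :
    e * ∫ v in verticalCone, g v ^ 2 ≤ t * ‖g - shearPullback e g‖ ^ 2 + 4 / t * ‖g‖ ^ 2 := by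
  refine (mul_setIntegral_verticalCone_le he he1 g).trans ((integral_mul_sq_sub_sq_le
    (fun v => abs_clampSlope_le (shear e v))
    (measurable_clampSlope.comp (measurePreserving_shear e).measurable) ht g _).trans_eq ?_)
  rw [(shearPullback e).norm_map]
  ring

lemma setIntegral_verticalCone_quarterPullback (g : PlaneL2) :
    ∫ v in verticalCone, quarterPullback g v ^ 2 = ∫ v in horizontalCone, g v ^ 2 := by
  rw [← measurePreserving_quarterTurn.setIntegral_preimage_emb
    (measurableEmbedding_of_injective quarterTurn_injective) (fun v => g v ^ 2) horizontalCone,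
    quarterTurn_preimage_horizontalCone]
  refine integral_congr_ae (ae_restrict_of_ae ?_)
  filter_upwards [coeFn_quarterPullback g] with v hv
  rw [hv, Function.comp_apply]

lemma norm_sq_le_setIntegral_cones (g : PlaneL2) :
    ‖g‖ ^ 2 ≤ (∫ v in verticalCone, g v ^ 2) + ∫ v in verticalCone, quarterPullback g v ^ 2 := by
  have hv := (PlaneL2.integrable_sq g).indicator measurableSet_verticalCone
  have hh := (PlaneL2.integrable_sq g).indicator measurableSet_horizontalCone
  rw [setIntegral_verticalCone_quarterPullback, PlaneL2.norm_sq,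
    ← integral_indicator measurableSet_verticalCone,
    ← integral_indicator measurableSet_horizontalCone, ← integral_add hv hh]
  refine integral_mono_ae (PlaneL2.integrable_sq g) (hv.add hh) ?_
  filter_upwards [compl_mem_ae_iff.2 (measure_singleton (0 : ℝ × ℝ))] with v hv0
  have hnonneg (s : Set (ℝ × ℝ)) : 0 ≤ s.indicator (fun v => g v ^ 2) v :=
    Set.indicator_nonneg (fun _ _ => sq_nonneg _) v
  rcases compl_singleton_zero_subset_cones hv0 with h | h
  · rw [Set.indicator_of_mem h]
    exact le_add_of_nonneg_right (hnonneg _)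
  · rw [Set.indicator_of_mem h]
    exact le_add_of_nonneg_left (hnonneg _)

lemma norm_sq_le_norm_sub_shearPullback {e : ℝ} (he : 0 < e) (he1 : e ≤ 1) (g : PlaneL2) :
    e ^ 2 / 32 * ‖g‖ ^ 2 ≤ ‖g - shearPullback e g‖ ^ 2 +
      ‖quarterPullback g - shearPullback e (quarterPullback g)‖ ^ 2 := by
  -- `16 / e` makes the error term `4 / t` of the cone estimate equal to `e / 4`
  have ht : 0 < 16 / e := by positivity
  have hv := mul_setIntegral_verticalCone_le_norm he.le he1 ht g
  have hh := mul_setIntegral_verticalCone_le_norm he.le he1 ht (quarterPullback g)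
  have hcones := mul_le_mul_of_nonneg_left (norm_sq_le_setIntegral_cones g) he.le
  have hquarter : 4 / (16 / e) = e / 4 := by field_simp; norm_num
  rw [hquarter] at hv hh
  rw [quarterPullback.norm_map] at hh
  set D := ‖g - shearPullback e g‖ ^ 2
  set D' := ‖quarterPullback g - shearPullback e (quarterPullback g)‖ ^ 2
  have hgap : e / 2 * ‖g‖ ^ 2 ≤ 16 / e * (D + D') := by linarith
  calc e ^ 2 / 32 * ‖g‖ ^ 2 = e / 16 * (e / 2 * ‖g‖ ^ 2) := by ring
    _ ≤ e / 16 * (16 / e * (D + D')) := by gcongr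
    _ = D + D' := by field_simp

/-- The average of the identity and the composition with the shear by `-l`. -/
def shearAvg (l : ℝ) : PlaneL2 →ₗ[ℝ] PlaneL2 :=
  (2⁻¹ : ℝ) • (LinearMap.id + (shearPullback (-l)).toLinearMap)

lemma shearAvg_apply (l : ℝ) (f : PlaneL2) :
    shearAvg l f = (2⁻¹ : ℝ) • (f + shearPullback (-l) f) := rfl

lemma norm_sub_shearPullback_neg (l : ℝ) (f : PlaneL2) :
    ‖f - shearPullback (-l) f‖ = ‖f - shearPullback l f‖ := by
  rw [← (shearPullback l).norm_map (f - _), map_sub, shearPullback_shearPullback, add_neg_cancel,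
    shearPullback_zero, norm_sub_rev]

lemma norm_shearAvg_sq (l : ℝ) (f : PlaneL2) :
    ‖shearAvg l f‖ ^ 2 = ‖f‖ ^ 2 - 1 / 4 * ‖f - shearPullback l f‖ ^ 2 := by
  have h := parallelogram_law_with_norm ℝ f (shearPullback (-l) f)
  rw [(shearPullback (-l)).norm_map, norm_sub_shearPullback_neg] at h
  rw [shearAvg_apply, norm_smul, mul_pow, Real.norm_of_nonneg (by norm_num)]
  linarith

lemma shearPullback_shearAvg (a l : ℝ) (f : PlaneL2) :
    shearPullback a (shearAvg l f) = shearAvg l (shearPullback a f) := by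
  simp only [shearAvg_apply, map_smul, map_add, shearPullback_shearPullback, add_comm a]

lemma norm_shearAvg_le (l : ℝ) (f : PlaneL2) : ‖shearAvg l f‖ ≤ ‖f‖ := by
  refine le_of_sq_le_sq ?_ (norm_nonneg _)
  rw [norm_shearAvg_sq]
  exact sub_le_self _ (by positivity)

lemma norm_shearAvg_quarterPullback_shearAvg_le {l : ℝ} (hl : 0 < l) (hl1 : l ≤ 1) (f : PlaneL2) :
    (1 + l ^ 2 / 128) * ‖shearAvg l (quarterPullback (shearAvg l f))‖ ^ 2 ≤ ‖f‖ ^ 2 := by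
  set g := shearAvg l f with hg
  have hgap := norm_sq_le_norm_sub_shearPullback hl hl1 g
  have hsq := norm_shearAvg_sq l (quarterPullback g)
  have hgsq : ‖g‖ ^ 2 = _ := norm_shearAvg_sq l f
  rw [quarterPullback.norm_map] at hsq
  have hcontr : ‖g - shearPullback l g‖ ^ 2 ≤ ‖f - shearPullback l f‖ ^ 2 := by
    rw [hg, shearPullback_shearAvg, ← map_sub]
    gcongr
    exact norm_shearAvg_le _ _
  have hle : ‖shearAvg l (quarterPullback g)‖ ^ 2 ≤ ‖g‖ ^ 2 := by
    rw [hsq]; exact sub_le_self _ (by positivity)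
  linarith [mul_le_mul_of_nonneg_left hle (show 0 ≤ l ^ 2 / 128 by positivity)]

/-- Composition with the transfer map `(x, y) ↦ (-y + e x, x)` of one site. -/
def stepPullback (e : ℝ) : PlaneL2 →ₗᵢ[ℝ] PlaneL2 := quarterPullback.comp (shearPullback e)

lemma stepPullback_apply (e : ℝ) (f : PlaneL2) :
    stepPullback e f = quarterPullback (shearPullback e f) := rfl

/-- The product of the transfer maps of the sites `0, …, n - 1`. -/
def transfer : (ℕ → ℝ) → ℕ → ℝ × ℝ →ₗ[ℝ] ℝ × ℝ
  | _, 0 => LinearMap.id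
  | e, n + 1 => transfer (fun i => e (i + 1)) n ∘ₗ shear (e 0) ∘ₗ quarterTurn

lemma measurePreserving_transfer (e : ℕ → ℝ) (n : ℕ) :
    MeasurePreserving (transfer e n) (volume : Measure (ℝ × ℝ)) volume := by
  induction n generalizing e with
  | zero => exact MeasurePreserving.id _
  | succ n ih =>
    exact (ih _).comp ((measurePreserving_shear (e 0)).comp measurePreserving_quarterTurn)

/-- Composition with a product of transfer maps. -/
def transferPullback (e : ℕ → ℝ) (n : ℕ) : PlaneL2 →ₗᵢ[ℝ] PlaneL2 :=
  Lp.compMeasurePreservingₗᵢ ℝ (transfer e n) (measurePreserving_transfer e n)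

lemma transferPullback_zero (e : ℕ → ℝ) (f : PlaneL2) : transferPullback e 0 f = f :=
  Lp.compMeasurePreserving_id_apply f

lemma transferPullback_succ (e : ℕ → ℝ) (n : ℕ) (f : PlaneL2) :
    transferPullback e (n + 1) f =
      stepPullback (e 0) (transferPullback (fun i => e (i + 1)) n f) := by
  have hshear := measurePreserving_shear (e 0)
  exact (Lp.compMeasurePreserving_comp_apply f (measurePreserving_transfer _ n)
    (hshear.comp measurePreserving_quarterTurn)).trans
      (Lp.compMeasurePreserving_comp_apply _ hshear measurePreserving_quarterTurn)

/-- The average of `transferPullback (e - l b) n f` over independent uniform bits `b ∈ {0, 1}ⁿ`. -/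
def averagedPullback (l : ℝ) : (ℕ → ℝ) → ℕ → PlaneL2 → PlaneL2
  | _, 0, f => f
  | e, n + 1, f => (2⁻¹ : ℝ) • (stepPullback (e 0) (averagedPullback l (fun i => e (i + 1)) n f) +
      stepPullback (e 0 - l) (averagedPullback l (fun i => e (i + 1)) n f))

lemma averagedPullback_succ (l : ℝ) (e : ℕ → ℝ) (n : ℕ) (f : PlaneL2) :
    averagedPullback l e (n + 1) f = quarterPullback
      (shearAvg l (shearPullback (e 0) (averagedPullback l (fun i => e (i + 1)) n f))) := by
  simp only [averagedPullback, stepPullback_apply, shearAvg_apply, map_smul,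
    map_add, shearPullback_shearPullback, neg_add_eq_sub]

lemma norm_averagedPullback_sq_le {l : ℝ} (hl : 0 < l) (hl1 : l ≤ 1) (k : ℕ) (e : ℕ → ℝ)
    (f : PlaneL2) :
    (1 + l ^ 2 / 128) ^ k * ‖averagedPullback l e (2 * k) f‖ ^ 2 ≤ ‖f‖ ^ 2 := by
  induction k generalizing e with
  | zero => simp [averagedPullback]
  | succ k ih =>
    rw [mul_add_one, averagedPullback_succ, averagedPullback_succ, quarterPullback.norm_map,
      ← shearPullback_shearAvg, (shearPullback (e 0)).norm_map]
    set F := averagedPullback l (fun i => e (i + 1 + 1)) (2 * k) f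
    have hgap := norm_shearAvg_quarterPullback_shearAvg_le hl hl1 (shearPullback (e (0 + 1)) F)
    rw [(shearPullback (e (0 + 1))).norm_map] at hgap
    rw [pow_succ, mul_assoc]
    exact (mul_le_mul_of_nonneg_left hgap (by positivity)).trans (ih _)

lemma norm_averagedPullback_le_div_sqrt {l : ℝ} (hl : 0 < l) (hl1 : l ≤ 1) (k : ℕ) (e : ℕ → ℝ)
    (f : PlaneL2) :
    ‖averagedPullback l e (2 * k) f‖ ≤ ‖f‖ / √((1 + l ^ 2 / 128) ^ k) := by
  have hpos : 0 < (1 + l ^ 2 / 128) ^ k := by positivity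
  rw [le_div_iff₀' (Real.sqrt_pos.2 hpos)]
  refine le_of_sq_le_sq ?_ (norm_nonneg f)
  rw [mul_pow, Real.sq_sqrt hpos.le]
  exact norm_averagedPullback_sq_le hl hl1 k e f

lemma exists_bit_le {ι : Type*} (s : Finset ι) (l : ℝ) (a : ι → ℝ) (g : ι → PlaneL2)
    (L : ι → PlaneL2 →ₗ[ℝ] ℝ) : ∃ c : ℝ, (c = 0 ∨ c = 1) ∧
      ∑ i ∈ s, L i (stepPullback (a i - l * c) (g i)) ≤
        ∑ i ∈ s, L i ((2⁻¹ : ℝ) • (stepPullback (a i) (g i) + stepPullback (a i - l) (g i))) := by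
  simp only [map_smul, map_add, smul_eq_mul, ← Finset.mul_sum, Finset.sum_add_distrib]
  rcases le_total (∑ i ∈ s, L i (stepPullback (a i) (g i)))
    (∑ i ∈ s, L i (stepPullback (a i - l) (g i))) with h | h
  · exact ⟨0, Or.inl rfl, by simp only [mul_zero, sub_zero]; linarith⟩
  · exact ⟨1, Or.inr rfl, by simp only [mul_one]; linarith⟩

lemma exists_bits_le {ι : Type*} (s : Finset ι) (l : ℝ) (f : PlaneL2) (n : ℕ) (e : ι → ℕ → ℝ)
    (L : ι → PlaneL2 →ₗ[ℝ] ℝ) : ∃ b : ℕ → ℝ, (∀ i, b i = 0 ∨ b i = 1) ∧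
      ∑ i ∈ s, L i (transferPullback (fun m => e i m - l * b m) n f) ≤
        ∑ i ∈ s, L i (averagedPullback l (e i) n f) := by
  induction n generalizing e L with
  | zero =>
    exact ⟨fun _ => 0, fun _ => Or.inl rfl,
      by simp only [transferPullback_zero, averagedPullback, le_refl]⟩
  | succ n ih =>
    obtain ⟨c, hc, hcle⟩ := exists_bit_le s l (fun i => e i 0)
      (fun i => averagedPullback l (fun m => e i (m + 1)) n f) L
    obtain ⟨b, hb, hble⟩ := ih (fun i m => e i (m + 1))
      (fun i => L i ∘ₗ (stepPullback (e i 0 - l * c)).toLinearMap)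
    refine ⟨fun m => Nat.casesOn m c b, fun i => ?_, ?_⟩
    · cases i with
      | zero => exact hc
      | succ i => exact hb i
    · simp only [transferPullback_succ]
      exact hble.trans hcle

lemma volume_real_closedBall_zero {r : ℝ} (hr : 0 ≤ r) :
    volume.real (Metric.closedBall (0 : ℝ × ℝ) r) = 4 * r ^ 2 := by
  rw [← Prod.mk_zero_zero, ← closedBall_prod_same, measureReal_def, Measure.volume_eq_prod,
    Measure.prod_prod, Real.volume_closedBall, ENNReal.toReal_mul,
    ENNReal.toReal_ofReal (by positivity)]
  ring

/-- The indicator function of the square `[-1, 1]²`, the closed unit ball of `ℝ × ℝ`. -/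
def squareInd : PlaneL2 :=
  indicatorConstLp 2 (Metric.isClosed_closedBall (x := (0 : ℝ × ℝ)) (ε := 1)).measurableSet
    measure_closedBall_lt_top.ne 1

lemma inner_squareInd_transferPullback (e : ℕ → ℝ) (n : ℕ) :
    inner ℝ squareInd (transferPullback e n squareInd) =
      volume.real (Metric.closedBall 0 1 ∩ transfer e n ⁻¹' Metric.closedBall 0 1) := by
  have hpull : transferPullback e n squareInd = indicatorConstLp 2 _ _ 1 :=
    Lp.indicatorConstLp_compMeasurePreserving _ _ 1 (measurePreserving_transfer e n)
  have hfin : volume (Metric.closedBall (0 : ℝ × ℝ) 1) ≠ ⊤ := measure_closedBall_lt_top.ne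
  have hfin' : volume (transfer e n ⁻¹' Metric.closedBall 0 1) ≠ ⊤ := by
    rwa [(measurePreserving_transfer e n).measure_preimage
      Metric.isClosed_closedBall.measurableSet.nullMeasurableSet]
  rw [hpull, squareInd]
  exact L2.real_inner_indicatorConstLp_one_indicatorConstLp_one _ _ hfin hfin'

lemma norm_squareInd_sq : ‖squareInd‖ ^ 2 = 4 := by
  have hself := inner_squareInd_transferPullback 0 0
  rwa [transferPullback_zero, real_inner_self_eq_norm_sq, transfer, LinearMap.id_coe,
    Set.preimage_id, Set.inter_self, volume_real_closedBall_zero zero_le_one, one_pow,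
    mul_one] at hself

lemma closedBall_subset_inter_preimage {T : ℝ × ℝ →ₗ[ℝ] ℝ × ℝ} {β : ℝ} (hβ : 1 ≤ β)
    (hx : ‖T (1, 0)‖ ≤ β) (hy : ‖T (0, 1)‖ ≤ β) :
    Metric.closedBall 0 (1 / (2 * β)) ⊆
      Metric.closedBall 0 1 ∩ T ⁻¹' Metric.closedBall 0 1 := by
  have : 0 < β := by positivity
  intro v hv
  rw [mem_closedBall_zero_iff] at hv
  refine ⟨mem_closedBall_zero_iff.2 (hv.trans ?_), mem_closedBall_zero_iff.2 ?_⟩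
  · rw [div_le_one (by positivity)]; linarith
  · have hdecomp : v = v.1 • ((1 : ℝ), (0 : ℝ)) + v.2 • ((0 : ℝ), (1 : ℝ)) := by ext <;> simp
    calc ‖T v‖ = ‖v.1 • T (1, 0) + v.2 • T (0, 1)‖ := by
          conv_lhs => rw [hdecomp, map_add, map_smul, map_smul]
      _ ≤ ‖v.1‖ * ‖T (1, 0)‖ + ‖v.2‖ * ‖T (0, 1)‖ := by
          rw [← norm_smul, ← norm_smul]; exact norm_add_le _ _
      _ ≤ 1 / (2 * β) * β + 1 / (2 * β) * β := by
          gcongr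
          · exact (norm_fst_le v).trans hv
          · exact (norm_snd_le v).trans hv
      _ = 1 := by field_simp; norm_num

lemma one_div_sq_le_inner_squareInd {e : ℕ → ℝ} {n : ℕ} {β : ℝ} (hβ : 1 ≤ β)
    (hx : ‖transfer e n (1, 0)‖ ≤ β) (hy : ‖transfer e n (0, 1)‖ ≤ β) :
    1 / β ^ 2 ≤ inner ℝ squareInd (transferPullback e n squareInd) := by
  have : 0 < β := by positivity
  rw [inner_squareInd_transferPullback]
  refine le_of_eq_of_le ?_ (measureReal_mono (closedBall_subset_inter_preimage hβ hx hy)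
    (measure_ne_top_of_subset Set.inter_subset_left measure_closedBall_lt_top.ne))
  rw [volume_real_closedBall_zero (by positivity)]
  field_simp
  norm_num

/-- If all bits left some transfer matrix of the family small, then it would map a square of
definite size into the unit square, so some correlation of `squareInd` would not decay. -/
lemma exists_bits_large {ι : Type*} (s : Finset ι) (e : ι → ℕ → ℝ) {l β : ℝ} (hl : 0 < l)
    (hl1 : l ≤ 1) (hβ : 1 ≤ β) (k : ℕ)
    (hk : (s.card * 4 * β ^ 2) ^ 2 < (1 + l ^ 2 / 128) ^ k) :
    ∃ b : ℕ → ℝ, (∀ i, b i = 0 ∨ b i = 1) ∧ ∀ i ∈ s, ∃ v : ℝ × ℝ, (v = (1, 0) ∨ v = (0, 1)) ∧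
      β ≤ ‖transfer (fun m => e i m - l * b m) (2 * k) v‖ := by
  obtain ⟨b, hb, hle⟩ := exists_bits_le s l squareInd (2 * k) e
    (fun _ => (innerSL ℝ squareInd).toLinearMap)
  refine ⟨b, hb, fun i hi => ?_⟩
  by_contra! hsmall
  set S := √((1 + l ^ 2 / 128) ^ k)
  have hS : s.card * 4 * β ^ 2 < S := Real.lt_sqrt_of_sq_lt hk
  have hS0 : 0 < S := lt_of_le_of_lt (by positivity) hS
  have hlower := one_div_sq_le_inner_squareInd hβ (hsmall _ (Or.inl rfl)).le
    (hsmall _ (Or.inr rfl)).le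
  have hsingle : inner ℝ squareInd (transferPullback (fun m => e i m - l * b m) (2 * k) squareInd)
      ≤ ∑ j ∈ s, inner ℝ squareInd
        (transferPullback (fun m => e j m - l * b m) (2 * k) squareInd) :=
    Finset.single_le_sum (f := fun j => inner ℝ squareInd
      (transferPullback (fun m => e j m - l * b m) (2 * k) squareInd))
      (fun j _ => by rw [inner_squareInd_transferPullback]; exact measureReal_nonneg) hi
  have hupper (j : ι) :
      inner ℝ squareInd (averagedPullback l (e j) (2 * k) squareInd) ≤ 4 / S :=
    calc _ ≤ ‖squareInd‖ * ‖averagedPullback l (e j) (2 * k) squareInd‖ := real_inner_le_norm _ _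
      _ ≤ ‖squareInd‖ * (‖squareInd‖ / S) := by
          gcongr; exact norm_averagedPullback_le_div_sqrt hl hl1 k (e j) squareInd
      _ = 4 / S := by rw [← mul_div_assoc, ← sq, norm_squareInd_sq]
  have hchain : 1 / β ^ 2 ≤ s.card * (4 / S) :=
    (hlower.trans hsingle).trans (hle.trans ((Finset.sum_le_card_nsmul s _ _
      fun j _ => hupper j).trans_eq (nsmul_eq_mul _ _)))
  rw [← mul_div_assoc, div_le_div_iff₀ (by positivity) hS0] at hchain
  linarith

/-! ### Solutions of the difference equation and barriers -/

/-- The discrete Schrödinger operator, acting on all sequences with values in a real vector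
space. -/
def schrodinger {F : Type*} [AddCommGroup F] [Module ℝ F] (V : ℤ → ℝ) (x : ℤ → F) (n : ℤ) : F :=
  x (n + 1) + x (n - 1) + V n • x n

/-- The sequence `w` solves the difference equation `H w = E w`. -/
def IsSolution (V : ℤ → ℝ) (E : ℝ) (w : ℤ → ℝ) : Prop := ∀ n, schrodinger V w n = E * w n

lemma exists_int_orbit {X : Type*} (T : ℤ → Equiv.Perm X) (p : ℤ) (x : X) :
    ∃ s : ℤ → X, s p = x ∧ ∀ n, s (n + 1) = T n (s n) := by
  let s : ℤ → X := fun n => Int.inductionOn' (motive := fun _ => X) n p x (fun k _ y => T k y)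
    fun k _ y => (T (k - 1)).symm y
  refine ⟨s, Int.inductionOn'_self, fun n => ?_⟩
  rcases le_or_gt p n with h | h
  · exact Int.inductionOn'_add_one h
  · have hstep : s (n + 1 - 1) = (T (n + 1 - 1)).symm (s (n + 1)) := Int.inductionOn'_sub_one h
    rw [add_sub_cancel_right] at hstep
    rw [hstep, Equiv.apply_symm_apply]

lemma exists_isSolution (V : ℤ → ℝ) (E : ℝ) (p : ℤ) (v : ℝ × ℝ) :
    ∃ w, IsSolution V E w ∧ (w p, w (p - 1)) = v := by
  let T : ℤ → Equiv.Perm (ℝ × ℝ) := fun n =>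
    { toFun := fun v => ((E - V n) * v.1 - v.2, v.1)
      invFun := fun v => (v.2, (E - V n) * v.2 - v.1)
      left_inv := fun v => by ext <;> simp
      right_inv := fun v => by ext <;> simp }
  obtain ⟨s, hp, hs⟩ := exists_int_orbit T p v
  have hsnd (n : ℤ) : (s (n - 1)).1 = (s n).2 := by
    rw [← sub_add_cancel n 1, hs, add_sub_cancel_right]
    rfl
  refine ⟨fun n => (s n).1, fun n => ?_, ?_⟩
  · have hfst : (s (n + 1)).1 = (E - V n) * (s n).1 - (s n).2 := by rw [hs]; rfl
    simp only [schrodinger, hsnd, hfst, smul_eq_mul]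
    ring
  · simp only [hsnd, Prod.mk.eta, hp]

lemma IsSolution.shear_quarterTurn {V : ℤ → ℝ} {E : ℝ} {w : ℤ → ℝ} (hw : IsSolution V E w)
    (n : ℤ) : shear (E - V n) (quarterTurn (w n, w (n - 1))) = (w (n + 1), w n) := by
  have hn := hw n
  simp only [schrodinger, smul_eq_mul] at hn
  rw [quarterTurn_apply, shear_apply, Prod.mk.injEq]
  exact ⟨by linarith, rfl⟩

lemma IsSolution.transfer_apply {V : ℤ → ℝ} {E : ℝ} {w : ℤ → ℝ} (hw : IsSolution V E w) (a : ℤ)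
    (n : ℕ) :
    transfer (fun i => E - V (a + i)) n (w a, w (a - 1)) = (w (a + n), w (a + n - 1)) := by
  induction n generalizing a with
  | zero => simp [transfer]
  | succ n ih =>
    have hshift : (fun i : ℕ => E - V (a + (i + 1 : ℕ))) = fun i : ℕ => E - V (a + 1 + i) := by
      ext i; rw [Nat.cast_succ, add_right_comm, add_assoc]
    rw [transfer, LinearMap.comp_apply, LinearMap.comp_apply, Nat.cast_zero, add_zero,
      hw.shear_quarterTurn, hshift]
    have hnext := ih (a + 1)
    rw [add_sub_cancel_right] at hnext
    rw [hnext, Nat.cast_succ, add_right_comm, add_assoc]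

lemma transfer_congr {e e' : ℕ → ℝ} {n : ℕ} (h : ∀ i < n, e i = e' i) :
    transfer e n = transfer e' n := by
  induction n generalizing e e' with
  | zero => rfl
  | succ n ih => rw [transfer, transfer, h 0 n.succ_pos, ih fun i hi => h (i + 1) (by omega)]

/-- The Dirichlet solution from the right end `q` of an interval `[p, q]` is large at
the left end. -/
def IsBarrier (U : ℤ → ℝ) (E β : ℝ) (p q : ℤ) : Prop :=
  ∃ w, IsSolution U E w ∧ w q = 1 ∧ w (q + 1) = 0 ∧ β ≤ |w (p - 1)|

lemma IsSolution.wronskian_eq {V : ℤ → ℝ} {E : ℝ} {w u : ℤ → ℝ} (hw : IsSolution V E w)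
    (hu : IsSolution V E u) (p q : ℤ) :
    w q * u (q - 1) - w (q - 1) * u q = w p * u (p - 1) - w (p - 1) * u p := by
  have hperiodic : Function.Periodic (fun n => w n * u (n - 1) - w (n - 1) * u n) 1 := fun n => by
    have hwn := hw n
    have hun := hu n
    simp only [schrodinger, smul_eq_mul] at hwn hun
    simp only [add_sub_cancel_right]
    linear_combination u n * hwn - w n * hun
  simpa only [Int.cast_id, mul_one, add_sub_cancel] using hperiodic.int_mul (q - p) p

lemma IsSolution.isBarrier {U : ℤ → ℝ} {E β : ℝ} {p q : ℤ} {w : ℤ → ℝ} (hw : IsSolution U E w)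
    (h1 : |w p| = 1) (h0 : w (p - 1) = 0) (hβ : β ≤ |w (q + 1)|) : IsBarrier U E β p q := by
  obtain ⟨u, hu, huq⟩ := exists_isSolution U E (q + 1) (0, 1)
  obtain ⟨hu0, hu1⟩ := Prod.mk.inj huq
  rw [add_sub_cancel_right] at hu1
  refine ⟨u, hu, hu1, hu0, hβ.trans_eq ?_⟩
  have hwronskian := hw.wronskian_eq hu p (q + 1)
  rw [add_sub_cancel_right, hu0, hu1, h0, zero_mul, mul_one, mul_zero, sub_zero, sub_zero]
    at hwronskian
  rw [hwronskian, abs_mul, h1, one_mul]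

lemma exists_barrier_bits (S : Finset ℝ) (V : ℤ → ℝ) (a : ℤ) {l β : ℝ} (hl : 0 < l)
    (hl1 : l ≤ 1) (hβ : 1 ≤ β) (k : ℕ)
    (hk : (S.card * 4 * β ^ 2) ^ 2 < (1 + l ^ 2 / 128) ^ k) :
    ∃ b : ℕ → ℝ, (∀ i, b i = 0 ∨ b i = 1) ∧ ∀ U : ℤ → ℝ,
      (∀ i : ℕ, i < 2 * k → U (a + i) = V (a + i) + l * b i) → ∀ E ∈ S,
      ∃ p q : ℤ, (p = a ∨ p = a + 1) ∧ (q = a + 2 * k - 2 ∨ q = a + 2 * k - 1) ∧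
        IsBarrier U E β p q := by
  obtain ⟨b, hb, hlarge⟩ := exists_bits_large S (fun E i => E - V (a + i)) hl hl1 hβ k hk
  refine ⟨b, hb, fun U hU E hE => ?_⟩
  obtain ⟨v, hv, hβv⟩ := hlarge E hE
  obtain ⟨w, hw, hwa⟩ := exists_isSolution U E a v
  have htransfer : transfer (fun m => E - V (a + m) - l * b m) (2 * k) v =
      (w (a + 2 * k), w (a + 2 * k - 1)) := by
    rw [← hwa, transfer_congr fun i hi =>
      show E - V (a + i) - l * b i = E - U (a + i) by rw [hU i hi]; ring, hw.transfer_apply]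
    push_cast
    rfl
  obtain ⟨p, hp, hp1, hp0⟩ : ∃ p, (p = a ∨ p = a + 1) ∧ |w p| = 1 ∧ w (p - 1) = 0 := by
    rcases hv with rfl | rfl <;> obtain ⟨h1, h0⟩ := Prod.mk.inj hwa
    · exact ⟨a, Or.inl rfl, by rw [h1, abs_one], h0⟩
    · have hwa1 := hw a
      simp only [schrodinger, smul_eq_mul, h0, h1, mul_zero, add_zero] at hwa1
      exact ⟨a + 1, Or.inr rfl, by rw [eq_neg_of_add_eq_zero_left hwa1, abs_neg, abs_one],
        by rwa [add_sub_cancel_right]⟩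
  obtain ⟨q, hq, hβq⟩ : ∃ q, (q = a + 2 * k - 2 ∨ q = a + 2 * k - 1) ∧ β ≤ |w (q + 1)| := by
    rw [htransfer, Prod.norm_mk, le_max_iff] at hβv
    rcases hβv with h | h
    · exact ⟨a + 2 * k - 1, Or.inr rfl, by rwa [sub_add_cancel]⟩
    · exact ⟨a + 2 * k - 2, Or.inl rfl, by
        rwa [show a + 2 * (k : ℤ) - 2 + 1 = a + 2 * k - 1 by ring]⟩
  exact ⟨p, q, hp, hq, hw.isBarrier hp1 hp0 hβq⟩

/-! ### Eigenbases of finite boxes -/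

section Summation

variable {F : Type*} [AddCommGroup F] [Module ℝ F] {a b : ℤ} {f : ℤ → ℝ} {x : ℤ → F}

lemma sum_smul_shift (hf : ∀ n ∉ Finset.Icc a b, f n = 0) (hx : ∀ n ∉ Finset.Icc a b, x n = 0)
    (c : ℤ) : ∑ n ∈ Finset.Icc a b, f n • x (n + c) = ∑ n ∈ Finset.Icc a b, f (n - c) • x n := by
  have hleft : ∑ n ∈ Finset.Icc a b, f n • x (n + c) = ∑ᶠ n, f n • x (n + c) :=
    (finsum_eq_sum_of_support_subset _ fun n =>
      Function.mtr fun h => by simp [hf n h]).symm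
  have hright : ∑ n ∈ Finset.Icc a b, f (n - c) • x n = ∑ᶠ n, f (n - c) • x n :=
    (finsum_eq_sum_of_support_subset _ fun n =>
      Function.mtr fun h => by simp [hx n h]).symm
  rw [hleft, hright, ← finsum_comp_equiv (Equiv.addRight c) (f := fun n => f (n - c) • x n)]
  simp only [Equiv.coe_addRight, add_sub_cancel_right]

lemma sum_smul_schrodinger (V : ℤ → ℝ) (hf : ∀ n ∉ Finset.Icc a b, f n = 0)
    (hx : ∀ n ∉ Finset.Icc a b, x n = 0) :
    ∑ n ∈ Finset.Icc a b, f n • schrodinger V x n =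
      ∑ n ∈ Finset.Icc a b, schrodinger V f n • x n := by
  have hright := sum_smul_shift hf hx 1
  have hleft := sum_smul_shift hf hx (-1)
  simp only [← sub_eq_add_neg, sub_neg_eq_add] at hleft
  simp only [schrodinger, smul_add, add_smul, Finset.sum_add_distrib, hright, hleft, smul_eq_mul,
    smul_smul, mul_comm (V _)]
  rw [add_comm (∑ n ∈ Finset.Icc a b, f (n - 1) • x n)]

end Summation

lemma sum_sq_le_of_support {a b : ℤ} {x : ℤ → ℝ} (hx : ∀ n ∉ Finset.Icc a b, x n = 0)
    (s : Finset ℤ) : ∑ n ∈ s, x n ^ 2 ≤ ∑ n ∈ Finset.Icc a b, x n ^ 2 := by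
  rw [← Finset.sum_filter_of_ne (s := s) (p := (· ∈ Finset.Icc a b)) fun n _ =>
    Function.mtr fun h => by simp [hx n h]]
  exact Finset.sum_le_sum_of_subset_of_nonneg (fun n hn => (Finset.mem_filter.1 hn).2)
    fun _ _ _ => sq_nonneg _

/-- An orthonormal eigenbasis for the restriction of the Schrödinger operator to a box, with
eigenvalues `E` and eigenvectors `φ`, extended by zero. Both are indexed by the points of the box,
which have no relation to the eigenvectors. -/
structure BoxEigenbasis (V : ℤ → ℝ) (a b : ℤ) where
  /-- The eigenvalues. -/
  E : Finset.Icc a b → ℝ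
  /-- The eigenvectors. -/
  φ : Finset.Icc a b → ℤ → ℝ
  supp : ∀ k, ∀ n ∉ Finset.Icc a b, φ k n = 0
  eig : ∀ k, ∀ n ∈ Finset.Icc a b, schrodinger V (φ k) n = E k * φ k n
  orth : ∀ k k', ∑ n ∈ Finset.Icc a b, φ k n * φ k' n = if k = k' then 1 else 0
  complete : ∀ n ∈ Finset.Icc a b, ∀ n' ∈ Finset.Icc a b,
    ∑ k, φ k n * φ k n' = if n = n' then 1 else 0

/-- The matrix of the restriction of the Schrödinger operator to the box `[a, b]`. -/
def boxMatrix (V : ℤ → ℝ) (a b : ℤ) : Matrix (Finset.Icc a b) (Finset.Icc a b) ℝ :=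
  Matrix.of fun i j => schrodinger V (Pi.single (j : ℤ) 1) i

lemma boxMatrix_isHermitian (V : ℤ → ℝ) (a b : ℤ) : (boxMatrix V a b).IsHermitian := by
  ext i j
  simp only [boxMatrix, Matrix.conjTranspose_apply, Matrix.of_apply, star_trivial, schrodinger,
    Pi.single_apply, smul_eq_mul]
  rw [add_comm (if (j : ℤ) + 1 = i then (1 : ℝ) else 0)]
  congr 1
  · congr 1 <;> exact if_congr (by omega) rfl rfl
  · rcases eq_or_ne (i : ℤ) j with h | h
    · rw [h]
    · rw [if_neg h, if_neg h.symm, mul_zero, mul_zero]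

lemma boxMatrix_mulVec (V : ℤ → ℝ) {a b : ℤ} {x : ℤ → ℝ} (hx : ∀ n ∉ Finset.Icc a b, x n = 0)
    (i : Finset.Icc a b) : (boxMatrix V a b).mulVec (fun j => x j) i = schrodinger V x i := by
  have hsum (m : ℤ) (c : ℝ) :
      ∑ j : Finset.Icc a b, c * (if m = j then 1 else 0) * x j = c * x m := by
    rw [Finset.sum_coe_sort (Finset.Icc a b) (fun j => c * (if m = j then 1 else 0) * x j)]
    simp only [mul_ite, ite_mul, mul_one, mul_zero, zero_mul, Finset.sum_ite_eq]
    rw [ite_eq_left_iff]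
    exact fun h => by rw [hx m h, mul_zero]
  simp only [Matrix.mulVec, dotProduct, boxMatrix, Matrix.of_apply, schrodinger, Pi.single_apply,
    add_mul, Finset.sum_add_distrib, smul_eq_mul, hsum]
  simpa only [one_mul] using congrArg₂ (· + · + V i * x i) (hsum (i + 1) 1) (hsum (i - 1) 1)

lemma exists_boxEigenbasis (V : ℤ → ℝ) (a b : ℤ) : Nonempty (BoxEigenbasis V a b) := by
  have hA := boxMatrix_isHermitian V a b
  let U : Matrix (Finset.Icc a b) (Finset.Icc a b) ℝ := hA.eigenvectorUnitary
  let φ : Finset.Icc a b → ℤ → ℝ := fun k => Function.extend Subtype.val (fun i => U i k) 0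
  have hφ (k i : Finset.Icc a b) : φ k i = U i k := Subtype.val_injective.extend_apply _ _ i
  have hsupp (k : Finset.Icc a b) (n : ℤ) (hn : n ∉ Finset.Icc a b) : φ k n = 0 :=
    Function.extend_apply' _ _ _ fun ⟨i, hi⟩ => hn (hi ▸ i.2)
  refine ⟨⟨hA.eigenvalues, φ, hsupp, fun k n hn => ?_, fun k k' => ?_, fun n hn n' hn' => ?_⟩⟩
  · rw [← boxMatrix_mulVec V (hsupp k) ⟨n, hn⟩, hφ k ⟨n, hn⟩]
    simpa [hφ, U, Matrix.IsHermitian.eigenvectorUnitary_apply] using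
      congrFun (hA.mulVec_eigenvectorBasis k) ⟨n, hn⟩
  · have h := congrFun₂ (Unitary.coe_star_mul_self hA.eigenvectorUnitary) k k'
    simp only [Matrix.mul_apply, Matrix.star_apply, star_trivial, Matrix.one_apply] at h
    rw [← Finset.sum_coe_sort (Finset.Icc a b) (fun n => φ k n * φ k' n)]
    simpa only [hφ] using h
  · have hU : U * star U = 1 := Unitary.coe_mul_star_self hA.eigenvectorUnitary
    have h := congrFun₂ hU ⟨n, hn⟩ ⟨n', hn'⟩
    simp only [Matrix.mul_apply, Matrix.star_apply, star_trivial, Matrix.one_apply,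
      Subtype.mk.injEq] at h
    rw [← h]
    exact Finset.sum_congr rfl fun k _ => by rw [hφ k ⟨n, hn⟩, hφ k ⟨n', hn'⟩]

namespace BoxEigenbasis

variable {V : ℤ → ℝ} {a b : ℤ} (B : BoxEigenbasis V a b)

/-- The coefficients of a sequence in the eigenbasis. -/
def coeff {F : Type*} [AddCommGroup F] [Module ℝ F] (x : ℤ → F) (k : Finset.Icc a b) : F :=
  ∑ n ∈ Finset.Icc a b, B.φ k n • x n

lemma coeff_schrodinger_sub_smul {R F : Type*} [AddCommGroup F] [Module ℝ F] [Monoid R]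
    [DistribMulAction R F] [SMulCommClass ℝ R F] {x : ℤ → F}
    (hx : ∀ n ∉ Finset.Icc a b, x n = 0) (z : R) (k : Finset.Icc a b) :
    B.coeff (fun n => schrodinger V x n - z • x n) k = B.E k • B.coeff x k - z • B.coeff x k := by
  simp only [coeff, smul_sub, Finset.sum_sub_distrib, sum_smul_schrodinger V (B.supp k) hx,
    Finset.smul_sum]
  congr 1
  · exact Finset.sum_congr rfl fun n hn => by rw [B.eig k n hn, mul_smul]
  · exact Finset.sum_congr rfl fun n _ => smul_comm _ _ _

lemma sum_smul_coeff {F : Type*} [AddCommGroup F] [Module ℝ F] (x : ℤ → F) {n : ℤ}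
    (hn : n ∈ Finset.Icc a b) : ∑ k, B.φ k n • B.coeff x k = x n := by
  simp only [coeff, Finset.smul_sum]
  rw [Finset.sum_comm]
  have hcollapse : ∀ m ∈ Finset.Icc a b,
      ∑ k, B.φ k n • B.φ k m • x m = if n = m then x m else 0 := fun m hm => by
    simp only [smul_smul, ← Finset.sum_smul, B.complete n hn m hm, ite_smul, one_smul, zero_smul]
  rw [Finset.sum_congr rfl hcollapse, Finset.sum_ite_eq, if_pos hn]

lemma sum_norm_coeff_sq {F : Type*} [NormedAddCommGroup F] [InnerProductSpace ℝ F] (x : ℤ → F) :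
    ∑ k, ‖B.coeff x k‖ ^ 2 = ∑ n ∈ Finset.Icc a b, ‖x n‖ ^ 2 := by
  calc ∑ k, ‖B.coeff x k‖ ^ 2
      = ∑ k, ∑ n ∈ Finset.Icc a b, inner ℝ (x n) (B.φ k n • B.coeff x k) := by
        refine Finset.sum_congr rfl fun k _ => ?_
        rw [← real_inner_self_eq_norm_sq]
        conv_lhs => rw [coeff, sum_inner]
        simp only [real_inner_smul_left, real_inner_smul_right]
        rfl
    _ = ∑ n ∈ Finset.Icc a b, ‖x n‖ ^ 2 := by
        rw [Finset.sum_comm]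
        refine Finset.sum_congr rfl fun n hn => ?_
        rw [← inner_sum, B.sum_smul_coeff x hn, real_inner_self_eq_norm_sq]

lemma sum_sq (k : Finset.Icc a b) : ∑ n ∈ Finset.Icc a b, B.φ k n ^ 2 = 1 := by
  simpa only [sq, if_true] using B.orth k k

lemma abs_E_le {M : ℝ} (hM : ∀ n, |V n| ≤ M) (k : Finset.Icc a b) : |B.E k| ≤ 2 + M := by
  obtain ⟨m, hm, hmax⟩ := Finset.exists_max_image (Finset.Icc a b) (fun n => |B.φ k n|) ⟨k, k.2⟩
  have hle (n : ℤ) : |B.φ k n| ≤ |B.φ k m| := by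
    by_cases hn : n ∈ Finset.Icc a b
    · exact hmax n hn
    · rw [B.supp k n hn, abs_zero]; exact abs_nonneg _
  have hpos : 0 < |B.φ k m| := by
    refine (abs_nonneg _).lt_of_ne fun h0 => zero_ne_one (α := ℝ) ?_
    rw [← B.sum_sq k]
    refine (Finset.sum_eq_zero fun n _ => ?_).symm
    rw [abs_nonpos_iff.1 ((hle n).trans_eq h0.symm), zero_pow two_ne_zero]
  refine le_of_mul_le_mul_right ?_ hpos
  calc |B.E k| * |B.φ k m| = |B.φ k (m + 1) + B.φ k (m - 1) + V m * B.φ k m| := by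
        rw [← abs_mul, ← B.eig k m hm, schrodinger, smul_eq_mul]
    _ ≤ |B.φ k (m + 1)| + |B.φ k (m - 1)| + |V m| * |B.φ k m| := by
        rw [← abs_mul]; exact abs_add_three _ _ _
    _ ≤ |B.φ k m| + |B.φ k m| + M * |B.φ k m| := add_le_add
        (add_le_add (hle _) (hle _)) (mul_le_mul_of_nonneg_right (hM m) (abs_nonneg _))
    _ = (2 + M) * |B.φ k m| := by ring

end BoxEigenbasis

/-- The restriction of `H - E` to the box `[a, b]` is bounded below by `h`. -/
def NonResonant (V : ℤ → ℝ) (E h : ℝ) (a b : ℤ) : Prop :=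
  ∀ x : ℤ → ℝ, (∀ n ∉ Finset.Icc a b, x n = 0) →
    h ^ 2 * ∑ n ∈ Finset.Icc a b, x n ^ 2 ≤
      ∑ n ∈ Finset.Icc a b, (schrodinger V x n - E * x n) ^ 2

lemma BoxEigenbasis.nonResonant {V : ℤ → ℝ} {a b : ℤ} (B : BoxEigenbasis V a b) {E h : ℝ}
    (hh : 0 ≤ h) (hE : ∀ k, h ≤ |B.E k - E|) : NonResonant V E h a b := by
  intro x hx
  have hnorm := B.sum_norm_coeff_sq x
  have hnorm' := B.sum_norm_coeff_sq fun n => schrodinger V x n - E * x n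
  simp only [Real.norm_eq_abs, sq_abs] at hnorm hnorm'
  rw [← hnorm, ← hnorm', Finset.mul_sum]
  refine Finset.sum_le_sum fun k _ => ?_
  have hcoeff := B.coeff_schrodinger_sub_smul hx E k
  simp only [smul_eq_mul, ← sub_mul] at hcoeff
  rw [hcoeff, mul_pow, ← sq_abs (B.E k - E)]
  gcongr
  exact hE k

lemma exists_nonResonant_finset (V : ℤ → ℝ) (a b : ℤ) :
    ∃ S : Finset ℝ, S.card ≤ (b + 1 - a).toNat ∧
      ∀ E h : ℝ, 0 ≤ h → (∀ e ∈ S, h ≤ |E - e|) → NonResonant V E h a b := by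
  obtain ⟨B⟩ := exists_boxEigenbasis V a b
  refine ⟨Finset.univ.image B.E, ?_, fun E h hh hS => B.nonResonant hh fun k => ?_⟩
  · refine Finset.card_image_le.trans ?_
    rw [Finset.card_univ, Fintype.card_coe, Int.card_Icc]
  · rw [abs_sub_comm]
    exact hS _ (Finset.mem_image_of_mem _ (Finset.mem_univ k))

/-! ### Decoupling at barriers -/

lemma schrodinger_indicator_Icc {F : Type*} [AddCommGroup F] [Module ℝ F] (U : ℤ → ℝ)
    (x : ℤ → F) {p q : ℤ} (hpq : p ≤ q) (n : ℤ) :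
    schrodinger U ((Set.Icc p q).indicator x) n = (Set.Icc p q).indicator (schrodinger U x) n -
      (if n = p then x (p - 1) else 0) - (if n = q then x (q + 1) else 0) +
      (if n = p - 1 then x p else 0) + if n = q + 1 then x q else 0 := by
  have hleft : (if n = p then x (p - 1) else 0) = if n = p then x (n - 1) else 0 := by
    split_ifs with h <;> simp [h]
  have hright : (if n = q then x (q + 1) else 0) = if n = q then x (n + 1) else 0 := by
    split_ifs with h <;> simp [h]
  have hleft' : (if n = p - 1 then x p else 0) = if n = p - 1 then x (n + 1) else 0 := by
    split_ifs with h <;> simp [h]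
  have hright' : (if n = q + 1 then x q else 0) = if n = q + 1 then x (n - 1) else 0 := by
    split_ifs with h <;> simp [h]
  simp only [schrodinger, Set.indicator_apply, Set.mem_Icc, hleft, hright, hleft', hright']
  split_ifs <;> first | omega | module

/-- A sequence supported on `[p, b]` that cancels the left boundary term of the truncation of `φ`
to an interval starting at `p`, up to errors controlled by `η`, `β` and `h`. -/
def HasLeftCorrector (U : ℤ → ℝ) (E : ℝ) (φ : ℤ → ℝ) (η β h : ℝ) (p b : ℤ) : Prop :=
  ∃ (u : ℤ → ℝ) (c : ℝ), |c| ≤ η ∧ (∀ n ∉ Finset.Icc p b, u n = 0) ∧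
    (∀ n, p ≤ n → schrodinger U u n - E * u n =
      c * u n - (if n = p then φ (p - 1) else 0) + (if n = b + 1 then u b else 0)) ∧
    |u b| ≤ 1 / β ∧ ∑ n ∈ Finset.Icc p b, u n ^ 2 ≤ 4 / h ^ 2

/-- The mirror image of `HasLeftCorrector`. -/
def HasRightCorrector (U : ℤ → ℝ) (E : ℝ) (φ : ℤ → ℝ) (η β h : ℝ) (a q : ℤ) : Prop :=
  ∃ (u : ℤ → ℝ) (c : ℝ), |c| ≤ η ∧ (∀ n ∉ Finset.Icc a q, u n = 0) ∧
    (∀ n, n ≤ q → schrodinger U u n - E * u n =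
      c * u n - (if n = q then φ (q + 1) else 0) + (if n = a - 1 then u a else 0)) ∧
    |u a| ≤ 1 / β ∧ ∑ n ∈ Finset.Icc a q, u n ^ 2 ≤ 4 / h ^ 2

lemma IsBarrier.exists_truncation {U : ℤ → ℝ} {E₀ β : ℝ} {p b : ℤ} (hB : IsBarrier U E₀ β p b)
    (hpb : p ≤ b) (hβ : 0 < β) (E : ℝ) {t : ℝ} (ht : |t| ≤ 1) :
    ∃ u : ℤ → ℝ, (∀ n ∉ Finset.Icc p b, u n = 0) ∧ (∀ n, p ≤ n → schrodinger U u n - E * u n =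
      (E₀ - E) * u n - (if n = p then t else 0) + (if n = b + 1 then u b else 0)) ∧
      |u b| ≤ 1 / β := by
  obtain ⟨w, hw, hwb, hwb', hwβ⟩ := hB
  set κ := t / w (p - 1)
  have hκ : κ * w (p - 1) = t := div_mul_cancel₀ _ (abs_pos.1 (hβ.trans_le hwβ))
  let u := (Set.Icc p b).indicator fun n => κ * w n
  have hsupp (n : ℤ) (hn : n ∉ Finset.Icc p b) : u n = 0 :=
    Set.indicator_of_notMem (by simpa using hn) _
  have hu (n : ℤ) (hn : n ∈ Set.Icc p b) : u n = κ * w n := Set.indicator_of_mem hn _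
  refine ⟨u, hsupp, fun n hn => ?_, ?_⟩
  · have hscale (m : ℤ) : schrodinger U (fun n => κ * w n) m = E₀ * (κ * w m) := by
      have heig := hw m
      simp only [schrodinger, smul_eq_mul] at heig ⊢
      linear_combination κ * heig
    have hschr : (Set.Icc p b).indicator (schrodinger U fun n => κ * w n) n = E₀ * u n := by
      simp only [u, Set.indicator_apply, hscale, mul_ite, mul_zero]
    rw [schrodinger_indicator_Icc U _ hpb, hschr, hκ, hwb', mul_zero, ite_self,
      if_neg (by omega : n ≠ p - 1), hu b ⟨hpb, le_rfl⟩]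
    ring
  · rw [hu b ⟨hpb, le_rfl⟩, hwb, mul_one, abs_div]
    exact div_le_div₀ zero_le_one ht hβ hwβ

lemma NonResonant.sum_sq_le_of_source {U : ℤ → ℝ} {E h c t : ℝ} {a b p : ℤ} {u : ℤ → ℝ}
    (hN : NonResonant U E h a b) (hh : 0 < h) (hc : |c| ≤ h / 2) (ht : |t| ≤ 1)
    (hu : ∀ n ∉ Finset.Icc a b, u n = 0)
    (heq : ∀ n ∈ Finset.Icc a b, schrodinger U u n - E * u n =
      c * u n - if n = p then t else 0) : ∑ n ∈ Finset.Icc a b, u n ^ 2 ≤ 4 / h ^ 2 := by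
  set X := ∑ n ∈ Finset.Icc a b, u n ^ 2
  have hX : 0 ≤ X := Finset.sum_nonneg fun _ _ => sq_nonneg _
  have hc' : c ^ 2 ≤ h ^ 2 / 4 := by
    rw [← sq_abs]
    exact (pow_le_pow_left₀ (abs_nonneg c) hc 2).trans_eq (by ring)
  have hsource (n : ℤ) : (if n = p then t else 0) ^ 2 ≤ if n = p then (1 : ℝ) else 0 := by
    split_ifs
    · rw [← sq_abs]
      exact pow_le_one₀ (abs_nonneg _) ht
    · rw [zero_pow two_ne_zero]
  have hbound : h ^ 2 * X ≤ 2 * (c ^ 2 * X + 1) := by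
    calc h ^ 2 * X ≤ ∑ n ∈ Finset.Icc a b, (schrodinger U u n - E * u n) ^ 2 := hN u hu
      _ ≤ ∑ n ∈ Finset.Icc a b, 2 * (c ^ 2 * u n ^ 2 + if n = p then 1 else 0) := by
        refine Finset.sum_le_sum fun n hn => ?_
        rw [heq n hn, sub_eq_add_neg, ← mul_pow]
        refine add_sq_le.trans ?_
        rw [neg_sq]
        gcongr
        exact hsource n
      _ ≤ 2 * (c ^ 2 * X + 1) := by
        rw [← Finset.mul_sum, Finset.sum_add_distrib, ← Finset.mul_sum, Finset.sum_ite_eq']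
        gcongr
        split_ifs <;> simp
  have hcX := mul_le_mul_of_nonneg_right hc' hX
  rw [le_div_iff₀ (by positivity)]
  linarith

lemma IsBarrier.hasLeftCorrector {U : ℤ → ℝ} {E E₀ η β h : ℝ} {φ : ℤ → ℝ} {p b : ℤ}
    (hB : IsBarrier U E₀ β p b) (hpb : p ≤ b) (hβ : 0 < β) (hh : 0 < h) (hη : η ≤ h / 2)
    (hE : |E - E₀| ≤ η) (hN : NonResonant U E h p b) (hφ : |φ (p - 1)| ≤ 1) :
    HasLeftCorrector U E φ η β h p b := by
  obtain ⟨u, hu, heq, hub⟩ := hB.exists_truncation hpb hβ E hφ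
  rw [abs_sub_comm] at hE
  refine ⟨u, E₀ - E, hE, hu, heq, hub,
    hN.sum_sq_le_of_source hh (hE.trans hη) hφ (p := p) hu fun n hn => ?_⟩
  rw [Finset.mem_Icc] at hn
  rw [heq n hn.1, if_neg (by omega : n ≠ b + 1), add_zero]

lemma schrodinger_comp_neg (U u : ℤ → ℝ) (n : ℤ) :
    schrodinger U (fun m => u (-m)) n = schrodinger (fun m => U (-m)) u (-n) := by
  simp only [schrodinger, neg_neg, neg_add, sub_eq_add_neg]
  ring

lemma HasLeftCorrector.hasRightCorrector {U : ℤ → ℝ} {E η β h : ℝ} {φ : ℤ → ℝ} {a q : ℤ}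
    (hL : HasLeftCorrector (fun n => U (-n)) E (fun n => φ (-n)) η β h (-q) (-a)) :
    HasRightCorrector U E φ η β h a q := by
  obtain ⟨u, c, hc, hu, heq, hub, hsum⟩ := hL
  refine ⟨fun n => u (-n), c, hc, fun n hn => hu _ ?_, fun n hn => ?_, hub, ?_⟩
  · rw [Finset.mem_Icc] at hn ⊢
    omega
  · have hleft : -n = -q ↔ n = q := by omega
    have hright : -n = -a + 1 ↔ n = a - 1 := by omega
    rw [schrodinger_comp_neg, heq (-n) (by omega)]
    simp only [hleft, hright, show -(-q - 1) = q + 1 by ring]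
  · refine le_of_eq_of_le ?_ hsum
    refine Finset.sum_equiv (Equiv.neg ℤ) (fun n => ?_) fun _ _ => rfl
    simp only [Equiv.neg_apply, Finset.mem_Icc]
    omega

lemma hasRightCorrector_of_eq_zero {U : ℤ → ℝ} {E η β h : ℝ} {φ : ℤ → ℝ} {q : ℤ} (hη : 0 ≤ η)
    (hβ : 0 ≤ β) (hφ : φ (q + 1) = 0) : HasRightCorrector U E φ η β h (q + 1) q := by
  refine ⟨0, 0, by rwa [abs_zero], fun _ _ => rfl, fun n _ => ?_, ?_, ?_⟩
  · simp [schrodinger, hφ]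
  · rw [Pi.zero_apply, abs_zero]
    positivity
  · rw [Finset.Icc_eq_empty (by omega), Finset.sum_empty]
    positivity

lemma sum_add_four_sq_le {ι : Type*} (s : Finset ι) {x y z w : ι → ℝ} {C : ℝ}
    (hx : ∑ n ∈ s, x n ^ 2 ≤ C) (hy : ∑ n ∈ s, y n ^ 2 ≤ C) (hz : ∑ n ∈ s, z n ^ 2 ≤ C)
    (hw : ∑ n ∈ s, w n ^ 2 ≤ C) : ∑ n ∈ s, (x n + y n + (z n + w n)) ^ 2 ≤ 16 * C := by
  calc ∑ n ∈ s, (x n + y n + (z n + w n)) ^ 2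
      ≤ ∑ n ∈ s, 4 * (x n ^ 2 + y n ^ 2 + (z n ^ 2 + w n ^ 2)) := by
        refine Finset.sum_le_sum fun n _ => ?_
        linarith [add_sq_le (a := x n + y n) (b := z n + w n), add_sq_le (a := x n) (b := y n),
          add_sq_le (a := z n) (b := w n)]
    _ ≤ 16 * C := by
        rw [← Finset.mul_sum]
        simp only [Finset.sum_add_distrib]
        linarith

lemma sum_ite_eq_sq_le (s : Finset ℤ) (m : ℤ) (t : ℝ) :
    ∑ n ∈ s, (if n = m then t else 0) ^ 2 ≤ t ^ 2 := by
  simp only [ite_pow, ne_eq, OfNat.ofNat_ne_zero, not_false_eq_true, zero_pow,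
    Finset.sum_ite_eq']
  split_ifs
  exacts [le_rfl, sq_nonneg t]

lemma sum_mul_sq_le_of_support {a b : ℤ} {x : ℤ → ℝ} {c β h : ℝ} (hβ : 0 < β) (hh : 0 < h)
    (hc : |c| ≤ h / (2 * β)) (hx : ∀ n ∉ Finset.Icc a b, x n = 0)
    (hsum : ∑ n ∈ Finset.Icc a b, x n ^ 2 ≤ 4 / h ^ 2) (s : Finset ℤ) :
    ∑ n ∈ s, (c * x n) ^ 2 ≤ 1 / β ^ 2 := by
  simp only [mul_pow, ← Finset.mul_sum]
  calc c ^ 2 * ∑ n ∈ s, x n ^ 2 ≤ (h / (2 * β)) ^ 2 * (4 / h ^ 2) := by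
        rw [← sq_abs c]
        gcongr
        exact (sum_sq_le_of_support hx s).trans hsum
    _ = 1 / β ^ 2 := by field_simp; norm_num

lemma exists_corrected_truncation {U : ℤ → ℝ} {E η β h : ℝ} {φ : ℤ → ℝ} {p b a q : ℤ}
    (hpb : p ≤ b) (hba : b < a) (haq : a ≤ q + 1) (hβ : 0 < β) (hh : 0 < h)
    (hη : η ≤ h / (2 * β)) (heig : ∀ n ∈ Finset.Icc p q, schrodinger U φ n = E * φ n)
    (hL : HasLeftCorrector U E φ η β h p b) (hR : HasRightCorrector U E φ η β h a q) :
    ∃ ψ : ℤ → ℝ, (∀ n ∉ Finset.Icc p q, ψ n = 0) ∧ (∀ n ∈ Finset.Ioo b a, ψ n = φ n) ∧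
      ∑ n ∈ Finset.Icc p q, (schrodinger U ψ n - E * ψ n) ^ 2 ≤ 16 * (1 / β ^ 2) := by
  obtain ⟨u, c, hc, hu, hueq, hub, husum⟩ := hL
  obtain ⟨v, d, hd, hv, hveq, hva, hvsum⟩ := hR
  let ψ : ℤ → ℝ := fun n => (Set.Icc p q).indicator φ n - u n - v n
  have hψeq (n : ℤ) (hn : n ∈ Finset.Icc p q) : schrodinger U ψ n - E * ψ n =
      -(c * u n + (if n = b + 1 then u b else 0) +
        (d * v n + if n = a - 1 then v a else 0)) := by
    have hmem : n ∈ Set.Icc p q := Finset.mem_Icc.1 hn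
    have hpn : p ≤ n := hmem.1
    have hnq : n ≤ q := hmem.2
    have hlin : schrodinger U ψ n = schrodinger U ((Set.Icc p q).indicator φ) n -
        schrodinger U u n - schrodinger U v n := by
      simp only [schrodinger, ψ, smul_eq_mul]
      ring
    rw [hlin, schrodinger_indicator_Icc U φ (by omega),
      Set.indicator_of_mem hmem, heig n hn, if_neg (by omega : n ≠ p - 1),
      if_neg (by omega : n ≠ q + 1)]
    simp only [ψ, Set.indicator_of_mem hmem]
    linear_combination -hueq n hpn - hveq n hnq
  have hsource {t : ℝ} (ht : |t| ≤ 1 / β) (m : ℤ) :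
      ∑ n ∈ Finset.Icc p q, (if n = m then t else 0) ^ 2 ≤ 1 / β ^ 2 := by
    refine (sum_ite_eq_sq_le _ m t).trans ?_
    rw [← sq_abs, ← one_div_pow]
    gcongr
  refine ⟨ψ, fun n hn => ?_, fun n hn => ?_, ?_⟩
  · rw [Finset.mem_Icc] at hn
    simp only [ψ, Set.indicator_of_notMem (show n ∉ Set.Icc p q from hn),
      hu n (by rw [Finset.mem_Icc]; omega), hv n (by rw [Finset.mem_Icc]; omega), sub_zero]
  · rw [Finset.mem_Ioo] at hn
    simp only [ψ, Set.indicator_of_mem (show n ∈ Set.Icc p q from ⟨by omega, by omega⟩),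
      hu n (by rw [Finset.mem_Icc]; omega), hv n (by rw [Finset.mem_Icc]; omega), sub_zero]
  · rw [Finset.sum_congr rfl fun n hn => by rw [hψeq n hn, neg_sq]]
    exact sum_add_four_sq_le _ (sum_mul_sq_le_of_support hβ hh (hc.trans hη) hu husum _)
      (hsource hub _) (sum_mul_sq_le_of_support hβ hh (hd.trans hη) hv hvsum _) (hsource hva _)

lemma sum_sq_Ioo_le_of_correctors {U : ℤ → ℝ} {E η β h : ℝ} {φ : ℤ → ℝ} {p b a q : ℤ}
    (hpb : p ≤ b) (hba : b < a) (haq : a ≤ q + 1) (hβ : 0 < β) (hh : 0 < h)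
    (hη : η ≤ h / (2 * β)) (heig : ∀ n ∈ Finset.Icc p q, schrodinger U φ n = E * φ n)
    (hL : HasLeftCorrector U E φ η β h p b) (hR : HasRightCorrector U E φ η β h a q)
    (hN : NonResonant U E h p q) : ∑ n ∈ Finset.Ioo b a, φ n ^ 2 ≤ 16 / (β ^ 2 * h ^ 2) := by
  obtain ⟨ψ, hψ, hψφ, hψsum⟩ := exists_corrected_truncation hpb hba haq hβ hh hη heig hL hR
  calc ∑ n ∈ Finset.Ioo b a, φ n ^ 2 = ∑ n ∈ Finset.Ioo b a, ψ n ^ 2 :=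
        Finset.sum_congr rfl fun n hn => by rw [hψφ n hn]
    _ ≤ ∑ n ∈ Finset.Icc p q, ψ n ^ 2 := sum_sq_le_of_support hψ _
    _ ≤ 16 * (1 / β ^ 2) / h ^ 2 := (le_div_iff₀' (by positivity)).2 ((hN ψ hψ).trans hψsum)
    _ = 16 / (β ^ 2 * h ^ 2) := by field_simp

/-! ### A Wegner estimate by rank one perturbations -/

lemma schrodinger_sum_smul {ι F : Type*} [AddCommGroup F] [Module ℝ F] (s : Finset ι) (V : ℤ → ℝ)
    (f : ι → ℤ → ℝ) (c : ι → F) (n : ℤ) :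
    schrodinger V (fun m => ∑ k ∈ s, f k m • c k) n = ∑ k ∈ s, schrodinger V (f k) n • c k := by
  simp only [schrodinger, Finset.smul_sum, ← Finset.sum_add_distrib, add_smul, smul_eq_mul,
    mul_smul]

/-- The sequence `x` is the `j`-th column of the resolvent of the restriction of the Schrödinger
operator to the box `[a, b]`. -/
structure IsResolventColumn (V : ℤ → ℝ) (a b : ℤ) (z : ℂ) (j : ℤ) (x : ℤ → ℂ) : Prop where
  supp : ∀ n ∉ Finset.Icc a b, x n = 0
  eq : ∀ n ∈ Finset.Icc a b, schrodinger V x n - z * x n = if n = j then 1 else 0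

namespace BoxEigenbasis

variable {V : ℤ → ℝ} {a b : ℤ} (B : BoxEigenbasis V a b)

lemma coeff_congr {F : Type*} [AddCommGroup F] [Module ℝ F] {x y : ℤ → F}
    (h : ∀ n ∈ Finset.Icc a b, x n = y n) : B.coeff x = B.coeff y :=
  funext fun _ => Finset.sum_congr rfl fun n hn => by rw [h n hn]

lemma coeff_ite_add {j : ℤ} (hj : j ∈ Finset.Icc a b) (y : ℤ → ℂ) (k : Finset.Icc a b) :
    B.coeff (fun n => (if n = j then 1 else 0) + y n) k = B.φ k j + B.coeff y k := by
  simp only [coeff, smul_add, Finset.sum_add_distrib, smul_ite, smul_zero, Finset.sum_ite_eq',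
    if_pos hj, Complex.real_smul, mul_one]

lemma sub_mul_coeff {x y : ℤ → ℂ} {z : ℂ} {j : ℤ} (hj : j ∈ Finset.Icc a b)
    (hx : ∀ n ∉ Finset.Icc a b, x n = 0)
    (hy : ∀ n ∈ Finset.Icc a b, schrodinger V x n - z * x n = (if n = j then 1 else 0) + y n)
    (k : Finset.Icc a b) : ((B.E k : ℂ) - z) * B.coeff x k = B.φ k j + B.coeff y k := by
  have h := B.coeff_schrodinger_sub_smul hx z k
  simp only [smul_eq_mul, Complex.real_smul, ← sub_mul] at h
  rw [← h, B.coeff_congr hy, B.coeff_ite_add hj]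

lemma E_sub_ne_zero {z : ℂ} (hz : 0 < z.im) (k : Finset.Icc a b) : (B.E k : ℂ) - z ≠ 0 :=
  fun h => hz.ne (by simpa using congrArg Complex.im (sub_eq_zero.1 h))

end BoxEigenbasis

lemma exists_isResolventColumn (V : ℤ → ℝ) {a b : ℤ} {z : ℂ} (hz : 0 < z.im) {j : ℤ}
    (hj : j ∈ Finset.Icc a b) : ∃ x, IsResolventColumn V a b z j x := by
  obtain ⟨B⟩ := exists_boxEigenbasis V a b
  refine ⟨fun n => ∑ k, B.φ k n • (B.φ k j / (B.E k - z) : ℂ), fun n hn => ?_, fun n hn => ?_⟩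
  · exact Finset.sum_eq_zero fun k _ => by rw [B.supp k n hn, zero_smul]
  · rw [schrodinger_sum_smul, Finset.mul_sum, ← Finset.sum_sub_distrib]
    calc ∑ k, (schrodinger V (B.φ k) n • (B.φ k j / (B.E k - z) : ℂ) -
          z * B.φ k n • (B.φ k j / (B.E k - z) : ℂ))
        = ∑ k, ((B.φ k n * B.φ k j : ℝ) : ℂ) := by
          refine Finset.sum_congr rfl fun k _ => ?_
          have hne := B.E_sub_ne_zero hz k
          rw [B.eig k n hn]
          simp only [Complex.real_smul, Complex.ofReal_mul]
          field_simp
      _ = if n = j then 1 else 0 := by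
          rw [← Complex.ofReal_sum, B.complete n hn j hj]
          split_ifs <;> simp

namespace IsResolventColumn

variable {V : ℤ → ℝ} {a b j : ℤ} {z : ℂ} {x : ℤ → ℂ}

lemma sub_mul_coeff (hx : IsResolventColumn V a b z j x) (hj : j ∈ Finset.Icc a b)
    (B : BoxEigenbasis V a b) (k : Finset.Icc a b) :
    ((B.E k : ℂ) - z) * B.coeff x k = B.φ k j := by
  rw [B.sub_mul_coeff (y := 0) hj hx.supp (by simpa using hx.eq)]
  simp [BoxEigenbasis.coeff]

lemma unique {x' : ℤ → ℂ} (hx : IsResolventColumn V a b z j x)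
    (hx' : IsResolventColumn V a b z j x') (hz : 0 < z.im) (hj : j ∈ Finset.Icc a b) : x = x' := by
  obtain ⟨B⟩ := exists_boxEigenbasis V a b
  ext n
  by_cases hn : n ∈ Finset.Icc a b
  · rw [← B.sum_smul_coeff x hn, ← B.sum_smul_coeff x' hn]
    refine Finset.sum_congr rfl fun k _ => congrArg _ ?_
    exact mul_left_cancel₀ (B.E_sub_ne_zero hz k)
      ((hx.sub_mul_coeff hj B k).trans (hx'.sub_mul_coeff hj B k).symm)
  · rw [hx.supp n hn, hx'.supp n hn]

lemma im_eq (hx : IsResolventColumn V a b z j x) (hj : j ∈ Finset.Icc a b) :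
    (x j).im = z.im * ∑ n ∈ Finset.Icc a b, ‖x n‖ ^ 2 := by
  obtain ⟨B⟩ := exists_boxEigenbasis V a b
  rw [← B.sum_norm_coeff_sq, ← B.sum_smul_coeff x hj, Complex.im_sum, Finset.mul_sum]
  refine Finset.sum_congr rfl fun k _ => ?_
  have hcoeff := hx.sub_mul_coeff hj B k
  have him := congrArg Complex.im hcoeff
  set c := B.coeff x k
  rw [Complex.real_smul, ← hcoeff, mul_assoc, Complex.mul_im, Complex.mul_re,
    ← Complex.normSq_eq_norm_sq, Complex.normSq_apply]
  simp only [Complex.mul_im, Complex.sub_re, Complex.sub_im, Complex.ofReal_re,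
    Complex.ofReal_im] at him ⊢
  linear_combination 2 * c.re * him

lemma im_pos (hx : IsResolventColumn V a b z j x) (hz : 0 < z.im) (hj : j ∈ Finset.Icc a b) :
    0 < (x j).im := by
  rw [hx.im_eq hj]
  refine mul_pos hz ((Finset.sum_nonneg fun _ _ => sq_nonneg _).lt_of_ne' fun h => ?_)
  rw [Finset.sum_eq_zero_iff_of_nonneg fun _ _ => sq_nonneg _] at h
  have hzero (n : ℤ) : x n = 0 := by
    by_cases hn : n ∈ Finset.Icc a b
    · simpa using h n hn
    · exact hx.supp n hn
  simpa [schrodinger, hzero] using hx.eq j hj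

lemma im_mul_norm_sq_le (hx : IsResolventColumn V a b z j x) (hz : 0 ≤ z.im)
    (hj : j ∈ Finset.Icc a b) : z.im * ‖x j‖ ^ 2 ≤ (x j).im := by
  rw [hx.im_eq hj]
  exact mul_le_mul_of_nonneg_left
    (Finset.single_le_sum (f := fun n => ‖x n‖ ^ 2) (fun _ _ => sq_nonneg _) hj) hz

lemma rank_one (hx : IsResolventColumn V a b z j x) (him : 0 < (x j).im) (t : ℝ) :
    IsResolventColumn (fun n => V n + if n = j then t else 0) a b z j
      (fun n => x n / (1 + t * x j)) := by
  have hne : 1 + (t : ℂ) * x j ≠ 0 := by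
    intro h
    have hre := congrArg Complex.re h
    have ht : t = 0 := by simpa [him.ne'] using congrArg Complex.im h
    simp [ht] at hre
  refine ⟨fun n hn => by rw [hx.supp n hn, zero_div], fun n hn => ?_⟩
  have h := hx.eq n hn
  simp only [schrodinger, Complex.real_smul] at h ⊢
  split_ifs at h ⊢ with hnj
  · subst hnj
    push_cast
    field_simp
    linear_combination h
  · rw [add_zero]
    field_simp
    linear_combination h

end IsResolventColumn

lemma im_div_one_add_mul {G : ℂ} (hG : G ≠ 0) (t : ℝ) :
    (G / (1 + t * G)).im = -(G⁻¹).im / (((G⁻¹).re + t) ^ 2 + (-(G⁻¹).im) ^ 2) := by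
  have h : G / (1 + t * G) = (G⁻¹ + t)⁻¹ := by
    rw [← inv_div]
    congr 1
    field_simp
  rw [h, Complex.inv_im, Complex.normSq_apply]
  simp only [Complex.add_im, Complex.ofReal_im, add_zero, Complex.add_re, Complex.ofReal_re]
  ring

-- The Poisson kernel is the derivative of `arctan (· / b)`, and it varies by at most a factor `3`
-- over an interval of length `τ ≤ b`.
lemma poisson_le_arctan_sub {b τ : ℝ} (hτ : 0 < τ) (hb : τ ≤ b) (c : ℝ) :
    b / (c ^ 2 + b ^ 2) ≤ 3 / τ * (Real.arctan ((c + τ) / b) - Real.arctan (c / b)) := by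
  have hb0 : 0 < b := hτ.trans_le hb
  have hderiv (y : ℝ) : HasDerivAt (fun y => Real.arctan (y / b)) (b / (y ^ 2 + b ^ 2)) y := by
    convert ((hasDerivAt_id' y).div_const b).arctan using 1
    field_simp
    ring
  obtain ⟨y, ⟨hcy, hyc⟩, hslope⟩ := exists_hasDerivAt_eq_slope _ _
    (show c < c + τ by linarith) (fun y _ => (hderiv y).continuousAt.continuousWithinAt)
    fun y _ => hderiv y
  rw [add_sub_cancel_left, eq_div_iff hτ.ne'] at hslope
  have hratio : y ^ 2 + b ^ 2 ≤ 3 * (c ^ 2 + b ^ 2) := by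
    have := pow_le_pow_left₀ (by linarith : 0 ≤ y - c) (by linarith : y - c ≤ b) 2
    nlinarith [add_sq_le (a := c) (b := y - c), sq_nonneg c]
  calc b / (c ^ 2 + b ^ 2) ≤ 3 * (b / (y ^ 2 + b ^ 2)) := by
        rw [← mul_div_assoc, div_le_div_iff₀ (by positivity) (by positivity)]
        linarith [mul_le_mul_of_nonneg_left hratio hb0.le]
    _ = 3 / τ * (Real.arctan ((c + τ) / b) - Real.arctan (c / b)) := by
        rw [← hslope]
        field_simp

lemma sum_poisson_le (a : ℝ) {b τ : ℝ} (hτ : 0 < τ) (hb : τ ≤ b) (M : ℕ) :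
    ∑ s ∈ Finset.range M, b / ((a + s * τ) ^ 2 + b ^ 2) ≤ 10 / τ := by
  let A : ℕ → ℝ := fun s => Real.arctan ((a + s * τ) / b)
  have hterm (s : ℕ) : b / ((a + s * τ) ^ 2 + b ^ 2) ≤ 3 / τ * (A (s + 1) - A s) := by
    have h := poisson_le_arctan_sub hτ hb (a + s * τ)
    rwa [add_assoc, ← add_one_mul, ← Nat.cast_add_one] at h
  have htotal : A M - A 0 ≤ 3.15 := by
    have hM : A M < Real.pi / 2 := Real.arctan_lt_pi_div_two _
    have hzero : -(Real.pi / 2) < A 0 := Real.neg_pi_div_two_lt_arctan _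
    linarith [Real.pi_lt_d2]
  calc ∑ s ∈ Finset.range M, b / ((a + s * τ) ^ 2 + b ^ 2)
      ≤ ∑ s ∈ Finset.range M, 3 / τ * (A (s + 1) - A s) := Finset.sum_le_sum fun s _ => hterm s
    _ = 3 / τ * (A M - A 0) := by rw [← Finset.mul_sum, Finset.sum_range_sub]
    _ ≤ 3 / τ * 3.15 := by gcongr
    _ ≤ 10 / τ := by rw [div_mul_eq_mul_div]; gcongr; norm_num

lemma IsResolventColumn.sum_im_le {V : ℤ → ℝ} {a b j : ℤ} {z : ℂ} {τ : ℝ} (hτ : 0 < τ)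
    (hz : τ ≤ z.im) (hj : j ∈ Finset.Icc a b) {X : ℕ → ℤ → ℂ} (M : ℕ)
    (hX : ∀ s : ℕ, IsResolventColumn (fun n => V n + if n = j then s * τ else 0) a b z j (X s)) :
    ∑ s ∈ Finset.range M, (X s j).im ≤ 10 / τ := by
  have hz0 : 0 < z.im := hτ.trans_le hz
  obtain ⟨x, hx⟩ := exists_isResolventColumn V hz0 hj
  have him := hx.im_pos hz0 hj
  have hne : x j ≠ 0 := fun h => him.ne' (by rw [h, Complex.zero_im])
  have hX' (s : ℕ) : X s j = x j / (1 + ((s * τ : ℝ) : ℂ) * x j) :=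
    congrFun ((hX s).unique (hx.rank_one him (s * τ)) hz0 hj) j
  have hinv : τ ≤ -((x j)⁻¹).im := by
    rw [Complex.inv_im, neg_div, neg_neg, le_div_iff₀ (Complex.normSq_pos.2 hne),
      Complex.normSq_eq_norm_sq]
    exact (mul_le_mul_of_nonneg_right hz (sq_nonneg _)).trans (hx.im_mul_norm_sq_le hz0.le hj)
  refine (Finset.sum_le_sum fun s _ => ?_).trans (sum_poisson_le ((x j)⁻¹).re hτ hinv M)
  rw [hX', im_div_one_add_mul hne]

lemma exists_add_le_of_sum_le {M : ℕ} (hM : 0 < M) {F G : ℕ → ℕ → ℝ} {K : ℝ}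
    (hF : ∀ t, ∑ s ∈ Finset.range M, F s t ≤ K) (hG : ∀ s, ∑ t ∈ Finset.range M, G s t ≤ K) :
    ∃ s < M, ∃ t < M, F s t + G s t ≤ 2 * K / M := by
  have hF' : ∑ s ∈ Finset.range M, ∑ t ∈ Finset.range M, F s t ≤ M * K := by
    rw [Finset.sum_comm]
    exact (Finset.sum_le_card_nsmul _ _ K fun t _ => hF t).trans_eq (by simp)
  have hG' : ∑ s ∈ Finset.range M, ∑ t ∈ Finset.range M, G s t ≤ M * K :=
    (Finset.sum_le_card_nsmul _ _ K fun s _ => hG s).trans_eq (by simp)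
  have hne : (Finset.range M ×ˢ Finset.range M).Nonempty := ⟨(0, 0), by simp [hM]⟩
  obtain ⟨⟨s, t⟩, hst, hle⟩ := Finset.exists_le_of_sum_le (f := fun p => F p.1 p.2 + G p.1 p.2)
    (g := fun _ => 2 * K / M) hne <| by
      rw [Finset.sum_product]
      simp only [Finset.sum_add_distrib, Finset.sum_const, Finset.card_product,
        Finset.card_range, nsmul_eq_mul, Nat.cast_mul]
      refine (add_le_add hF' hG').trans_eq ?_
      field_simp
      ring
  rw [Finset.mem_product, Finset.mem_range, Finset.mem_range] at hst
  exact ⟨s, hst.1, t, hst.2, hle⟩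

/-- The potential `V` raised by `s` at the site `0` and by `t` at the site `1`. -/
def raise (V : ℤ → ℝ) (s t : ℝ) (n : ℤ) : ℝ :=
  V n + (if n = 0 then s else 0) + if n = 1 then t else 0

section Raise

variable (V : ℤ → ℝ) {z : ℂ} {m : ℤ} {τ : ℝ} {X : ℕ → ℤ → ℂ}

lemma sum_im_zero_le (hτ : 0 < τ) (hz : τ ≤ z.im) (hm : 0 ≤ m) (M : ℕ) (t : ℝ)
    (hX : ∀ s : ℕ, IsResolventColumn (raise V (s * τ) t) (-m) m z 0 (X s)) :
    ∑ s ∈ Finset.range M, (X s 0).im ≤ 10 / τ := by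
  refine IsResolventColumn.sum_im_le (V := raise V 0 t) (a := -m) (b := m) hτ hz
    (Finset.mem_Icc.2 (by omega)) M fun s => ?_
  convert hX s using 2 with n
  simp only [raise, ite_self]
  ring

lemma sum_im_one_le (hτ : 0 < τ) (hz : τ ≤ z.im) (hm : 1 ≤ m) (M : ℕ) (s : ℝ)
    (hX : ∀ t : ℕ, IsResolventColumn (raise V s (t * τ)) (-m) m z 1 (X t)) :
    ∑ t ∈ Finset.range M, (X t 1).im ≤ 10 / τ := by
  refine IsResolventColumn.sum_im_le (V := raise V s 0) (a := -m) (b := m) hτ hz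
    (Finset.mem_Icc.2 (by omega)) M fun t => ?_
  convert hX t using 2 with n
  simp only [raise, ite_self, add_zero]

lemma exists_wegner_grid {h : ℝ} (hτ : 0 < τ) (hτh : τ ≤ h) {M : ℕ} (hM : 0 < M)
    (T : Finset (ℝ × ℤ)) (hT : ∀ c ∈ T, 1 ≤ c.2) :
    ∃ s < M, ∃ t < M, ∀ j : ℤ, (j = 0 ∨ j = 1) → ∃ X : ℝ × ℤ → ℤ → ℂ,
      (∀ c ∈ T, IsResolventColumn (raise V (s * τ) (t * τ)) (-c.2) c.2 (c.1 + h * Complex.I) j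
        (X c)) ∧ ∑ c ∈ T, (X c j).im ≤ 2 * (T.card * (10 / τ)) / M := by
  have him (c : ℝ × ℤ) : τ ≤ (c.1 + h * Complex.I : ℂ).im := by simpa using hτh
  have hmem (j : ℤ) (hj : j = 0 ∨ j = 1) (c) (hc : c ∈ T) : j ∈ Finset.Icc (-c.2) c.2 := by
    have := hT c hc
    rw [Finset.mem_Icc]
    omega
  have hex : ∀ j : ℤ, (j = 0 ∨ j = 1) → ∀ s t : ℕ, ∀ c ∈ T, ∃ x,
      IsResolventColumn (raise V (s * τ) (t * τ)) (-c.2) c.2 (c.1 + h * Complex.I) j x :=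
    fun j hj s t c hc => exists_isResolventColumn _ (hτ.trans_le (him c)) (hmem j hj c hc)
  choose! X hX using hex
  have hpos (j : ℤ) (hj : j = 0 ∨ j = 1) (s t : ℕ) : 0 ≤ ∑ c ∈ T, (X j s t c j).im :=
    Finset.sum_nonneg fun c hc =>
      ((hX j hj s t c hc).im_pos (hτ.trans_le (him c)) (hmem j hj c hc)).le
  have hzero (t : ℕ) : ∑ s ∈ Finset.range M, ∑ c ∈ T, (X 0 s t c 0).im ≤ T.card * (10 / τ) := by
    rw [Finset.sum_comm, ← nsmul_eq_mul]
    exact Finset.sum_le_card_nsmul _ _ _ fun c hc => sum_im_zero_le V hτ (him c)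
      (zero_le_one.trans (hT c hc)) M (t * τ) fun s => hX 0 (Or.inl rfl) s t c hc
  have hone (s : ℕ) : ∑ t ∈ Finset.range M, ∑ c ∈ T, (X 1 s t c 1).im ≤ T.card * (10 / τ) := by
    rw [Finset.sum_comm, ← nsmul_eq_mul]
    exact Finset.sum_le_card_nsmul _ _ _ fun c hc => sum_im_one_le V hτ (him c)
      (hT c hc) M (s * τ) fun t => hX 1 (Or.inr rfl) s t c hc
  obtain ⟨s, hs, t, ht, hle⟩ := exists_add_le_of_sum_le hM hzero hone
  refine ⟨s, hs, t, ht, fun j hj => ⟨X j s t, hX j hj s t, ?_⟩⟩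
  have hnonneg₀ := hpos 0 (Or.inl rfl) s t
  have hnonneg₁ := hpos 1 (Or.inr rfl) s t
  rcases hj with rfl | rfl <;> linarith

lemma exists_wegner {l h : ℝ} (hl : 0 < l) (hh : 0 < h) (T : Finset (ℝ × ℤ))
    (hT : ∀ c ∈ T, 1 ≤ c.2) : ∃ s₀ ∈ Set.Icc (0 : ℝ) 1, ∃ s₁ ∈ Set.Icc (0 : ℝ) 1,
      ∀ j : ℤ, (j = 0 ∨ j = 1) → ∃ X : ℝ × ℤ → ℤ → ℂ, (∀ c ∈ T,
        IsResolventColumn (raise V (l * s₀) (l * s₁)) (-c.2) c.2 (c.1 + h * Complex.I) j (X c)) ∧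
        ∑ c ∈ T, (X c j).im ≤ 20 * T.card / l := by
  obtain ⟨M, hM⟩ := exists_nat_gt (l / h)
  have hM0 : (0 : ℝ) < M := (div_pos hl hh).trans hM
  obtain ⟨s, hs, t, ht, hX⟩ := exists_wegner_grid V (div_pos hl hM0)
    ((div_lt_comm₀ hh hM0).1 hM).le (Nat.cast_pos.1 hM0) T hT
  have hbound : 2 * (T.card * (10 / (l / M))) / M = 20 * T.card / l := by
    field_simp
    ring
  have hunit (r : ℕ) (hr : r < M) : (r / M : ℝ) ∈ Set.Icc (0 : ℝ) 1 :=
    ⟨by positivity, (div_le_one hM0).2 (by exact_mod_cast hr.le)⟩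
  refine ⟨s / M, hunit s hs, t / M, hunit t ht, ?_⟩
  simpa only [hbound, mul_div_left_comm _ l] using hX

end Raise

lemma BoxEigenbasis.sum_sq_filter_le {V : ℤ → ℝ} {a b : ℤ} (B : BoxEigenbasis V a b)
    {x y : ℤ → ℂ} {e h : ℝ} {j : ℤ} (hj : j ∈ Finset.Icc a b)
    (hx : ∀ n ∉ Finset.Icc a b, x n = 0)
    (hy : ∀ n ∈ Finset.Icc a b, schrodinger V x n - (e + h * Complex.I) * x n =
      (if n = j then 1 else 0) + y n) :
    ∑ k with |B.E k - e| ≤ h, B.φ k j ^ 2 ≤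
      4 * h ^ 2 * ∑ n ∈ Finset.Icc a b, ‖x n‖ ^ 2 + 2 * ∑ n ∈ Finset.Icc a b, ‖y n‖ ^ 2 := by
  rw [← B.sum_norm_coeff_sq x, ← B.sum_norm_coeff_sq y, Finset.mul_sum, Finset.mul_sum,
    ← Finset.sum_add_distrib]
  refine (Finset.sum_le_sum fun k hk => ?_).trans
    (Finset.sum_le_sum_of_subset_of_nonneg (Finset.filter_subset _ _) fun k _ _ => by positivity)
  have hk' : |B.E k - e| ≤ h := (Finset.mem_filter.1 hk).2
  have hφ : (B.φ k j : ℂ) = (B.E k - (e + h * Complex.I)) * B.coeff x k - B.coeff y k :=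
    eq_sub_of_add_eq (B.sub_mul_coeff hj hx hy k).symm
  have hnorm : ‖(B.E k - (e + h * Complex.I) : ℂ)‖ ^ 2 ≤ 2 * h ^ 2 := by
    have hre : (B.E k - (e + h * Complex.I) : ℂ).re = B.E k - e := by simp
    have him : (B.E k - (e + h * Complex.I) : ℂ).im = -h := by simp
    rw [← Complex.normSq_eq_norm_sq, Complex.normSq_apply, hre, him]
    linarith [sq_le_sq' (abs_le.1 hk').1 (abs_le.1 hk').2]
  calc B.φ k j ^ 2 = ‖(B.φ k j : ℂ)‖ ^ 2 := by rw [Complex.norm_real, Real.norm_eq_abs, sq_abs]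
    _ ≤ (‖(B.E k - (e + h * Complex.I) : ℂ)‖ * ‖B.coeff x k‖ + ‖B.coeff y k‖) ^ 2 := by
        rw [hφ, ← norm_mul]
        gcongr
        exact norm_sub_le _ _
    _ ≤ 2 * (‖(B.E k - (e + h * Complex.I) : ℂ)‖ ^ 2 * ‖B.coeff x k‖ ^ 2 +
          ‖B.coeff y k‖ ^ 2) := by
        rw [← mul_pow]
        exact add_sq_le
    _ ≤ 2 * (2 * h ^ 2 * ‖B.coeff x k‖ ^ 2 + ‖B.coeff y k‖ ^ 2) := by gcongr
    _ = 4 * h ^ 2 * ‖B.coeff x k‖ ^ 2 + 2 * ‖B.coeff y k‖ ^ 2 := by ring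

lemma sum_comp_le_sum {ι κ : Type*} {f : κ → ℝ} {s : Finset ι} {t : Finset κ} {g : ι → κ}
    (hf : ∀ n, 0 ≤ f n) (hg : Function.Injective g) (hst : ∀ n ∈ s, g n ∈ t) :
    ∑ n ∈ s, f (g n) ≤ ∑ n ∈ t, f n := by
  refine (Finset.sum_map s ⟨g, hg⟩ f).symm.trans_le
    (Finset.sum_le_sum_of_subset_of_nonneg (fun n hn => ?_) fun n _ _ => hf n)
  obtain ⟨m, hm, rfl⟩ := Finset.mem_map.1 hn
  exact hst m hm

lemma exists_boundary_le {f : ℤ → ℝ} (hf : ∀ n, 0 ≤ f n) {R : ℤ} (hR : 3 ≤ R) {κ : ℝ}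
    (hκ : 4 ≤ κ * (R - 2)) : ∃ r : ℤ, 2 ≤ r ∧ r + 1 ≤ R ∧
      f (-r - 1) + f (r + 1) + f (-r) + f r ≤ κ * ∑ n ∈ Finset.Icc (-R) R, f n := by
  set Q := ∑ n ∈ Finset.Icc (-R) R, f n
  have hQ : 0 ≤ Q := Finset.sum_nonneg fun n _ => hf n
  let s := Finset.Icc (2 : ℤ) (R - 1)
  have hs : s.Nonempty := ⟨2, by rw [Finset.mem_Icc]; omega⟩
  have hcard : (s.card : ℝ) = R - 2 := by
    have : (s.card : ℤ) = R - 2 := by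
      rw [Int.card_Icc]
      omega
    exact_mod_cast this
  have hcomp (g : ℤ → ℤ) (hg : Function.Injective g)
      (hgR : ∀ r, 2 ≤ r → r ≤ R - 1 → -R ≤ g r ∧ g r ≤ R) : ∑ r ∈ s, f (g r) ≤ Q :=
    sum_comp_le_sum hf hg fun r hr => Finset.mem_Icc.2
      (hgR r (Finset.mem_Icc.1 hr).1 (Finset.mem_Icc.1 hr).2)
  have hle : ∑ r ∈ s, (f (-r - 1) + f (r + 1) + f (-r) + f r) ≤ ∑ _ ∈ s, κ * Q := by
    simp only [Finset.sum_add_distrib, Finset.sum_const, nsmul_eq_mul, hcard]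
    linarith [hcomp (fun r => -r - 1) (fun _ _ h => by simpa using h) (by omega),
      hcomp (· + 1) (add_left_injective 1) (by omega),
      hcomp Neg.neg neg_injective (by omega), hcomp (fun r => r) (fun _ _ h => h) (by omega),
      mul_le_mul_of_nonneg_right hκ hQ]
  obtain ⟨r, hr, h⟩ := Finset.exists_le_of_sum_le hs hle
  rw [Finset.mem_Icc] at hr
  exact ⟨r, hr.1, by omega, h⟩

lemma sum_norm_sq_add_boundary_le {F : Type*} [NormedAddCommGroup F] {d : ℤ → F} {p q : ℤ}
    (hpq : p < q) (hd : ∀ n, n = p - 1 ∨ n = p ∨ n = q ∨ n = q + 1 → d n = 0) (t u v w : F)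
    (s : Finset ℤ) :
    ∑ n ∈ s, ‖d n - (if n = p then t else 0) - (if n = q then u else 0) +
      (if n = p - 1 then v else 0) + (if n = q + 1 then w else 0)‖ ^ 2 ≤
      ∑ n ∈ s, ‖d n‖ ^ 2 + (‖t‖ ^ 2 + ‖u‖ ^ 2 + ‖v‖ ^ 2 + ‖w‖ ^ 2) := by
  have hpoint (n : ℤ) : ‖d n - (if n = p then t else 0) - (if n = q then u else 0) +
      (if n = p - 1 then v else 0) + (if n = q + 1 then w else 0)‖ ^ 2 = ‖d n‖ ^ 2 +
      ((if n = p then ‖t‖ ^ 2 else 0) + (if n = q then ‖u‖ ^ 2 else 0) +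
        (if n = p - 1 then ‖v‖ ^ 2 else 0) + (if n = q + 1 then ‖w‖ ^ 2 else 0)) := by
    have := hd n
    split_ifs <;> first | omega | simp_all
  have hsite (m : ℤ) (c : ℝ) (hc : 0 ≤ c) : ∑ n ∈ s, (if n = m then c else 0) ≤ c := by
    rw [Finset.sum_ite_eq']
    split_ifs
    exacts [le_rfl, hc]
  simp only [hpoint, Finset.sum_add_distrib]
  gcongr <;> exact hsite _ _ (sq_nonneg _)

lemma sum_norm_smul_sq_le {F : Type*} [NormedAddCommGroup F] [NormedSpace ℝ F] {a b : ℤ}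
    {W : ℤ → ℝ} {x : ℤ → F} {h : ℝ} (hx : ∀ n ∉ Finset.Icc a b, x n = 0)
    (hW : ∀ n ∈ Finset.Icc a b, |W n| ≤ h) (s : Finset ℤ) :
    ∑ n ∈ s, ‖W n • x n‖ ^ 2 ≤ h ^ 2 * ∑ n ∈ Finset.Icc a b, ‖x n‖ ^ 2 := by
  refine (sum_sq_le_of_support (fun n hn => by rw [hx n hn, smul_zero, norm_zero]) s).trans ?_
  rw [Finset.mul_sum]
  refine Finset.sum_le_sum fun n hn => ?_
  rw [norm_smul, mul_pow, Real.norm_eq_abs]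
  gcongr
  exact hW n hn

section Transfer

variable {V V' : ℤ → ℝ} {R j : ℤ} {z : ℂ} {x : ℤ → ℂ}

lemma IsResolventColumn.truncate_eq (hx : IsResolventColumn V' (-R) R z j x) {r : ℤ} (hr : 0 ≤ r)
    (hrR : r ≤ R) (hj : j ∈ Set.Icc (-r) r) (n : ℤ) :
    schrodinger V ((Set.Icc (-r) r).indicator x) n - z * (Set.Icc (-r) r).indicator x n =
      (if n = j then 1 else 0) + ((V n - V' n) • (Set.Icc (-r) r).indicator x n -
        (if n = -r then x (-r - 1) else 0) - (if n = r then x (r + 1) else 0) +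
        (if n = -r - 1 then x (-r) else 0) + if n = r + 1 then x r else 0) := by
  have hpotential : schrodinger V ((Set.Icc (-r) r).indicator x) n =
      schrodinger V' ((Set.Icc (-r) r).indicator x) n +
        (V n - V' n) • (Set.Icc (-r) r).indicator x n := by
    simp only [schrodinger, sub_smul]
    ring
  have hcolumn : (Set.Icc (-r) r).indicator (schrodinger V' x) n =
      z * (Set.Icc (-r) r).indicator x n + if n = j then 1 else 0 := by
    by_cases hn : n ∈ Set.Icc (-r) r
    · rw [Set.indicator_of_mem hn, Set.indicator_of_mem hn]
      rw [Set.mem_Icc] at hn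
      rw [← hx.eq n (Finset.mem_Icc.2 (by omega)), add_sub_cancel]
    · rw [Set.indicator_of_notMem hn, Set.indicator_of_notMem hn,
        if_neg (by rintro rfl; exact hn hj), mul_zero, add_zero]
  rw [hpotential, schrodinger_indicator_Icc V' x (by omega), hcolumn]
  ring

variable {N : ℤ} {e h : ℝ}

lemma BoxEigenbasis.sum_sq_filter_le_of_isResolventColumn (B : BoxEigenbasis V (-R) R)
    (hx : IsResolventColumn V' (-R) R (e + h * Complex.I) j x) (hj : j ∈ Finset.Icc (-R) R)
    (hV : ∀ n ∈ Finset.Icc (-R) R, |V n - V' n| ≤ h) :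
    ∑ k with |B.E k - e| ≤ h, B.φ k j ^ 2 ≤ 8 * h * (x j).im := by
  refine (B.sum_sq_filter_le (y := fun n => (V n - V' n) • x n) hj hx.supp fun n hn => ?_).trans ?_
  · rw [← hx.eq n hn]
    simp only [schrodinger, sub_smul]
    ring
  · have him := hx.im_eq hj
    rw [show ((e : ℂ) + h * Complex.I).im = h by simp] at him
    rw [him]
    have hsum := sum_norm_smul_sq_le hx.supp hV (Finset.Icc (-R) R)
    have hnonneg : 0 ≤ h ^ 2 * ∑ n ∈ Finset.Icc (-R) R, ‖x n‖ ^ 2 := by positivity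
    linarith

lemma BoxEigenbasis.sum_sq_filter_le_of_truncate (B : BoxEigenbasis V (-N) N)
    (hx : IsResolventColumn V' (-R) R (e + h * Complex.I) j x) (hj : j = 0 ∨ j = 1)
    (hV : ∀ n ∈ Finset.Icc (-R) R, |V n - V' n| ≤ h)
    (hVV' : ∀ n ∈ Finset.Icc (-R) R, n ≠ 0 → n ≠ 1 → V n = V' n)
    (hRN : R < N) (hR : 4 ≤ h ^ 2 * (R - 2)) :
    ∑ k with |B.E k - e| ≤ h, B.φ k j ^ 2 ≤ 8 * h * (x j).im := by
  have hR3 : 3 ≤ R := by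
    have : (2 : ℝ) < R := sub_pos.1 (pos_of_mul_pos_right (by linarith) (sq_nonneg h))
    exact_mod_cast this
  obtain ⟨r, hr2, hrR, hr⟩ := exists_boundary_le (f := fun n => ‖x n‖ ^ 2)
    (fun n => sq_nonneg _) hR3 hR
  let x' := (Set.Icc (-r) r).indicator x
  have hsupp {m : ℤ} (hrm : r ≤ m) (n : ℤ) (hn : n ∉ Finset.Icc (-m) m) : x' n = 0 :=
    Set.indicator_of_notMem (by rw [Finset.mem_Icc] at hn; rw [Set.mem_Icc]; omega) _
  set Q := ∑ n ∈ Finset.Icc (-R) R, ‖x n‖ ^ 2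
  have hQ' : ∑ n ∈ Finset.Icc (-R) R, ‖x' n‖ ^ 2 ≤ Q :=
    Finset.sum_le_sum fun n _ => by gcongr; exact norm_indicator_le_norm_self x n
  have hQN : ∑ n ∈ Finset.Icc (-N) N, ‖x' n‖ ^ 2 ≤ Q :=
    (sum_sq_le_of_support (fun n hn => by rw [hsupp (by omega) n hn, norm_zero]) _).trans hQ'
  have hd (n : ℤ) (hn : n = -r - 1 ∨ n = -r ∨ n = r ∨ n = r + 1) : (V n - V' n) • x' n = 0 := by
    by_cases hnr : n ∈ Finset.Icc (-r) r
    · have hnR : n ∈ Finset.Icc (-R) R := by rw [Finset.mem_Icc] at hnr ⊢; omega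
      rw [hVV' n hnR (by omega) (by omega), sub_self, zero_smul]
    · rw [hsupp le_rfl n hnr, smul_zero]
  have him := hx.im_eq (by rw [Finset.mem_Icc]; omega)
  rw [show ((e : ℂ) + h * Complex.I).im = h by simp] at him
  refine (B.sum_sq_filter_le (x := x') (by rw [Finset.mem_Icc]; omega) (hsupp (by omega))
    fun n _ => hx.truncate_eq (by omega) (by omega) (by rw [Set.mem_Icc]; omega) n).trans ?_
  have hboundary := sum_norm_sq_add_boundary_le (by omega) hd (x (-r - 1)) (x (r + 1)) (x (-r))
    (x r) (Finset.Icc (-N) N)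
  have hpotential := sum_norm_smul_sq_le (hsupp (by omega)) hV (Finset.Icc (-N) N)
  rw [him]
  linarith [mul_le_mul_of_nonneg_left hQ' (sq_nonneg h),
    mul_le_mul_of_nonneg_left hQN (sq_nonneg h)]

end Transfer

/-! ### Pure point spectrum from localized box eigenvectors -/

namespace BoxEigenbasis

variable {V : ℤ → ℝ} {a b : ℤ} (B : BoxEigenbasis V a b)

lemma coeff_sum_mul (c : Finset.Icc a b → ℝ) (k : Finset.Icc a b) :
    B.coeff (fun n => ∑ l, c l * B.φ l n) k = c k := by
  simp only [coeff, smul_eq_mul, Finset.mul_sum]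
  rw [Finset.sum_comm]
  simp only [mul_left_comm (B.φ k _), ← Finset.mul_sum, B.orth, mul_ite, mul_one, mul_zero,
    Finset.sum_ite_eq, Finset.mem_univ, if_true]

lemma sum_sq_sum_mul (c : Finset.Icc a b → ℝ) :
    ∑ n ∈ Finset.Icc a b, (∑ k, c k * B.φ k n) ^ 2 = ∑ k, c k ^ 2 := by
  have h := B.sum_norm_coeff_sq fun n => ∑ k, c k * B.φ k n
  simpa only [coeff_sum_mul, Real.norm_eq_abs, sq_abs] using h.symm

lemma sum_sq_single_sub_le {j : ℤ} (hj : j ∈ Finset.Icc a b) (S : Finset (Finset.Icc a b))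
    (s : Finset ℤ) :
    ∑ n ∈ s, ((if n = j then 1 else 0) - ∑ k ∈ S, B.φ k j * B.φ k n) ^ 2 ≤
      ∑ k ∈ Sᶜ, B.φ k j ^ 2 := by
  let c : Finset.Icc a b → ℝ := fun k => if k ∈ S then 0 else B.φ k j
  have hc (f : ℝ → Finset.Icc a b → ℝ) (hf : ∀ k, f 0 k = 0) :
      ∑ k, f (c k) k = ∑ k ∈ Sᶜ, f (B.φ k j) k := by
    rw [← Finset.sum_add_sum_compl S,
      Finset.sum_eq_zero fun k hk => by simp only [c, if_pos hk, hf], zero_add]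
    exact Finset.sum_congr rfl fun k hk => by simp only [c, if_neg (Finset.mem_compl.1 hk)]
  have hdiff (n : ℤ) : (if n = j then 1 else 0) - ∑ k ∈ S, B.φ k j * B.φ k n =
      ∑ k, c k * B.φ k n := by
    have hsingle : (if n = j then 1 else 0) = ∑ k, B.φ k j * B.φ k n := by
      by_cases hn : n ∈ Finset.Icc a b
      · simp only [B.complete j hj n hn, eq_comm]
      · rw [if_neg (by rintro rfl; exact hn hj)]
        exact (Finset.sum_eq_zero fun k _ => by rw [B.supp k n hn, mul_zero]).symm
    rw [hc (fun t k => t * B.φ k n) fun _ => zero_mul _, hsingle, ← Finset.sum_add_sum_compl S,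
      add_sub_cancel_left]
  simp only [hdiff]
  refine (sum_sq_le_of_support (a := a) (b := b) (fun n hn => ?_) s).trans_eq ?_
  · exact Finset.sum_eq_zero fun k _ => by rw [B.supp k n hn, mul_zero]
  · rw [B.sum_sq_sum_mul, hc (fun t _ => t ^ 2) fun _ => zero_pow two_ne_zero]

end BoxEigenbasis

/-- The sequences `u m` solve the eigenvalue equations with energies `e m` on the set `D`, their
`ℓ²`-norms are at most `1`, and the combination `∑ m, c m * u m` is within `η` of the unit vector
at `j` in `ℓ²`. The norms are expressed by finite partial sums so that all the conditions are
preserved by pointwise limits. -/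
structure IsUnitVectorApprox (V : ℤ → ℝ) (M η : ℝ) (j : ℤ) (D : Set ℤ) {J : ℕ}
    (u : Fin J → ℤ → ℝ) (e c : Fin J → ℝ) : Prop where
  abs_energy_le : ∀ m, |e m| ≤ M
  abs_coeff_le : ∀ m, |c m| ≤ 1
  eig : ∀ m, ∀ n ∈ D, schrodinger V (u m) n = e m * u m n
  sum_sq_le : ∀ m, ∀ s : Finset ℤ, ∑ n ∈ s, u m n ^ 2 ≤ 1
  sum_sq_sub_le : ∀ s : Finset ℤ,
    ∑ n ∈ s, ((if n = j then 1 else 0) - ∑ m, c m * u m n) ^ 2 ≤ η ^ 2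

lemma abs_le_one_of_sum_sq_le {x : ℤ → ℝ} (hx : ∀ s : Finset ℤ, ∑ n ∈ s, x n ^ 2 ≤ 1) (n : ℤ) :
    |x n| ≤ 1 :=
  (sq_le_one_iff_abs_le_one _).1 (by simpa only [Finset.sum_singleton] using hx {n})

lemma BoxEigenbasis.exists_isUnitVectorApprox {V : ℤ → ℝ} {a b : ℤ} (B : BoxEigenbasis V a b)
    {M η : ℝ} (hM : ∀ n, |V n| ≤ M) {J : ℕ} {S : Finset (Finset.Icc a b)} (hS : S.card ≤ J)
    (hJ : J ≤ (Finset.Icc a b).card) {j : ℤ} (hj : j ∈ Finset.Icc a b)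
    (hη : ∑ k ∈ Sᶜ, B.φ k j ^ 2 ≤ η ^ 2) :
    ∃ (u : Fin J → ℤ → ℝ) (e c : Fin J → ℝ),
      IsUnitVectorApprox V (2 + M) η j (Finset.Icc a b) u e c := by
  obtain ⟨S', hSS', hS'⟩ := Finset.exists_superset_card_eq hS (by simpa using hJ)
  let g := S'.equivFinOfCardEq hS'
  have hsum_sq (k : Finset.Icc a b) (s : Finset ℤ) : ∑ n ∈ s, B.φ k n ^ 2 ≤ 1 :=
    (sum_sq_le_of_support (B.supp k) s).trans (B.sum_sq k).le
  refine ⟨fun m => B.φ (g.symm m), fun m => B.E (g.symm m), fun m => B.φ (g.symm m) j,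
    fun m => B.abs_E_le hM _, fun m => abs_le_one_of_sum_sq_le (hsum_sq _) _,
    fun m n hn => B.eig _ n hn, fun m s => hsum_sq _ s, fun s => ?_⟩
  have hsum (n : ℤ) :
      ∑ m, B.φ (g.symm m) j * B.φ (g.symm m) n = ∑ k ∈ S', B.φ k j * B.φ k n := by
    rw [← Finset.sum_coe_sort S' (fun k => B.φ k j * B.φ k n)]
    exact Equiv.sum_comp g.symm fun k : S' => B.φ k j * B.φ k n
  simp only [hsum]
  refine (B.sum_sq_single_sub_le hj S' s).trans (hη.trans' ?_)
  exact Finset.sum_le_sum_of_subset_of_nonneg (Finset.compl_subset_compl.2 hSS')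
    fun _ _ _ => sq_nonneg _

lemma exists_tendsto_of_abs_le {ι : Type*} (F : Ultrafilter ι) {a : ι → ℝ} {C : ℝ}
    (ha : ∀ i : ι, |a i| ≤ C) : ∃ L, Filter.Tendsto a F (nhds L) := by
  obtain ⟨L, -, hL⟩ := (isCompact_Icc (a := -C) (b := C)).ultrafilter_le_nhds' (F.map a)
    (Ultrafilter.mem_map.2 (Filter.univ_mem' fun i => abs_le.1 (ha i)))
  exact ⟨L, hL⟩

lemma IsUnitVectorApprox.exists_limit {V : ℤ → ℝ} {M η : ℝ} {j : ℤ} {ι : Type*}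
    (F : Ultrafilter ι) {D : ι → Set ℤ} (hD : ∀ n, ∀ᶠ i in F, n ∈ D i) {J : ℕ}
    {u : ι → Fin J → ℤ → ℝ} {e c : ι → Fin J → ℝ}
    (h : ∀ i, IsUnitVectorApprox V M η j (D i) (u i) (e i) (c i)) :
    ∃ (u : Fin J → ℤ → ℝ) (e c : Fin J → ℝ), IsUnitVectorApprox V M η j Set.univ u e c := by
  choose u' hu' using fun m n => exists_tendsto_of_abs_le F fun i =>
    abs_le_one_of_sum_sq_le ((h i).sum_sq_le m) n
  choose e' he' using fun m => exists_tendsto_of_abs_le F fun i => (h i).abs_energy_le m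
  choose c' hc' using fun m => exists_tendsto_of_abs_le F fun i => (h i).abs_coeff_le m
  refine ⟨u', e', c', fun m => ?_, fun m => ?_, fun m n _ => ?_, fun m s => ?_, fun s => ?_⟩
  · exact le_of_tendsto (he' m).abs (.of_forall fun i => (h i).abs_energy_le m)
  · exact le_of_tendsto (hc' m).abs (.of_forall fun i => (h i).abs_coeff_le m)
  · have hlhs : Filter.Tendsto (fun i => schrodinger V (u i m) n) F
        (nhds (schrodinger V (u' m) n)) :=
      ((hu' m (n + 1)).add (hu' m (n - 1))).add ((hu' m n).const_mul (V n))
    refine tendsto_nhds_unique_of_eventuallyEq hlhs ((he' m).mul (hu' m n)) ?_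
    filter_upwards [hD n] with i hi using (h i).eig m n hi
  · exact le_of_tendsto (tendsto_finsetSum s fun n _ => (hu' m n).pow 2)
      (.of_forall fun i => (h i).sum_sq_le m s)
  · exact le_of_tendsto (tendsto_finsetSum s fun n _ => (tendsto_const_nhds.sub
      (tendsto_finsetSum _ fun m _ => (hc' m).mul (hu' m n))).pow 2)
      (.of_forall fun i => (h i).sum_sq_sub_le s)

/-- The linear span of the eigenfunctions in `ℓ²(ℤ)`. -/
def eigenSpan (V : ℤ → ℝ) : Submodule ℝ (lp (fun _ : ℤ => ℝ) 2) :=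
  Submodule.span ℝ {ψ | ∃ E : ℝ, IsEigenfunction V E ψ}

lemma IsUnitVectorApprox.exists_mem_eigenSpan {V : ℤ → ℝ} {M η : ℝ} (hη : 0 ≤ η) {j : ℤ} {J : ℕ}
    {u : Fin J → ℤ → ℝ} {e c : Fin J → ℝ} (h : IsUnitVectorApprox V M η j Set.univ u e c) :
    ∃ v ∈ eigenSpan V, ‖lp.single 2 j (1 : ℝ) - v‖ ≤ η := by
  let ψ : Fin J → lp (fun _ : ℤ => ℝ) 2 := fun m =>
    ⟨u m, memℓp_gen' (C := 1) fun s => by simpa using h.sum_sq_le m s⟩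
  have hψ (m : Fin J) : ψ m ∈ eigenSpan V := by
    by_cases hzero : ψ m = 0
    · rw [hzero]
      exact Submodule.zero_mem _
    · exact Submodule.subset_span ⟨e m, hzero, fun n => h.eig m n (Set.mem_univ n)⟩
  refine ⟨∑ m, c m • ψ m, Submodule.sum_mem _ fun m _ => Submodule.smul_mem _ _ (hψ m),
    lp.norm_le_of_forall_sum_le (by norm_num) hη fun s => ?_⟩
  have hcoord (n : ℤ) : (lp.single 2 j (1 : ℝ) - ∑ m, c m • ψ m : lp (fun _ : ℤ => ℝ) 2) n =
      (if n = j then 1 else 0) - ∑ m, c m * u m n := by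
    rw [lp.coeFn_sub, Pi.sub_apply, lp.coeFn_sum, Finset.sum_apply, lp.single_apply,
      Pi.single_apply]
    rfl
  simpa only [hcoord, ENNReal.toReal_ofNat, Real.rpow_ofNat, Real.norm_eq_abs, sq_abs] using
    h.sum_sq_sub_le s

lemma exists_mem_eigenSpan {V : ℤ → ℝ} {M : ℝ} (hM : ∀ n, |V n| ≤ M) {N : ℕ → ℤ}
    (hN : Filter.Tendsto N Filter.atTop Filter.atTop) {j : ℤ} {η : ℝ} (hη : 0 ≤ η) {J : ℕ}
    (h : ∀ᶠ i in Filter.atTop, ∃ B : BoxEigenbasis V (-N i) (N i),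
      ∃ S : Finset (Finset.Icc (-N i) (N i)), S.card ≤ J ∧ ∑ k ∈ Sᶜ, B.φ k j ^ 2 ≤ η ^ 2) :
    ∃ v ∈ eigenSpan V, ‖lp.single 2 j (1 : ℝ) - v‖ ≤ η := by
  have happrox : ∀ᶠ i in Filter.atTop, ∃ (u : Fin J → ℤ → ℝ) (e c : Fin J → ℝ),
      IsUnitVectorApprox V (2 + M) η j (Finset.Icc (-N i) (N i)) u e c := by
    filter_upwards [h, hN.eventually_ge_atTop (|j| + J)] with i ⟨B, S, hS, hB⟩ hi
    have hj := abs_le.1 (le_refl |j|)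
    refine B.exists_isUnitVectorApprox hM hS ?_ (by rw [Finset.mem_Icc]; omega) hB
    rw [Int.card_Icc]
    omega
  obtain ⟨i₀, hi₀⟩ := Filter.eventually_atTop.1 happrox
  choose u e c huec using fun i : ℕ => hi₀ (i + i₀) (Nat.le_add_left _ _)
  have hF : (Filter.hyperfilter ℕ : Filter ℕ) ≤ Filter.atTop :=
    Nat.cofinite_eq_atTop ▸ Filter.hyperfilter_le_cofinite
  have hbox (n : ℤ) : ∀ᶠ i in Filter.atTop,
      n ∈ (Finset.Icc (-N (i + i₀)) (N (i + i₀)) : Set ℤ) := by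
    filter_upwards [(hN.comp (Filter.tendsto_add_atTop_nat i₀)).eventually_ge_atTop |n|] with i hi
    exact Finset.mem_coe.2 (Finset.mem_Icc.2 (abs_le.1 hi))
  obtain ⟨u', e', c', h'⟩ :=
    IsUnitVectorApprox.exists_limit (Filter.hyperfilter ℕ) (fun n => hF (hbox n)) huec
  exact h'.exists_mem_eigenSpan hη

lemma hasPurePointSpectrum_of_boxEigenbasis {V : ℤ → ℝ} {M : ℝ} (hM : ∀ n, |V n| ≤ M) {N : ℕ → ℤ}
    (hN : Filter.Tendsto N Filter.atTop Filter.atTop)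
    (h : ∀ j : ℤ, ∀ η > 0, ∃ J : ℕ, ∀ᶠ i in Filter.atTop, ∃ B : BoxEigenbasis V (-N i) (N i),
      ∃ S : Finset (Finset.Icc (-N i) (N i)), S.card ≤ J ∧ ∑ k ∈ Sᶜ, B.φ k j ^ 2 ≤ η) :
    HasPurePointSpectrum V := by
  have hsingle (j : ℤ) : lp.single 2 j (1 : ℝ) ∈ (eigenSpan V).topologicalClosure := by
    rw [← SetLike.mem_coe, Submodule.topologicalClosure_coe, Metric.mem_closure_iff]
    intro δ hδ
    obtain ⟨J, hJ⟩ := h j ((δ / 2) ^ 2) (by positivity)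
    obtain ⟨v, hv, hv'⟩ := exists_mem_eigenSpan hM hN (by positivity) hJ
    exact ⟨v, hv, by rw [dist_eq_norm]; linarith⟩
  refine (Submodule.eq_top_iff').2 fun f => ?_
  refine (eigenSpan V).isClosed_topologicalClosure.mem_of_tendsto
    (lp.hasSum_single (p := 2) (by norm_num) f) (.of_forall fun s => ?_)
  refine Submodule.sum_mem _ fun j _ => ?_
  rw [← mul_one (f j), ← smul_eq_mul, lp.single_smul]
  exact Submodule.smul_mem _ _ (hsingle j)

/-! ### Localization of box eigenvectors across scales -/

lemma IsBarrier.neg {U : ℤ → ℝ} {E β : ℝ} {p q : ℤ} (hB : IsBarrier U E β p q) :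
    IsBarrier (fun n => U (-n)) E β (-q) (-p) := by
  obtain ⟨w, hw, hwq, hwq', hwβ⟩ := hB
  refine IsSolution.isBarrier (w := fun n => w (-n)) (fun n => ?_) ?_ ?_ ?_
  · rw [schrodinger_comp_neg]
    simpa only [neg_neg] using hw (-n)
  · rw [neg_neg, hwq, abs_one]
  · rwa [neg_sub, sub_neg_eq_add, add_comm]
  · rwa [neg_add, neg_neg, ← sub_eq_add_neg]

lemma IsBarrier.mono {U : ℤ → ℝ} {E β β' : ℝ} {p q : ℤ} (hβ : β ≤ β')
    (hB : IsBarrier U E β' p q) : IsBarrier U E β p q := by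
  obtain ⟨w, hw, hwq, hwq', hwβ⟩ := hB
  exact ⟨w, hw, hwq, hwq', hβ.trans hwβ⟩

lemma sum_Icc_neg {F : Type*} [AddCommMonoid F] (f : ℤ → F) (a b : ℤ) :
    ∑ n ∈ Finset.Icc (-b) (-a), f n = ∑ n ∈ Finset.Icc a b, f (-n) := by
  refine (Finset.sum_equiv (Equiv.neg ℤ) (fun n => ?_) fun _ _ => rfl).symm
  simp only [Equiv.neg_apply, Finset.mem_Icc]
  omega

lemma NonResonant.neg {U : ℤ → ℝ} {E h : ℝ} {p q : ℤ} (hN : NonResonant U E h p q) :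
    NonResonant (fun n => U (-n)) E h (-q) (-p) := by
  intro x hx
  have hbound := hN (fun n => x (-n)) fun n hn => hx _ (by
    rw [Finset.mem_Icc] at hn ⊢
    omega)
  rw [sum_Icc_neg, sum_Icc_neg]
  simpa only [schrodinger_comp_neg] using hbound

/-- Every energy in `[-K, K]` is `η`-close to an energy for which some interval with endpoints next
to `a` and `b` is a barrier of strength `β`. -/
def HasBarriers (U : ℤ → ℝ) (K η β : ℝ) (a b : ℤ) : Prop :=
  ∀ E, |E| ≤ K → ∃ E₀, |E - E₀| ≤ η ∧ ∃ p q, (p = a ∨ p = a + 1) ∧ (q = b - 1 ∨ q = b) ∧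
    IsBarrier U E₀ β p q

lemma HasBarriers.mono {U : ℤ → ℝ} {K η η' β β' : ℝ} {a b : ℤ} (hη : η' ≤ η) (hβ : β ≤ β')
    (hB : HasBarriers U K η' β' a b) : HasBarriers U K η β a b := by
  intro E hE
  obtain ⟨E₀, hE₀, p, q, hp, hq, hpq⟩ := hB E hE
  exact ⟨E₀, hE₀.trans hη, p, q, hp, hq, hpq.mono hβ⟩

/-- The energy `E` is at distance at least `h` from the spectrum of every box with endpoints next
to `a` and `b`. -/
def NonResonantNear (U : ℤ → ℝ) (E h : ℝ) (a b : ℤ) : Prop :=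
  ∀ p q, (p = a ∨ p = a + 1) → (q = b - 1 ∨ q = b) → NonResonant U E h p q

lemma HasBarriers.exists_hasLeftCorrector {U : ℤ → ℝ} {K E h β η : ℝ} {φ : ℤ → ℝ} {a b : ℤ}
    (hB : HasBarriers U K η β a b) (hab : a + 2 ≤ b) (hβ : 1 ≤ β) (hh : 0 < h)
    (hη : η ≤ h / (2 * β)) (hE : |E| ≤ K) (hφ : ∀ n, |φ n| ≤ 1)
    (hN : NonResonantNear U E h a b) :
    ∃ p q, (p = a ∨ p = a + 1) ∧ (q = b - 1 ∨ q = b) ∧ HasLeftCorrector U E φ η β h p q := by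
  obtain ⟨E₀, hE₀, p, q, hp, hq, hpq⟩ := hB E hE
  have hη' : η ≤ h / 2 :=
    hη.trans (div_le_div_of_nonneg_left hh.le two_pos (by linarith))
  exact ⟨p, q, hp, hq, hpq.hasLeftCorrector (by omega) (by linarith) hh hη' hE₀
    (hN p q hp hq) (hφ _)⟩

lemma HasBarriers.exists_hasRightCorrector {U : ℤ → ℝ} {K E h β η : ℝ} {φ : ℤ → ℝ} {a b : ℤ}
    (hB : HasBarriers U K η β a b) (hab : a + 2 ≤ b) (hβ : 1 ≤ β) (hh : 0 < h)
    (hη : η ≤ h / (2 * β)) (hE : |E| ≤ K) (hφ : ∀ n, |φ n| ≤ 1)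
    (hN : NonResonantNear U E h a b) :
    ∃ p q, (p = a ∨ p = a + 1) ∧ (q = b - 1 ∨ q = b) ∧ HasRightCorrector U E φ η β h p q := by
  obtain ⟨E₀, hE₀, p, q, hp, hq, hpq⟩ := hB E hE
  have hη' : η ≤ h / 2 :=
    hη.trans (div_le_div_of_nonneg_left hh.le two_pos (by linarith))
  have hleft := hpq.neg.hasLeftCorrector (φ := fun n => φ (-n)) (by omega) (by linarith) hh hη' hE₀
    (hN p q hp hq).neg (hφ _)
  exact ⟨p, q, hp, hq, hleft.hasRightCorrector⟩

lemma sum_sq_annulus_le {U : ℤ → ℝ} {K E h β η : ℝ} {φ : ℤ → ℝ} {a b c d : ℤ} (hab : a + 2 ≤ b)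
    (hbc : b < c) (hcd : c + 2 ≤ d) (hβ : 1 ≤ β) (hh : 0 < h)
    (hη : η ≤ h / (2 * β)) (hE : |E| ≤ K) (hφ : ∀ n, |φ n| ≤ 1)
    (heig : ∀ n ∈ Finset.Icc a d, schrodinger U φ n = E * φ n)
    (hB : HasBarriers U K η β a b) (hB' : HasBarriers U K η β c d)
    (hN : NonResonantNear U E h a b) (hN' : NonResonantNear U E h c d)
    (hNad : NonResonantNear U E h a d) :
    ∑ n ∈ Finset.Ioo b c, φ n ^ 2 ≤ 16 / (β ^ 2 * h ^ 2) := by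
  obtain ⟨p, q, hp, hq, hL⟩ := hB.exists_hasLeftCorrector hab hβ hh hη hE hφ hN
  obtain ⟨r, s, hr, hs, hR⟩ := hB'.exists_hasRightCorrector hcd hβ hh hη hE hφ hN'
  calc ∑ n ∈ Finset.Ioo b c, φ n ^ 2 ≤ ∑ n ∈ Finset.Ioo q r, φ n ^ 2 :=
        Finset.sum_le_sum_of_subset_of_nonneg (Finset.Ioo_subset_Ioo (by omega) (by omega))
          fun _ _ _ => sq_nonneg _
    _ ≤ 16 / (β ^ 2 * h ^ 2) :=
        sum_sq_Ioo_le_of_correctors (by omega) (by omega) (by omega) (by linarith) hh hη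
          (fun n hn => heig n (Finset.Icc_subset_Icc (by omega) (by omega) hn)) hL hR
          (hNad p s hp hs)

lemma sum_sq_terminal_le {U : ℤ → ℝ} {K E h β η : ℝ} {φ : ℤ → ℝ} {a b d : ℤ} (hab : a + 2 ≤ b)
    (hbd : b < d) (hβ : 1 ≤ β) (hh : 0 < h) (hη₀ : 0 ≤ η)
    (hη : η ≤ h / (2 * β)) (hE : |E| ≤ K) (hφ : ∀ n, |φ n| ≤ 1)
    (heig : ∀ n ∈ Finset.Icc a d, schrodinger U φ n = E * φ n) (hφd : φ (d + 1) = 0)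
    (hB : HasBarriers U K η β a b) (hN : NonResonantNear U E h a b)
    (hNad : NonResonantNear U E h a d) :
    ∑ n ∈ Finset.Ioc b d, φ n ^ 2 ≤ 16 / (β ^ 2 * h ^ 2) := by
  obtain ⟨p, q, hp, hq, hL⟩ := hB.exists_hasLeftCorrector hab hβ hh hη hE hφ hN
  calc ∑ n ∈ Finset.Ioc b d, φ n ^ 2 ≤ ∑ n ∈ Finset.Ioo q (d + 1), φ n ^ 2 := by
        refine Finset.sum_le_sum_of_subset_of_nonneg (fun n hn => ?_) fun _ _ _ => sq_nonneg _
        rw [Finset.mem_Ioc] at hn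
        rw [Finset.mem_Ioo]
        omega
    _ ≤ 16 / (β ^ 2 * h ^ 2) :=
        sum_sq_Ioo_le_of_correctors (by omega) (by omega) (by omega) (by linarith) hh hη
          (fun n hn => heig n (Finset.Icc_subset_Icc (by omega) le_rfl hn)) hL
          (hasRightCorrector_of_eq_zero hη₀ (by linarith) hφd) (hNad p d hp (Or.inr rfl))

lemma sum_union_le {ι M : Type*} [DecidableEq ι] [AddCommMonoid M] [PartialOrder M]
    [IsOrderedAddMonoid M] {f : ι → M} (hf : ∀ i, 0 ≤ f i) (s t : Finset ι) :
    ∑ i ∈ s ∪ t, f i ≤ ∑ i ∈ s, f i + ∑ i ∈ t, f i := by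
  rw [← Finset.sum_union_inter]
  exact le_add_of_nonneg_right (Finset.sum_nonneg fun i _ => hf i)

lemma sum_biUnion_le {ι κ M : Type*} [DecidableEq κ] [AddCommMonoid M] [PartialOrder M]
    [IsOrderedAddMonoid M] {f : κ → M} (hf : ∀ k, 0 ≤ f k) (s : Finset ι) (t : ι → Finset κ) :
    ∑ k ∈ s.biUnion t, f k ≤ ∑ i ∈ s, ∑ k ∈ t i, f k := by
  classical
  induction s using Finset.induction with
  | empty => rw [Finset.biUnion_empty, Finset.sum_empty, Finset.sum_empty]
  | insert i s hi ih =>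
    rw [Finset.biUnion_insert, Finset.sum_insert hi]
    exact (sum_union_le hf _ _).trans (by gcongr)

/-- Parameters of the multiscale construction: the barriers of level `l` occupy `[a l, N l]`, have
strength `β l` for energies in an `η l`-net, and resonances are measured at width `h l`. -/
structure Scales (a N : ℕ → ℤ) (h β η : ℕ → ℝ) : Prop where
  two_le : ∀ l, 2 ≤ a l
  lt : ∀ l, a l + 2 ≤ N l
  lt_succ : ∀ l, N l < a (l + 1)
  one_le_β : ∀ l, 1 ≤ β l
  β_le : ∀ l, β l ≤ β (l + 1)
  η_nonneg : ∀ l, 0 ≤ η l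
  η_le : ∀ l, η (l + 1) ≤ η l
  h_pos : ∀ l, 0 < h l
  η_le_h : ∀ l, η l ≤ h l / (2 * β l)
  small : ∀ l, 16 / (β l ^ 2 * h l ^ 2) ≤ (1 / 2) ^ (l + 4)

/-- The energy `E` is non-resonant at level `l`: with the barrier regions of levels `l` and `l + 2`
and with the whole stretch between them. -/
def NonResonantAt (U : ℤ → ℝ) (E : ℝ) (a N : ℕ → ℤ) (h : ℕ → ℝ) (l : ℕ) : Prop :=
  NonResonantNear U E (h l) (a l) (N l) ∧
    NonResonantNear U E (h l) (a (l + 2)) (N (l + 2)) ∧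
    NonResonantNear U E (h l) (a l) (N (l + 2))

namespace Scales

variable {a N : ℕ → ℤ} {h β η : ℕ → ℝ}

lemma strictMono (hs : Scales a N h β η) : StrictMono N :=
  strictMono_nat_of_lt_succ fun l => by
    linarith [hs.lt_succ l, hs.lt (l + 1)]

lemma natCast_le (hs : Scales a N h β η) (l : ℕ) : (l : ℤ) ≤ N l := by
  induction l with
  | zero =>
    have := hs.two_le 0
    have := hs.lt 0
    omega
  | succ l ih =>
    have := hs.strictMono l.lt_add_one
    omega

lemma tendsto_atTop (hs : Scales a N h β η) (m : ℕ) :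
    Filter.Tendsto (fun i => N (i + m)) Filter.atTop Filter.atTop :=
  (Filter.tendsto_add_atTop_iff_nat m).2
    (Filter.tendsto_atTop_mono hs.natCast_le tendsto_natCast_atTop_atTop)

lemma sum_sq_Ioc_le (hs : Scales a N h β η) {U : ℤ → ℝ} {K E : ℝ} {φ : ℤ → ℝ} {l₀ i : ℕ}
    (hl : l₀ ≤ i) (hB : ∀ l, HasBarriers U K (η l) (β l) (a l) (N l)) (hE : |E| ≤ K)
    (hφ : ∀ n, |φ n| ≤ 1)
    (heig : ∀ l < i, ∀ n ∈ Finset.Icc (a l) (N (l + 2)), schrodinger U φ n = E * φ n)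
    (hN : ∀ l, l₀ ≤ l → l < i → NonResonantAt U E a N h l) :
    ∑ n ∈ Finset.Ioc (N l₀) (N i), φ n ^ 2 ≤ (1 / 2) ^ (l₀ + 3) - (1 / 2) ^ (i + 3) := by
  induction i, hl using Nat.le_induction with
  | base => simp
  | succ i hi ih =>
    obtain ⟨hNi, hNi', hNi''⟩ := hN i hi i.lt_add_one
    have hstep : ∑ n ∈ Finset.Ioc (N i) (N (i + 1)), φ n ^ 2 ≤ (1 / 2) ^ (i + 4) :=
      calc ∑ n ∈ Finset.Ioc (N i) (N (i + 1)), φ n ^ 2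
          ≤ ∑ n ∈ Finset.Ioo (N i) (a (i + 2)), φ n ^ 2 := by
            refine Finset.sum_le_sum_of_subset_of_nonneg (fun n hn => ?_) fun _ _ _ => sq_nonneg _
            rw [Finset.mem_Ioc] at hn
            exact Finset.mem_Ioo.2 ⟨hn.1, hn.2.trans_lt (hs.lt_succ (i + 1))⟩
        _ ≤ 16 / (β i ^ 2 * h i ^ 2) :=
            sum_sq_annulus_le (hs.lt i) ((hs.strictMono i.lt_add_one).trans (hs.lt_succ (i + 1)))
              (hs.lt (i + 2)) (hs.one_le_β i) (hs.h_pos i) (hs.η_le_h i) hE hφ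
              (heig i i.lt_add_one) (hB i)
              ((hB (i + 2)).mono ((hs.η_le _).trans (hs.η_le _)) ((hs.β_le _).trans (hs.β_le _)))
              hNi hNi' hNi''
        _ ≤ (1 / 2) ^ (i + 4) := hs.small i
    have hunion := sum_union_le (fun n => sq_nonneg (φ n)) (Finset.Ioc (N l₀) (N i))
      (Finset.Ioc (N i) (N (i + 1)))
    rw [Finset.Ioc_union_Ioc_eq_Ioc (hs.strictMono.monotone hi)
      (hs.strictMono.monotone i.le_succ)] at hunion
    have hprev := ih (fun l hl => heig l (hl.trans i.lt_add_one))
      fun l hl hl' => hN l hl (hl'.trans i.lt_add_one)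
    rw [show i + 1 + 3 = i + 4 by ring]
    linarith [pow_succ (1 / 2 : ℝ) (i + 3)]

lemma sum_sq_tail_le (hs : Scales a N h β η) {U : ℤ → ℝ} {K E : ℝ} {φ : ℤ → ℝ} {l₀ i : ℕ}
    (hl : l₀ ≤ i) (hB : ∀ l, HasBarriers U K (η l) (β l) (a l) (N l)) (hE : |E| ≤ K)
    (hφ : ∀ n, |φ n| ≤ 1)
    (heig : ∀ n ∈ Finset.Icc 0 (N (i + 2)), schrodinger U φ n = E * φ n)
    (hφN : φ (N (i + 2) + 1) = 0) (hN : ∀ l, l₀ ≤ l → l ≤ i → NonResonantAt U E a N h l) :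
    ∑ n ∈ Finset.Ioc (N l₀) (N (i + 2)), φ n ^ 2 ≤ 1 / 8 := by
  have heig' (l : ℕ) (hl : l ≤ i) (n : ℤ) (hn : n ∈ Finset.Icc (a l) (N (l + 2))) :
      schrodinger U φ n = E * φ n :=
    heig n (Finset.Icc_subset_Icc (zero_le_two.trans (hs.two_le l))
      (hs.strictMono.monotone (by omega)) hn)
  have hinner := hs.sum_sq_Ioc_le hl hB hE hφ (fun l hl => heig' l hl.le)
    fun l hl hl' => hN l hl hl'.le
  obtain ⟨hNi, -, hNi'⟩ := hN i hl le_rfl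
  have houter : ∑ n ∈ Finset.Ioc (N i) (N (i + 2)), φ n ^ 2 ≤ (1 / 2) ^ (i + 4) :=
    (sum_sq_terminal_le (hs.lt i) (hs.strictMono (by omega)) (hs.one_le_β i) (hs.h_pos i)
      (hs.η_nonneg i) (hs.η_le_h i) hE hφ (heig' i le_rfl) hφN (hB i) hNi hNi').trans (hs.small i)
  have hunion := sum_union_le (fun n => sq_nonneg (φ n)) (Finset.Ioc (N l₀) (N i))
    (Finset.Ioc (N i) (N (i + 2)))
  rw [Finset.Ioc_union_Ioc_eq_Ioc (hs.strictMono.monotone hl)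
    (hs.strictMono.monotone (by omega))] at hunion
  have hpos : (0 : ℝ) < (1 / 2) ^ (i + 4) := by positivity
  have hle : (1 / 2 : ℝ) ^ (l₀ + 3) ≤ (1 / 2) ^ 3 :=
    pow_le_pow_of_le_one (by norm_num) (by norm_num) (by omega)
  linarith [pow_succ (1 / 2 : ℝ) (i + 3)]

end Scales

lemma sum_Icc_le_sum_Icc_add_tails {f : ℤ → ℝ} (hf : ∀ n, 0 ≤ f n) (L N : ℤ) :
    ∑ n ∈ Finset.Icc (-N) N, f n ≤ ∑ n ∈ Finset.Icc (-L) L, f n +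
      (∑ n ∈ Finset.Ioc L N, f n + ∑ n ∈ Finset.Ioc L N, f (-n)) := by
  have hreflect : ∑ n ∈ Finset.Ioc L N, f (-n) = ∑ n ∈ Finset.Ico (-N) (-L), f n := by
    refine Finset.sum_equiv (Equiv.neg ℤ) (fun n => ?_) fun _ _ => rfl
    simp only [Equiv.neg_apply, Finset.mem_Ioc, Finset.mem_Ico]
    omega
  rw [hreflect]
  calc ∑ n ∈ Finset.Icc (-N) N, f n
      ≤ ∑ n ∈ Finset.Icc (-L) L ∪ (Finset.Ioc L N ∪ Finset.Ico (-N) (-L)), f n := by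
        refine Finset.sum_le_sum_of_subset_of_nonneg (fun n hn => ?_) fun n _ _ => hf n
        simp only [Finset.mem_union, Finset.mem_Icc, Finset.mem_Ioc, Finset.mem_Ico] at hn ⊢
        omega
    _ ≤ _ := (sum_union_le hf _ _).trans (add_le_add_right (sum_union_le hf _ _) _)

lemma abs_le_of_add_add_mul_eq {x y z v E K M X : ℝ} (hx : x + z + v * y = E * y) (hE : |E| ≤ K)
    (hv : |v| ≤ M) (hy : |y| ≤ X) (hz : |z| ≤ X) : |x| ≤ (K + M + 1) * X := by
  have hx' : x = (E - v) * y - z := by linear_combination hx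
  calc |x| = |(E - v) * y - z| := by rw [hx']
    _ ≤ |E - v| * |y| + |z| := (abs_sub _ _).trans_eq (by rw [abs_mul])
    _ ≤ (K + M) * X + X := by
        gcongr
        · linarith [abs_nonneg E, abs_nonneg v]
        · exact (abs_sub _ _).trans (add_le_add hE hv)
    _ = (K + M + 1) * X := by ring

lemma abs_le_of_schrodinger_eq {V φ : ℤ → ℝ} {K M E : ℝ} (hM : ∀ n, |V n| ≤ M) (hE : |E| ≤ K)
    (n : ℕ) (heig : ∀ m ∈ Finset.Icc (-n : ℤ) n, schrodinger V φ m = E * φ m) :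
    ∀ m ∈ Finset.Icc (-n : ℤ) (n + 1), |φ m| ≤ (K + M + 1) ^ n * (|φ 0| + |φ 1|) := by
  have hKM : 0 ≤ K + M := add_nonneg ((abs_nonneg _).trans hE) ((abs_nonneg _).trans (hM 0))
  simp only [Finset.mem_Icc] at heig ⊢
  induction n with
  | zero =>
    intro m hm
    obtain rfl | rfl : m = 0 ∨ m = 1 := by omega
    all_goals simp
  | succ n ih =>
    have ih' := ih fun m hm => heig m (by omega)
    intro m hm
    push_cast at hm heig
    rw [pow_succ', mul_assoc]
    obtain rfl | rfl | hm' : m = n + 1 + 1 ∨ m = -n - 1 ∨ (-n ≤ m ∧ m ≤ n + 1) := by omega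
    · exact abs_le_of_add_add_mul_eq (heig (n + 1) (by omega)) hE (hM _)
        (ih' _ (by omega)) (ih' _ (by omega))
    · refine abs_le_of_add_add_mul_eq ?_ hE (hM (-n)) (ih' (-n) (by omega))
        (ih' (-n + 1) (by omega))
      rw [add_comm (φ _)]
      exact heig (-n) (by omega)
    · exact (ih' m hm').trans (le_mul_of_one_le_left (by positivity) (by linarith))

namespace BoxEigenbasis

variable {V : ℤ → ℝ}

lemma card_le_of_localized {N L : ℤ} (B : BoxEigenbasis V (-N) N)
    (hL : L ≤ N) {S : Finset (Finset.Icc (-N) N)}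
    (hS : ∀ k ∈ S, 1 / 2 ≤ ∑ n ∈ Finset.Icc (-L) L, B.φ k n ^ 2) :
    S.card ≤ 2 * (2 * L + 1).toNat := by
  have hsq (n : ℤ) (hn : n ∈ Finset.Icc (-L) L) : ∑ k, B.φ k n ^ 2 = 1 := by
    have hn' := Finset.Icc_subset_Icc (neg_le_neg hL) hL hn
    simpa only [sq, if_true] using B.complete n hn' n hn'
  have hcard : (S.card : ℝ) * (1 / 2) ≤ ((2 * L + 1).toNat : ℝ) :=
    calc (S.card : ℝ) * (1 / 2) ≤ ∑ k ∈ S, ∑ n ∈ Finset.Icc (-L) L, B.φ k n ^ 2 := by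
          simpa only [nsmul_eq_mul] using Finset.card_nsmul_le_sum S _ _ hS
      _ ≤ ∑ k, ∑ n ∈ Finset.Icc (-L) L, B.φ k n ^ 2 :=
          Finset.sum_le_sum_of_subset_of_nonneg (Finset.subset_univ _) fun k _ _ =>
            Finset.sum_nonneg fun _ _ => sq_nonneg _
      _ = ((2 * L + 1).toNat : ℝ) := by
          rw [Finset.sum_comm, Finset.sum_congr rfl hsq, Finset.sum_const, Int.card_Icc,
            nsmul_eq_mul, mul_one]
          congr 2
          ring
  have : (S.card : ℝ) ≤ ((2 * (2 * L + 1).toNat : ℕ) : ℝ) := by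
    push_cast
    linarith
  exact_mod_cast this

lemma half_le_sum_sq {a N : ℕ → ℤ} {h β η : ℕ → ℝ} {M : ℝ} {l₀ i : ℕ}
    (B : BoxEigenbasis V (-N (i + 2)) (N (i + 2))) (hs : Scales a N h β η) (hl : l₀ ≤ i)
    (hM : ∀ n, |V n| ≤ M) (hB : ∀ l, HasBarriers V (2 + M) (η l) (β l) (a l) (N l))
    (hB' : ∀ l, HasBarriers (fun n => V (-n)) (2 + M) (η l) (β l) (a l) (N l))
    {k : Finset.Icc (-N (i + 2)) (N (i + 2))}
    (hN : ∀ l, l₀ ≤ l → l ≤ i → NonResonantAt V (B.E k) a N h l)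
    (hN' : ∀ l, l₀ ≤ l → l ≤ i → NonResonantAt (fun n => V (-n)) (B.E k) a N h l) :
    1 / 2 ≤ ∑ n ∈ Finset.Icc (-N l₀) (N l₀), B.φ k n ^ 2 := by
  have hE := B.abs_E_le hM k
  have hφ := abs_le_one_of_sum_sq_le fun s =>
    (sum_sq_le_of_support (B.supp k) s).trans (B.sum_sq k).le
  have hright := hs.sum_sq_tail_le hl hB hE hφ
    (fun n hn => B.eig k n (by rw [Finset.mem_Icc] at hn ⊢; omega))
    (B.supp k _ (by simp)) hN
  have hleft := hs.sum_sq_tail_le (φ := fun n => B.φ k (-n)) hl hB' hE (fun n => hφ (-n))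
    (fun n hn => by
      rw [schrodinger_comp_neg]
      simpa only [neg_neg] using B.eig k (-n) (by rw [Finset.mem_Icc] at hn ⊢; omega))
    (B.supp k _ (by simp)) hN'
  linarith [B.sum_sq k,
    sum_Icc_le_sum_Icc_add_tails (fun n => sq_nonneg (B.φ k n)) (N l₀) (N (i + 2))]

lemma sq_apply_le {M : ℝ} {R : ℤ} (B : BoxEigenbasis V (-R) R) (hM : ∀ n, |V n| ≤ M) {j : ℤ}
    (hj : |j| ≤ R) (k : Finset.Icc (-R) R) :
    B.φ k j ^ 2 ≤ 2 * ((2 + M + M + 1) ^ j.natAbs) ^ 2 * (B.φ k 0 ^ 2 + B.φ k 1 ^ 2) := by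
  rw [Int.abs_eq_natAbs] at hj
  have hgrowth := abs_le_of_schrodinger_eq hM (B.abs_E_le hM k) j.natAbs (φ := B.φ k)
    (fun m hm => B.eig k m (by rw [Finset.mem_Icc] at hm ⊢; omega)) j
    (by rw [Finset.mem_Icc]; omega)
  calc B.φ k j ^ 2 ≤ ((2 + M + M + 1) ^ j.natAbs * (|B.φ k 0| + |B.φ k 1|)) ^ 2 := by
        rw [← sq_abs (B.φ k j)]
        gcongr
    _ ≤ ((2 + M + M + 1) ^ j.natAbs) ^ 2 * (2 * (|B.φ k 0| ^ 2 + |B.φ k 1| ^ 2)) := by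
        rw [mul_pow]
        gcongr
        exact add_sq_le
    _ = _ := by
        rw [sq_abs, sq_abs]
        ring

lemma sum_sq_biUnion_le {M : ℝ} {R : ℤ} (B : BoxEigenbasis V (-R) R) (hM : ∀ n, |V n| ≤ M) {j : ℤ}
    (hj : |j| ≤ R) {l₀ i : ℕ} {bad : ℕ → Finset (Finset.Icc (-R) R)}
    (hbad : ∀ l ≤ i, ∀ j : ℤ, (j = 0 ∨ j = 1) → ∑ k ∈ bad l, B.φ k j ^ 2 ≤ (1 / 2) ^ l) :
    ∑ k ∈ (Finset.Ico l₀ (i + 1)).biUnion bad, B.φ k j ^ 2 ≤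
      8 * ((2 + M + M + 1) ^ j.natAbs) ^ 2 * (1 / 2) ^ l₀ := by
  set C := (2 + M + M + 1) ^ j.natAbs
  have hlevel (l : ℕ) (hl : l ∈ Finset.Ico l₀ (i + 1)) :
      ∑ k ∈ bad l, B.φ k j ^ 2 ≤ 4 * C ^ 2 * (1 / 2) ^ l := by
    have hl' : l ≤ i := Nat.le_of_lt_succ (Finset.mem_Ico.1 hl).2
    calc ∑ k ∈ bad l, B.φ k j ^ 2
        ≤ ∑ k ∈ bad l, 2 * C ^ 2 * (B.φ k 0 ^ 2 + B.φ k 1 ^ 2) :=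
          Finset.sum_le_sum fun k _ => B.sq_apply_le hM hj k
      _ ≤ 2 * C ^ 2 * ((1 / 2) ^ l + (1 / 2) ^ l) := by
          rw [← Finset.mul_sum, Finset.sum_add_distrib]
          gcongr
          exacts [hbad l hl' 0 (Or.inl rfl), hbad l hl' 1 (Or.inr rfl)]
      _ = 4 * C ^ 2 * (1 / 2) ^ l := by ring
  calc ∑ k ∈ (Finset.Ico l₀ (i + 1)).biUnion bad, B.φ k j ^ 2
      ≤ ∑ l ∈ Finset.Ico l₀ (i + 1), ∑ k ∈ bad l, B.φ k j ^ 2 :=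
        sum_biUnion_le (fun _ => sq_nonneg _) _ _
    _ ≤ 4 * C ^ 2 * ∑ l ∈ Finset.Ico l₀ (i + 1), (1 / 2) ^ l := by
        rw [Finset.mul_sum]
        exact Finset.sum_le_sum hlevel
    _ ≤ 4 * C ^ 2 * ((1 / 2) ^ l₀ / (1 - 1 / 2)) := by
        gcongr
        exact geom_sum_Ico_le_of_lt_one (by norm_num) (by norm_num)
    _ = 8 * C ^ 2 * (1 / 2) ^ l₀ := by ring

end BoxEigenbasis

theorem Scales.hasPurePointSpectrum {a N : ℕ → ℤ} {h β η : ℕ → ℝ} (hs : Scales a N h β η)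
    {V : ℤ → ℝ} {M : ℝ} (hM : ∀ n, |V n| ≤ M) (S : ℕ → Finset ℝ)
    (hB : ∀ l, HasBarriers V (2 + M) (η l) (β l) (a l) (N l))
    (hB' : ∀ l, HasBarriers (fun n => V (-n)) (2 + M) (η l) (β l) (a l) (N l))
    (hN : ∀ l E, (∀ e ∈ S l, h l ≤ |E - e|) → NonResonantAt V E a N h l)
    (hN' : ∀ l E, (∀ e ∈ S l, h l ≤ |E - e|) → NonResonantAt (fun n => V (-n)) E a N h l)
    (hW : ∀ i l, l ≤ i → ∀ B : BoxEigenbasis V (-N (i + 2)) (N (i + 2)), ∀ j : ℤ,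
      (j = 0 ∨ j = 1) → ∑ k with ∃ e ∈ S l, |B.E k - e| ≤ h l, B.φ k j ^ 2 ≤ (1 / 2) ^ l) :
    HasPurePointSpectrum V := by
  classical
  refine hasPurePointSpectrum_of_boxEigenbasis hM (hs.tendsto_atTop 2) fun j ε hε => ?_
  set C := (2 + M + M + 1) ^ j.natAbs
  obtain ⟨l₀, hl₀⟩ : ∃ l₀ : ℕ, ((1 : ℝ) / 2) ^ l₀ < ε / (8 * C ^ 2 + 1) :=
    exists_pow_lt_of_lt_one (by positivity) (by norm_num)
  refine ⟨2 * (2 * N l₀ + 1).toNat, ?_⟩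
  filter_upwards [Filter.eventually_ge_atTop l₀,
    (hs.tendsto_atTop 2).eventually_ge_atTop |j|] with i hi hij
  obtain ⟨B⟩ := exists_boxEigenbasis V (-N (i + 2)) (N (i + 2))
  let bad (l : ℕ) : Finset (Finset.Icc (-N (i + 2)) (N (i + 2))) :=
    {k | ∃ e ∈ S l, |B.E k - e| ≤ h l}
  refine ⟨B, ((Finset.Ico l₀ (i + 1)).biUnion bad)ᶜ,
    B.card_le_of_localized (hs.strictMono.monotone (by omega)) fun k hk => ?_, ?_⟩
  · have hgood (l : ℕ) (hl : l₀ ≤ l) (hli : l ≤ i) (e : ℝ) (he : e ∈ S l) :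
        h l ≤ |B.E k - e| := by
      simp only [bad, Finset.mem_compl, Finset.mem_biUnion, Finset.mem_Ico, Finset.mem_filter_univ,
        not_exists, not_and, not_le] at hk
      exact (hk l ⟨hl, Nat.lt_succ_of_le hli⟩ e he).le
    exact B.half_le_sum_sq hs hi hM hB hB' (fun l hl hli => hN l _ (hgood l hl hli))
      fun l hl hli => hN' l _ (hgood l hl hli)
  · rw [compl_compl]
    refine (B.sum_sq_biUnion_le hM hij fun l hl => hW i l hl B).trans ?_
    rw [lt_div_iff₀ (by positivity)] at hl₀
    linarith [show (0 : ℝ) < (1 / 2) ^ l₀ by positivity]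

/-! ### One stage of the perturbation -/

lemma exists_finset_net {K η : ℝ} (hK : 0 ≤ K) (hη : 0 < η) : ∃ S : Finset ℝ,
    (S.card : ℝ) ≤ 2 * K / η + 1 ∧ ∀ E, |E| ≤ K → ∃ E₀ ∈ S, |E - E₀| ≤ η := by
  classical
  refine ⟨(Finset.range (⌊2 * K / η⌋₊ + 1)).image fun i : ℕ => -K + i * η, ?_, fun E hE => ?_⟩
  · calc (_ : ℝ) ≤ (⌊2 * K / η⌋₊ + 1 : ℕ) := by
          exact_mod_cast Finset.card_image_le.trans (Finset.card_range _).le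
      _ ≤ 2 * K / η + 1 := by
          push_cast
          gcongr
          exact Nat.floor_le (by positivity)
  · obtain ⟨hE₁, hE₂⟩ := abs_le.1 hE
    refine ⟨-K + ⌊(E + K) / η⌋₊ * η, Finset.mem_image_of_mem _ ?_, ?_⟩
    · rw [Finset.mem_range, Nat.lt_succ_iff]
      exact Nat.floor_le_floor (by gcongr; linarith)
    · have hfloor := Nat.floor_le (div_nonneg (by linarith : 0 ≤ E + K) hη.le)
      have hlt_floor := Nat.lt_floor_add_one ((E + K) / η)
      rw [le_div_iff₀ hη] at hfloor
      rw [div_lt_iff₀ hη] at hlt_floor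
      rw [abs_le]
      constructor <;> linarith

section Barriers

variable {K l η β : ℝ} {a N : ℤ} {k : ℕ}

lemma exists_hasBarriers (V : ℤ → ℝ) (hK : 0 ≤ K) (hl : 0 < l) (hl1 : l ≤ 1) (hη : 0 < η)
    (hβ : 1 ≤ β) (hN : N = a + 2 * k - 1)
    (hk : ((2 * K / η + 1) * 4 * β ^ 2) ^ 2 < (1 + l ^ 2 / 128) ^ k) :
    ∃ b : ℤ → ℝ, (∀ n, b n ∈ Set.Icc 0 1) ∧ ∀ U : ℤ → ℝ,
      (∀ n ∈ Finset.Icc a N, U n = V n + l * b n) → HasBarriers U K η β a N := by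
  obtain ⟨S, hcard, hS⟩ := exists_finset_net hK hη
  obtain ⟨b, hb, hbarrier⟩ := exists_barrier_bits S V a hl hl1 hβ k (hk.trans_le' (by gcongr))
  refine ⟨fun n => b (n - a).toNat, fun n => ?_, fun U hU E hE => ?_⟩
  · obtain h | h := hb (n - a).toNat <;> simp only [h, Set.mem_Icc] <;> norm_num
  · obtain ⟨E₀, hE₀, hEE₀⟩ := hS E hE
    have hUi (i : ℕ) (hi : i < 2 * k) : U (a + i) = V (a + i) + l * b i := by
      simp only [hU _ (Finset.mem_Icc.2 (by omega : a ≤ a + i ∧ a + i ≤ N)), add_sub_cancel_left,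
        Int.toNat_natCast]
    obtain ⟨p, q, hp, hq, hpq⟩ := hbarrier U hUi E₀ hE₀
    exact ⟨E₀, hEE₀, p, q, hp, by omega, hpq⟩

lemma exists_symmetric_hasBarriers (V : ℤ → ℝ) (hK : 0 ≤ K) (hl : 0 < l) (hl1 : l ≤ 1)
    (hη : 0 < η) (hβ : 1 ≤ β) (ha : 1 ≤ a) (hN : N = a + 2 * k - 1)
    (hk : ((2 * K / η + 1) * 4 * β ^ 2) ^ 2 < (1 + l ^ 2 / 128) ^ k) :
    ∃ t : ℤ → ℝ, (∀ n, t n ∈ Set.Icc 0 1) ∧ (∀ n, |n| ∉ Finset.Icc a N → t n = 0) ∧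
      (∀ U : ℤ → ℝ, (∀ n ∈ Finset.Icc a N, U n = V n + l * t n) → HasBarriers U K η β a N) ∧
      ∀ U : ℤ → ℝ, (∀ n ∈ Finset.Icc a N, U n = V (-n) + l * t (-n)) →
        HasBarriers U K η β a N := by
  obtain ⟨b, hb, hright⟩ := exists_hasBarriers V hK hl hl1 hη hβ hN hk
  obtain ⟨b', hb', hleft⟩ := exists_hasBarriers (fun n => V (-n)) hK hl hl1 hη hβ hN hk
  refine ⟨fun n => if |n| ∈ Finset.Icc a N then if 0 < n then b n else b' (-n) else 0,
    fun n => ?_, fun n hn => if_neg hn, fun U hU => hright U fun n hn => ?_,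
    fun U hU => hleft U fun n hn => ?_⟩
  · dsimp only
    split_ifs
    exacts [hb n, hb' (-n), Set.left_mem_Icc.2 zero_le_one]
  · have hn0 : 0 < n := by linarith [(Finset.mem_Icc.1 hn).1]
    simp only [hU n hn, abs_of_pos hn0, if_pos hn, if_pos hn0]
  · have hn0 : 0 < n := by linarith [(Finset.mem_Icc.1 hn).1]
    simp only [hU n hn, abs_neg, abs_of_pos hn0, if_pos hn, if_neg (by omega : ¬0 < -n), neg_neg]

end Barriers

/-- Properties of the perturbation `l * s` made to `V` at one stage of the construction: it creates
barriers on `[a, N]` and its reflection, and its values at the sites `0` and `1` keep the resolvents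
at the pairs (energy, box radius) in `T` small. -/
structure IsStage (V s : ℤ → ℝ) (K l h η β : ℝ) (a N : ℤ) (T : Finset (ℝ × ℤ)) : Prop where
  mem_Icc : ∀ n, s n ∈ Set.Icc 0 1
  eq_zero : ∀ n, n ≠ 0 → n ≠ 1 → |n| ∉ Finset.Icc a N → s n = 0
  barriers : ∀ U : ℤ → ℝ, (∀ n ∈ Finset.Icc a N, U n = V n + l * s n) → HasBarriers U K η β a N
  barriers_neg : ∀ U : ℤ → ℝ, (∀ n ∈ Finset.Icc a N, U n = V (-n) + l * s (-n)) →
    HasBarriers U K η β a N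
  wegner : ∀ j : ℤ, (j = 0 ∨ j = 1) → ∃ X : ℝ × ℤ → ℤ → ℂ, (∀ c ∈ T,
    IsResolventColumn (fun n => V n + l * s n) (-c.2) c.2 (c.1 + h * Complex.I) j (X c)) ∧
    ∑ c ∈ T, (X c j).im ≤ 20 * T.card / l

lemma exists_isStage (V : ℤ → ℝ) {K l h η β : ℝ} {a N : ℤ} {k : ℕ} (hK : 0 ≤ K) (hl : 0 < l)
    (hl1 : l ≤ 1) (hh : 0 < h) (hη : 0 < η) (hβ : 1 ≤ β) (ha : 2 ≤ a) (hN : N = a + 2 * k - 1)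
    (hk : ((2 * K / η + 1) * 4 * β ^ 2) ^ 2 < (1 + l ^ 2 / 128) ^ k) (T : Finset (ℝ × ℤ))
    (hT : ∀ c ∈ T, 1 ≤ c.2) : ∃ s, IsStage V s K l h η β a N T := by
  obtain ⟨t, ht, ht0, hright, hleft⟩ :=
    exists_symmetric_hasBarriers V hK hl hl1 hη hβ (by omega) hN hk
  obtain ⟨s₀, hs₀, s₁, hs₁, hW⟩ := exists_wegner (fun n => V n + l * t n) hl hh T hT
  have ht_zero : t 0 = 0 := ht0 0 (by rw [abs_zero, Finset.mem_Icc]; omega)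
  have ht_one : t 1 = 0 := ht0 1 (by rw [abs_one, Finset.mem_Icc]; omega)
  let s (n : ℤ) : ℝ := if n = 0 then s₀ else if n = 1 then s₁ else t n
  have hst (n : ℤ) (h0 : n ≠ 0) (h1 : n ≠ 1) : s n = t n :=
    (if_neg h0).trans (if_neg h1)
  have hraise : (fun n => V n + l * s n) = raise (fun n => V n + l * t n) (l * s₀) (l * s₁) := by
    ext n
    by_cases h0 : n = 0
    · simp [s, raise, h0, ht_zero]
    · by_cases h1 : n = 1 <;> simp [s, raise, h0, h1, ht_one]
  refine ⟨s, fun n => ?_, fun n h0 h1 hn => ?_, fun U hU => hright U fun n hn => ?_,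
    fun U hU => hleft U fun n hn => ?_, hraise ▸ hW⟩
  · dsimp only [s]
    split_ifs
    exacts [hs₀, hs₁, ht n]
  · rw [hst n h0 h1, ht0 n hn]
  · have := (Finset.mem_Icc.1 hn).1
    rw [hU n hn, hst n (by omega) (by omega)]
  · have := (Finset.mem_Icc.1 hn).1
    rw [hU n hn, hst (-n) (by omega) (by omega)]

lemma NonResonantNear.congr {V V' : ℤ → ℝ} {E h : ℝ} {a b : ℤ}
    (hVV' : ∀ n ∈ Finset.Icc a b, V n = V' n) (hV : NonResonantNear V E h a b) :
    NonResonantNear V' E h a b := by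
  intro p q hp hq x hx
  have hpoint (n : ℤ) (hn : n ∈ Finset.Icc p q) :
      (schrodinger V' x n - E * x n) ^ 2 = (schrodinger V x n - E * x n) ^ 2 := by
    simp only [schrodinger, hVV' n (Finset.Icc_subset_Icc (by omega) (by omega) hn)]
  rw [Finset.sum_congr rfl hpoint]
  exact hV p q hp hq x hx

lemma exists_nonResonantNear_finset (V : ℤ → ℝ) {a b : ℤ} (ha : 0 ≤ a) (hb : 0 ≤ b) :
    ∃ S : Finset ℝ, (S.card : ℝ) ≤ 4 * (b + 1) ∧
      ∀ E h : ℝ, 0 ≤ h → (∀ e ∈ S, h ≤ |E - e|) → NonResonantNear V E h a b := by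
  classical
  choose S hcard hS using exists_nonResonant_finset V
  let ends := ({a, a + 1} : Finset ℤ) ×ˢ ({b - 1, b} : Finset ℤ)
  have hends : ends.card ≤ 2 * 2 := by
    rw [Finset.card_product]
    exact Nat.mul_le_mul Finset.card_le_two Finset.card_le_two
  refine ⟨ends.biUnion fun c => S c.1 c.2, ?_, fun E h hh hE p q hp hq =>
    hS p q E h hh fun e he => hE e (Finset.mem_biUnion.2 ⟨(p, q), ?_, he⟩)⟩
  · have hbound := (Finset.card_biUnion_le_card_mul ends (fun c => S c.1 c.2) (b + 1).toNat
      fun c hc => (hcard c.1 c.2).trans ?_).trans (Nat.mul_le_mul_right _ hends)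
    · have : ((ends.biUnion fun c => S c.1 c.2).card : ℤ) ≤ 4 * (b + 1) := by omega
      exact_mod_cast this
    · simp only [ends, Finset.mem_product, Finset.mem_insert, Finset.mem_singleton] at hc
      omega
  · simpa [ends] using ⟨hp, hq⟩

lemma exists_nonResonantAt_finset (V : ℤ → ℝ) {a N : ℕ → ℤ} {h : ℕ → ℝ} (ha : ∀ l, 0 ≤ a l)
    (hN : Monotone N) (hN0 : ∀ l, 0 ≤ N l) {l : ℕ} (hh : 0 ≤ h l) :
    ∃ S : Finset ℝ, (S.card : ℝ) ≤ 12 * (N (l + 2) + 1) ∧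
      ∀ E : ℝ, (∀ e ∈ S, h l ≤ |E - e|) → NonResonantAt V E a N h l := by
  classical
  obtain ⟨S₁, hcard₁, hS₁⟩ := exists_nonResonantNear_finset V (ha l) (hN0 l)
  obtain ⟨S₂, hcard₂, hS₂⟩ := exists_nonResonantNear_finset V (ha (l + 2)) (hN0 (l + 2))
  obtain ⟨S₃, hcard₃, hS₃⟩ := exists_nonResonantNear_finset V (ha l) (hN0 (l + 2))
  refine ⟨S₁ ∪ S₂ ∪ S₃, ?_, fun E hE => ⟨?_, ?_, ?_⟩⟩
  · have hunion : ((S₁ ∪ S₂ ∪ S₃).card : ℝ) ≤ S₁.card + S₂.card + S₃.card := by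
      exact_mod_cast (Finset.card_union_le _ _).trans
        (Nat.add_le_add_right (Finset.card_union_le _ _) _)
    have hN' : (N l : ℝ) ≤ N (l + 2) := by exact_mod_cast hN (by omega)
    linarith
  · exact hS₁ E _ hh fun e he => hE e (by simp [he])
  · exact hS₂ E _ hh fun e he => hE e (by simp [he])
  · exact hS₃ E _ hh fun e he => hE e (by simp [he])

lemma NonResonantAt.congr {V V' : ℤ → ℝ} {E : ℝ} {a N : ℕ → ℤ} {h : ℕ → ℝ} {l : ℕ}
    (hN : N l ≤ N (l + 2)) (ha : a l ≤ a (l + 2))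
    (hVV' : ∀ n ∈ Finset.Icc (a l) (N (l + 2)), V n = V' n) (hV : NonResonantAt V E a N h l) :
    NonResonantAt V' E a N h l :=
  ⟨hV.1.congr fun n hn => hVV' n (Finset.Icc_subset_Icc le_rfl hN hn),
    hV.2.1.congr fun n hn => hVV' n (Finset.Icc_subset_Icc ha le_rfl hn), hV.2.2.congr hVV'⟩

/-- Energies near which `V` or its reflection may be resonant at level `l`, with a bound on their
number. -/
def IsResonanceCover (N a : ℕ → ℤ) (h : ℕ → ℝ) (S : ℕ → (ℤ → ℝ) → Finset ℝ) : Prop :=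
  ∀ l V, ((S l V).card : ℝ) ≤ 24 * (N (l + 2) + 1) ∧ ∀ E : ℝ, (∀ e ∈ S l V, h l ≤ |E - e|) →
    NonResonantAt V E a N h l ∧ NonResonantAt (fun n => V (-n)) E a N h l

lemma Scales.exists_isResonanceCover {a N : ℕ → ℤ} {h β η : ℕ → ℝ} (hs : Scales a N h β η) :
    ∃ S, IsResonanceCover N a h S := by
  classical
  have ha (l : ℕ) : 0 ≤ a l := by linarith [hs.two_le l]
  have hN (l : ℕ) : 0 ≤ N l := by linarith [hs.natCast_le l]
  choose S hcard hS using fun V l => exists_nonResonantAt_finset V ha hs.strictMono.monotone hN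
    (hs.h_pos l).le
  refine ⟨fun l V => S V l ∪ S (fun n => V (-n)) l, fun l V => ⟨?_, fun E hE => ⟨?_, ?_⟩⟩⟩
  · calc ((S V l ∪ S (fun n => V (-n)) l).card : ℝ)
        ≤ (S V l).card + (S (fun n => V (-n)) l).card := by
          exact_mod_cast Finset.card_union_le _ _
      _ ≤ 12 * (N (l + 2) + 1) + 12 * (N (l + 2) + 1) := add_le_add (hcard _ _) (hcard _ _)
      _ = 24 * (N (l + 2) + 1) := by ring
  · exact hS V l E fun e he => hE e (Finset.mem_union_left _ he)
  · exact hS _ l E fun e he => hE e (Finset.mem_union_right _ he)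

/-- Admissible parameters for the multiscale construction with barriers of length `2 * k l`
ending at `N l` and perturbations of size `lam l`. -/
structure Params (N : ℕ → ℤ) (k : ℕ → ℕ) (lam h β η : ℕ → ℝ) (K : ℝ) : Prop where
  scales : Scales (fun l => N l - 2 * k l + 1) N h β η
  lam_pos : ∀ l, 0 < lam l
  lam_le_one : ∀ l, lam l ≤ 1
  η_pos : ∀ l, 0 < η l
  bits : ∀ l, ((2 * K / η l + 1) * 4 * β l ^ 2) ^ 2 < (1 + lam l ^ 2 / 128) ^ k l
  weight : ∀ l, 7680 * h l * (N (l + 2) + 1) / lam (l + 3) ≤ (1 / 2) ^ l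
  tail : ∀ l n, ∑ i ∈ Finset.range n, lam (l + 4 + i) ≤ h l
  trunc : ∀ l, 4 ≤ h l ^ 2 * (N (l + 3) - 2)

/-- The pairs (energy, box radius) whose resolvents are controlled at a given stage: the resonances
of level `l` are dealt with at stage `l + 3`, and none are at the first three stages. -/
def resolventTargets (N : ℕ → ℤ) (S : ℕ → (ℤ → ℝ) → Finset ℝ) (V : ℤ → ℝ) : ℕ → Finset (ℝ × ℤ)
  | l + 3 => S l V ×ˢ {N (l + 2), N (l + 3)}
  | _ => ∅

lemma one_le_of_mem_resolventTargets {N : ℕ → ℤ} (hN : ∀ l, 1 ≤ N l)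
    {S : ℕ → (ℤ → ℝ) → Finset ℝ} {V : ℤ → ℝ} {m : ℕ} {c : ℝ × ℤ}
    (hc : c ∈ resolventTargets N S V m) : 1 ≤ c.2 := by
  match m with
  | 0 | 1 | 2 => exact absurd hc (Finset.notMem_empty c)
  | l + 3 =>
    rw [resolventTargets, Finset.mem_product, Finset.mem_insert, Finset.mem_singleton] at hc
    obtain ⟨-, hc | hc⟩ := hc <;> rw [hc] <;> exact hN _

lemma IsResonanceCover.card_resolventTargets_le {N a : ℕ → ℤ} {h : ℕ → ℝ}
    {S : ℕ → (ℤ → ℝ) → Finset ℝ} (hS : IsResonanceCover N a h S) (l : ℕ) (V : ℤ → ℝ) :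
    ((resolventTargets N S V (l + 3)).card : ℝ) ≤ 48 * (N (l + 2) + 1) := by
  rw [resolventTargets, Finset.card_product]
  calc (((S l V).card * ({N (l + 2), N (l + 3)} : Finset ℤ).card : ℕ) : ℝ)
      ≤ (S l V).card * 2 := by exact_mod_cast Nat.mul_le_mul_left _ Finset.card_le_two
    _ ≤ 24 * (N (l + 2) + 1) * 2 := by gcongr; exact (hS l V).1
    _ = 48 * (N (l + 2) + 1) := by ring

namespace Params

variable {N : ℕ → ℤ} {k : ℕ → ℕ} {lam h β η : ℕ → ℝ} {K : ℝ}

lemma lt_barrier (P : Params N k lam h β η K) {m j : ℕ} (hmj : m < j) :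
    N m < N j - 2 * k j + 1 := by
  obtain ⟨i, rfl⟩ := Nat.exists_eq_succ_of_ne_zero (Nat.ne_zero_of_lt hmj)
  exact (P.scales.strictMono.monotone (Nat.lt_succ_iff.1 hmj)).trans_lt (P.scales.lt_succ i)

lemma one_le_N (P : Params N k lam h β η K) (l : ℕ) : 1 ≤ N l := by
  linarith [P.scales.two_le l, P.scales.lt l]

lemma exists_stage (P : Params N k lam h β η K) (hK : 0 ≤ K) (S : ℕ → (ℤ → ℝ) → Finset ℝ)
    (V : ℤ → ℝ) (m : ℕ) : ∃ s, IsStage V s K (lam m) (h (m - 3)) (η m) (β m)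
      (N m - 2 * k m + 1) (N m) (resolventTargets N S V m) :=
  exists_isStage V hK (P.lam_pos m) (P.lam_le_one m) (P.scales.h_pos _) (P.η_pos m)
    (P.scales.one_le_β m) (P.scales.two_le m) (by ring) (P.bits m) _
    fun _ => one_le_of_mem_resolventTargets P.one_le_N

end Params

/-- `V 0, V 1, …` are the successive potentials of the construction and `W` is their limit: the step
from `V m` to `V (m + 1)` adds the stage `m` perturbation `lam m * s m` on the box of radius `N m`,
the only part of it that is prescribed. -/
structure IsPerturbationSequence (N : ℕ → ℤ) (k : ℕ → ℕ) (lam h β η : ℕ → ℝ) (K : ℝ)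
    (S : ℕ → (ℤ → ℝ) → Finset ℝ) (V s : ℕ → ℤ → ℝ) (W : ℤ → ℝ) : Prop where
  step : ∀ m n, |n| ≤ N m → V (m + 1) n = V m n + lam m * s m n
  tendsto : ∀ n, Filter.Tendsto (fun m => V m n) Filter.atTop (nhds (W n))
  stage : ∀ m, IsStage (V m) (s m) K (lam m) (h (m - 3)) (η m) (β m) (N m - 2 * k m + 1) (N m)
    (resolventTargets N S (V m) m)

lemma sum_filter_exists_le {ι κ M : Type*} [Fintype κ] [AddCommMonoid M] [PartialOrder M]
    [IsOrderedAddMonoid M] {f : κ → M} (hf : ∀ k, 0 ≤ f k) (s : Finset ι) (p : ι → κ → Prop)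
    [∀ i, DecidablePred (p i)] [DecidablePred fun k => ∃ i ∈ s, p i k] :
    ∑ k with ∃ i ∈ s, p i k, f k ≤ ∑ i ∈ s, ∑ k with p i k, f k := by
  classical
  refine le_trans (le_of_eq (Finset.sum_congr ?_ fun _ _ => rfl))
    (sum_biUnion_le hf s fun i => Finset.univ.filter (p i))
  ext k
  simp only [Finset.mem_filter_univ, Finset.mem_biUnion]

namespace IsPerturbationSequence

variable {N : ℕ → ℤ} {k : ℕ → ℕ} {lam h β η : ℕ → ℝ} {K : ℝ} {S : ℕ → (ℤ → ℝ) → Finset ℝ}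
  {V s : ℕ → ℤ → ℝ} {W : ℤ → ℝ}

lemma eq_of_ne (H : IsPerturbationSequence N k lam h β η K S V s W)
    (P : Params N k lam h β η K) {m : ℕ} {n : ℤ} (h0 : n ≠ 0) (h1 : n ≠ 1) (hn : |n| ≤ N m) :
    W n = V (m + 1) n := by
  have hconst (j : ℕ) (hj : m + 1 ≤ j) : V j n = V (m + 1) n := by
    induction j, hj using Nat.le_induction with
    | base => rfl
    | succ j hj ih =>
      have hzero : s j n = 0 := (H.stage j).eq_zero n h0 h1 fun hmem => by
        linarith [P.lt_barrier (show m < j by omega), (Finset.mem_Icc.1 hmem).1]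
      rw [H.step j n (hn.trans (P.scales.strictMono.monotone (by omega))), ih, hzero, mul_zero,
        add_zero]
  refine tendsto_nhds_unique (H.tendsto n) (tendsto_const_nhds.congr' ?_)
  filter_upwards [Filter.eventually_ge_atTop (m + 1)] with j hj using (hconst j hj).symm

lemma abs_sub_le_sum (H : IsPerturbationSequence N k lam h β η K S V s W)
    (P : Params N k lam h β η K) {m : ℕ} {n : ℤ} (hn : |n| ≤ N m) (i : ℕ) :
    |V (m + i) n - V m n| ≤ ∑ j ∈ Finset.range i, lam (m + j) := by
  induction i with
  | zero => simp
  | succ i ih =>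
    have hstep : |lam (m + i) * s (m + i) n| ≤ lam (m + i) := by
      obtain ⟨hs0, hs1⟩ := (H.stage (m + i)).mem_Icc n
      rw [abs_of_nonneg (mul_nonneg (P.lam_pos _).le hs0)]
      exact mul_le_of_le_one_right (P.lam_pos _).le hs1
    rw [Finset.sum_range_succ, ← add_assoc,
      H.step _ n (hn.trans (P.scales.strictMono.monotone (by omega))), add_sub_right_comm]
    exact (abs_add_le _ _).trans (add_le_add ih hstep)

lemma abs_sub_stage_le (H : IsPerturbationSequence N k lam h β η K S V s W)
    (P : Params N k lam h β η K) {l : ℕ} {n : ℤ} (hn : |n| ≤ N (l + 3)) :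
    |W n - (V (l + 3) n + lam (l + 3) * s (l + 3) n)| ≤ h l := by
  rw [← H.step (l + 3) n hn]
  refine le_of_tendsto ((((Filter.tendsto_add_atTop_iff_nat (l + 4)).2 (H.tendsto n)).sub_const
    _).abs) (.of_forall fun i => ?_)
  rw [add_comm i]
  exact (H.abs_sub_le_sum P (hn.trans (P.scales.strictMono.monotone (by omega))) i).trans
    (P.tail l i)

lemma hasBarriers (H : IsPerturbationSequence N k lam h β η K S V s W)
    (P : Params N k lam h β η K) (l : ℕ) :
    HasBarriers W K (η l) (β l) (N l - 2 * k l + 1) (N l) := by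
  refine (H.stage l).barriers W fun n hn => ?_
  have := P.scales.two_le l
  rw [Finset.mem_Icc] at hn
  have hn' : |n| ≤ N l := abs_le.2 (by omega)
  rw [H.eq_of_ne P (by omega) (by omega) hn', H.step l n hn']

lemma hasBarriers_neg (H : IsPerturbationSequence N k lam h β η K S V s W)
    (P : Params N k lam h β η K) (l : ℕ) :
    HasBarriers (fun n => W (-n)) K (η l) (β l) (N l - 2 * k l + 1) (N l) := by
  refine (H.stage l).barriers_neg _ fun n hn => ?_
  have := P.scales.two_le l
  rw [Finset.mem_Icc] at hn
  have hn' : |-n| ≤ N l := abs_le.2 (by omega)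
  rw [H.eq_of_ne P (by omega) (by omega) hn', H.step l (-n) hn']

lemma nonResonantAt (H : IsPerturbationSequence N k lam h β η K S V s W)
    (P : Params N k lam h β η K) (hS : IsResonanceCover N (fun l => N l - 2 * k l + 1) h S)
    {l : ℕ} {E : ℝ} (hE : ∀ e ∈ S l (V (l + 3)), h l ≤ |E - e|) :
    NonResonantAt W E (fun l => N l - 2 * k l + 1) N h l ∧
      NonResonantAt (fun n => W (-n)) E (fun l => N l - 2 * k l + 1) N h l := by
  have hN : N l ≤ N (l + 2) := P.scales.strictMono.monotone (by omega)
  have ha : N l - 2 * k l + 1 ≤ N (l + 2) - 2 * k (l + 2) + 1 := by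
    linarith [P.lt_barrier (show l < l + 2 by omega), P.scales.lt l]
  have htwo := P.scales.two_le l
  obtain ⟨hright, hleft⟩ := (hS l (V (l + 3))).2 E hE
  constructor
  · refine hright.congr hN ha fun n hn => (H.eq_of_ne P ?_ ?_ (abs_le.2 ?_)).symm <;>
      rw [Finset.mem_Icc] at hn <;> omega
  · refine hleft.congr hN ha fun n hn => (H.eq_of_ne P ?_ ?_ (abs_le.2 ?_)).symm <;>
      rw [Finset.mem_Icc] at hn <;> omega

lemma exists_radius (H : IsPerturbationSequence N k lam h β η K S V s W)
    (P : Params N k lam h β η K) {i l : ℕ} (hli : l ≤ i)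
    (B : BoxEigenbasis W (-N (i + 2)) (N (i + 2))) {j : ℤ} (hj : j = 0 ∨ j = 1) :
    ∃ R, (R = N (l + 2) ∨ R = N (l + 3)) ∧ ∀ (e : ℝ) (x : ℤ → ℂ),
      IsResolventColumn (fun n => V (l + 3) n + lam (l + 3) * s (l + 3) n) (-R) R
        (e + h l * Complex.I) j x →
      ∑ k with |B.E k - e| ≤ h l, B.φ k j ^ 2 ≤ 8 * h l * (x j).im := by
  have hclose {R : ℤ} (hR : R ≤ N (l + 3)) (n : ℤ) (hn : n ∈ Finset.Icc (-R) R) :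
      |W n - (V (l + 3) n + lam (l + 3) * s (l + 3) n)| ≤ h l :=
    H.abs_sub_stage_le P ((abs_le.2 (Finset.mem_Icc.1 hn)).trans hR)
  have hmem (m : ℕ) : j ∈ Finset.Icc (-N m) (N m) := by
    have := P.one_le_N m
    rw [Finset.mem_Icc]
    omega
  obtain hi | rfl | hi := Nat.lt_trichotomy i (l + 1)
  · obtain rfl : i = l := by omega
    exact ⟨_, .inl rfl, fun e x hx => B.sum_sq_filter_le_of_isResolventColumn hx (hmem _)
      (hclose (P.scales.strictMono.monotone (by omega)))⟩
  · exact ⟨_, .inr rfl, fun e x hx =>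
      B.sum_sq_filter_le_of_isResolventColumn hx (hmem _) (hclose le_rfl)⟩
  · refine ⟨_, .inr rfl, fun e x hx => B.sum_sq_filter_le_of_truncate hx hj (hclose le_rfl)
      (fun n hn h0 h1 => ?_) (P.scales.strictMono (by omega)) (P.trunc l)⟩
    have hn' : |n| ≤ N (l + 3) := abs_le.2 (Finset.mem_Icc.1 hn)
    rw [H.eq_of_ne P h0 h1 hn', H.step _ n hn']

lemma sum_sq_filter_le (H : IsPerturbationSequence N k lam h β η K S V s W)
    (P : Params N k lam h β η K) (hS : IsResonanceCover N (fun l => N l - 2 * k l + 1) h S)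
    {i l : ℕ} (hli : l ≤ i) (B : BoxEigenbasis W (-N (i + 2)) (N (i + 2))) {j : ℤ}
    (hj : j = 0 ∨ j = 1) :
    ∑ k with ∃ e ∈ S l (V (l + (3 : ℕ))), |B.E k - e| ≤ h l, B.φ k j ^ 2 ≤ (1 / 2) ^ l := by
  obtain ⟨R, hR, hcolumn⟩ := H.exists_radius P hli B hj
  obtain ⟨X, hX, hsum⟩ := (H.stage (l + 3)).wegner j hj
  rw [Nat.add_sub_cancel] at hX
  set T := resolventTargets N S (V (l + 3)) (l + 3) with hT
  have hh := P.scales.h_pos l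
  have hmem (e : ℝ) (he : e ∈ S l (V (l + 3))) : (e, R) ∈ T := by
    rw [hT, resolventTargets, Finset.mem_product, Finset.mem_insert, Finset.mem_singleton]
    exact ⟨he, hR⟩
  have hX_nonneg (c : ℝ × ℤ) (hc : c ∈ T) : 0 ≤ (X c j).im := by
    have := one_le_of_mem_resolventTargets P.one_le_N hc
    exact ((hX c hc).im_pos (by simpa using hh) (Finset.mem_Icc.2 (by omega))).le
  calc ∑ k with ∃ e ∈ S l (V (l + (3 : ℕ))), |B.E k - e| ≤ h l, B.φ k j ^ 2
      ≤ ∑ e ∈ S l (V (l + 3)), ∑ k with |B.E k - e| ≤ h l, B.φ k j ^ 2 :=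
        sum_filter_exists_le (fun k => sq_nonneg (B.φ k j)) _ fun e k => |B.E k - e| ≤ h l
    _ ≤ ∑ e ∈ S l (V (l + 3)), 8 * h l * (X (e, R) j).im :=
        Finset.sum_le_sum fun e he => hcolumn e _ (hX _ (hmem e he))
    _ = 8 * h l * ∑ c ∈ (S l (V (l + 3))).image fun e => (e, R), (X c j).im := by
        rw [← Finset.mul_sum, Finset.sum_image fun x _ y _ hxy => (Prod.ext_iff.1 hxy).1]
    _ ≤ 8 * h l * ∑ c ∈ T, (X c j).im := by
        refine mul_le_mul_of_nonneg_left ?_ (by positivity)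
        exact Finset.sum_le_sum_of_subset_of_nonneg (Finset.image_subset_iff.2 hmem)
          fun c hc _ => hX_nonneg c hc
    _ ≤ 8 * h l * (20 * (48 * (N (l + 2) + 1)) / lam (l + 3)) := by
        have := P.lam_pos (l + 3)
        gcongr
        refine hsum.trans ?_
        gcongr
        exact hS.card_resolventTargets_le l _
    _ = 7680 * h l * (N (l + 2) + 1) / lam (l + 3) := by ring
    _ ≤ (1 / 2) ^ l := P.weight l

theorem hasPurePointSpectrum {M : ℝ} (H : IsPerturbationSequence N k lam h β η (2 + M) S V s W)
    (P : Params N k lam h β η (2 + M)) (hS : IsResonanceCover N (fun l => N l - 2 * k l + 1) h S)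
    (hM : ∀ n, |W n| ≤ M) : HasPurePointSpectrum W :=
  P.scales.hasPurePointSpectrum hM (fun l => S l (V (l + 3))) (H.hasBarriers P)
    (H.hasBarriers_neg P) (fun _ _ hE => (H.nonResonantAt P hS hE).1)
    (fun _ _ hE => (H.nonResonantAt P hS hE).2) fun _ _ hli B _ => H.sum_sq_filter_le P hS hli B

end IsPerturbationSequence

/-! ### Diophantine rotations -/

lemma exists_lipschitzWith_Icc_extension {ι X : Type*} [PseudoMetricSpace X] {t : Set ι}
    {x : ι → X} {w : NNReal} (hw : 0 < w) (hsep : t.Pairwise fun m n => w ≤ dist (x m) (x n))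
    {s : ι → ℝ} (hs : ∀ n, s n ∈ Set.Icc 0 1) :
    ∃ F : X → ℝ, (∀ y, F y ∈ Set.Icc 0 1) ∧ LipschitzWith w⁻¹ F ∧ ∀ n ∈ t, F (x n) = s n := by
  obtain rfl | ⟨n₀, -⟩ := t.eq_empty_or_nonempty
  · exact ⟨fun _ => 0, fun _ => ⟨le_rfl, zero_le_one⟩, .const' 0, by simp⟩
  have : Nonempty ι := ⟨n₀⟩
  have hinj : t.InjOn x := fun m hm n hn hmn => by
    by_contra hne
    have hle : (w : ℝ) ≤ dist (x m) (x n) := hsep hm hn hne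
    rw [hmn, dist_self] at hle
    exact hw.not_ge (mod_cast hle)
  let f (y : X) : ℝ := s (Function.invFunOn x t y)
  have hf (n : ι) (hn : n ∈ t) : f (x n) = s n := congrArg s (hinj.leftInvOn_invFunOn hn)
  have hlip : LipschitzOnWith w⁻¹ f (x '' t) := .of_dist_le_mul fun y hy z hz => by
    obtain ⟨m, hm, rfl⟩ := hy
    obtain ⟨n, hn, rfl⟩ := hz
    rw [hf m hm, hf n hn]
    obtain rfl | hmn := eq_or_ne m n
    · simp
    · have hdist : 1 ≤ (w⁻¹ : NNReal) * dist (x m) (x n) := by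
        rw [NNReal.coe_inv, inv_mul_eq_div, one_le_div (mod_cast hw)]
        exact hsep hm hn hmn
      exact (Real.dist_le_of_mem_Icc_01 (hs m) (hs n)).trans hdist
  obtain ⟨g, hg, hgf⟩ := hlip.extend_real
  refine ⟨fun y => max 0 (min 1 (g y)), fun y => ?_, (hg.const_min 1).const_max 0, fun n hn => ?_⟩
  · exact ⟨le_max_left _ _, max_le zero_le_one (min_le_left _ _)⟩
  · dsimp only
    rw [← hgf ⟨n, hn, rfl⟩, hf n hn, min_eq_right (hs n).2, max_eq_right (hs n).1]

lemma abs_sub_le_mul_dist_rpow {X : Type*} [PseudoMetricSpace X] {F : X → ℝ} {L : NNReal}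
    (hF : ∀ y, F y ∈ Set.Icc 0 1) (hL : LipschitzWith L F) {γ : ℝ} (hγ0 : 0 ≤ γ) (hγ1 : γ ≤ 1)
    (y z : X) : |F y - F z| ≤ (L * dist y z) ^ γ := by
  obtain h | h := le_total 1 (L * dist y z)
  · exact (Real.dist_le_of_mem_Icc_01 (hF y) (hF z)).trans (Real.one_le_rpow h hγ0)
  · exact (hL.dist_le_mul y z).trans (Real.self_le_rpow_of_le_one (by positivity) h hγ1)

/-- The multiples `k • x` with `0 < |k| ≤ 2 * N` stay at distance at least `1 / (8 * N)` from zero,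
so that the points `k • x` with `|k| ≤ N` are `1 / (8 * N)`-separated. -/
def WellSeparated (x : UnitAddCircle) (N : ℕ) : Prop :=
  ∀ k : ℤ, k ≠ 0 → |k| ≤ 2 * N → 1 / (8 * N : ℝ) ≤ ‖k • x‖

/-- `α` is Diophantine: it is approximated by rationals at most polynomially well. -/
def IsDiophantine (α : ℝ) : Prop :=
  ∃ C : ℝ, 0 < C ∧ ∃ τ : ℝ, 0 < τ ∧
    ∀ p : ℤ, ∀ q : ℕ, 0 < q → C * (q : ℝ) ^ (-τ) ≤ |α - (p : ℝ) / (q : ℝ)|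

lemma norm_nsmul_coe (α : ℝ) (n : ℕ) :
    ‖n • (α : UnitAddCircle)‖ = |n * α - round (n * α)| := by
  rw [← AddCircle.coe_nsmul, UnitAddCircle.norm_eq, nsmul_eq_mul]

lemma one_le_mul_norm_nsmul_add (x : UnitAddCircle) {m n : ℕ}
    (h : m * ‖n • x‖ ≠ n * ‖m • x‖) : 1 ≤ m * ‖n • x‖ + n * ‖m • x‖ := by
  induction x using QuotientAddGroup.induction_on with | H α
  simp only [norm_nsmul_coe] at h ⊢
  set k : ℤ := n * round (m * α) - m * round (n * α) with hk
  have hk' : (k : ℝ) = m * (n * α - round (n * α)) - n * (m * α - round (m * α)) := by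
    rw [hk]
    push_cast
    ring
  have hk_ne : k ≠ 0 := fun hk0 => h <| by
    rw [hk0, Int.cast_zero, eq_comm, sub_eq_zero] at hk'
    simpa only [abs_mul, Nat.abs_cast] using congrArg abs hk'
  calc (1 : ℝ) ≤ |(k : ℝ)| := mod_cast Int.one_le_abs hk_ne
    _ ≤ |m * (n * α - round (n * α))| + |n * (m * α - round (m * α))| := hk' ▸ abs_sub _ _
    _ = _ := by simp only [abs_mul, Nat.abs_cast]

lemma exists_first_nsmul_lt (x : UnitAddCircle) {δ : ℝ} (hδ : 0 < δ) :
    ∃ q ≤ ⌈1 / δ⌉₊, 0 < q ∧ ‖q • x‖ < δ ∧ ∀ n, 0 < n → n < q → δ ≤ ‖n • x‖ := by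
  classical
  obtain ⟨j, hj, hjδ⟩ := AddCircle.exists_norm_nsmul_le x (n := ⌈1 / δ⌉₊)
    (Nat.ceil_pos.2 (by positivity))
  have hj_lt : ‖j • x‖ < δ := by
    refine hjδ.trans_lt ?_
    rw [one_div_lt (by positivity) hδ]
    exact (Nat.le_ceil _).trans_lt (mod_cast Nat.lt_succ_self _)
  have hex : ∃ q : ℕ, 0 < q ∧ ‖q • x‖ < δ := ⟨j, hj.1, hj_lt⟩
  refine ⟨Nat.find hex, (Nat.find_min' hex ⟨hj.1, hj_lt⟩).trans hj.2, (Nat.find_spec hex).1,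
    (Nat.find_spec hex).2, fun n hn hnq => ?_⟩
  by_contra! hlt
  exact Nat.find_min hex hnq ⟨hn, hlt⟩

/- With `δ` the smallest value of `‖n • x‖` over `n ≤ X`, the first `q` with `‖q • x‖ < δ` exceeds
`X`, and the determinant bound between `n` and `q` gives `δ ≥ 1 / (2 * q)`; take `N ≈ q / 2`. -/
lemma exists_wellSeparated_of_le {x : UnitAddCircle} {X : ℕ} (hX : 2 ≤ X) {δ₀ : ℝ} (hδ₀ : 0 < δ₀)
    (hδ : ∀ n : ℕ, 0 < n → n ≤ X → δ₀ ≤ ‖n • x‖) :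
    ∃ N : ℕ, X ≤ 2 * N + 1 ∧ (N : ℝ) ≤ 1 / δ₀ + 1 ∧ WellSeparated x N := by
  obtain ⟨n, hn, hmin⟩ := Finset.exists_min_image (Finset.Icc 1 X) (fun n : ℕ => ‖n • x‖)
    ⟨1, Finset.mem_Icc.2 ⟨le_rfl, by omega⟩⟩
  simp only [Finset.mem_Icc] at hn hmin
  have hδ₀n : δ₀ ≤ ‖n • x‖ := hδ n hn.1 hn.2
  have hn_pos : 0 < ‖n • x‖ := hδ₀.trans_le hδ₀n
  obtain ⟨q, hq_le, hq, hqn, hfirst⟩ := exists_first_nsmul_lt x hn_pos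
  have hXq : X < q := by
    by_contra! h
    exact (hmin q ⟨hq, h⟩).not_gt hqn
  have hnq : (n : ℝ) < q := mod_cast hn.2.trans_lt hXq
  have hlt : n * ‖q • x‖ < q * ‖n • x‖ := by gcongr
  have hdet : 1 ≤ 2 * q * ‖n • x‖ := by linarith [one_le_mul_norm_nsmul_add x hlt.ne]
  refine ⟨(q - 1) / 2, by omega, ?_, fun k hk0 hk => ?_⟩
  · calc (((q - 1) / 2 : ℕ) : ℝ) ≤ ⌈1 / ‖n • x‖⌉₊ := mod_cast by omega
      _ ≤ 1 / ‖n • x‖ + 1 := (Nat.ceil_lt_add_one (by positivity)).le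
      _ ≤ 1 / δ₀ + 1 := by gcongr
  · have hkn : ‖n • x‖ ≤ ‖k • x‖ := by
      obtain ⟨i, rfl | rfl⟩ := k.eq_nat_or_neg
      · rw [Nat.abs_cast] at hk
        rw [natCast_zsmul]
        exact hfirst i (by omega) (by omega)
      · rw [abs_neg, Nat.abs_cast] at hk
        rw [neg_smul, norm_neg, natCast_zsmul]
        exact hfirst i (by omega) (by omega)
    have hqN : (q : ℝ) ≤ 4 * ((q - 1) / 2 : ℕ) := mod_cast by omega
    refine le_trans ?_ hkn
    rw [div_le_iff₀ (by linarith)]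
    nlinarith

lemma le_norm_nsmul_of_diophantine {α C τ : ℝ} (hC : 0 ≤ C) (hτ : 0 ≤ τ)
    (hα : ∀ p : ℤ, ∀ q : ℕ, 0 < q → C * (q : ℝ) ^ (-τ) ≤ |α - (p : ℝ) / (q : ℝ)|) {n X : ℕ}
    (hn : 0 < n) (hnX : n ≤ X) : C * (X : ℝ) ^ (-τ) ≤ ‖n • (α : UnitAddCircle)‖ := by
  have hn0 : (0 : ℝ) < n := mod_cast hn
  calc C * (X : ℝ) ^ (-τ) ≤ C * (n : ℝ) ^ (-τ) := by
        gcongr C * ?_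
        exact Real.rpow_le_rpow_of_nonpos hn0 (mod_cast hnX) (by linarith)
    _ ≤ |α - round (n * α) / n| := hα _ n hn
    _ ≤ n * |α - round (n * α) / n| :=
        le_mul_of_one_le_left (abs_nonneg _) (mod_cast hn)
    _ = ‖n • (α : UnitAddCircle)‖ := by
        rw [norm_nsmul_coe, ← abs_of_pos hn0, ← abs_mul, abs_of_pos hn0, mul_sub,
          mul_div_cancel₀ _ hn0.ne']

lemma IsDiophantine.exists_wellSeparated {α : ℝ} (hα : IsDiophantine α) :
    ∃ A X₀ : ℕ, ∀ X : ℕ, X₀ ≤ X → ∃ N : ℕ, X ≤ N ∧ N ≤ X ^ A ∧ WellSeparated α N := by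
  obtain ⟨C, hC, τ, hτ, hα⟩ := hα
  refine ⟨⌈τ⌉₊ + 1, ⌈3 ^ τ / C⌉₊ + 1, fun X hX => ?_⟩
  have hX1 : (1 : ℝ) ≤ X := mod_cast (by omega : 1 ≤ X)
  have hXC : 3 ^ τ / C + 1 ≤ (X : ℝ) :=
    calc 3 ^ τ / C + 1 ≤ ⌈3 ^ τ / C⌉₊ + 1 := by gcongr; exact Nat.le_ceil _
      _ ≤ X := mod_cast hX
  obtain ⟨N, hN, hN', hsep⟩ := exists_wellSeparated_of_le (X := 2 * X + 1) (by omega)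
    (δ₀ := C * ((2 * X + 1 : ℕ) : ℝ) ^ (-τ)) (by positivity)
    fun n => le_norm_nsmul_of_diophantine hC.le hτ.le hα
  refine ⟨N, by omega, ?_, hsep⟩
  have hinv : 1 / (C * ((2 * X + 1 : ℕ) : ℝ) ^ (-τ)) ≤ 3 ^ τ / C * (X : ℝ) ^ τ :=
    calc 1 / (C * ((2 * X + 1 : ℕ) : ℝ) ^ (-τ)) = ((2 * X + 1 : ℕ) : ℝ) ^ τ / C := by
          rw [Real.rpow_neg (by positivity), ← div_eq_mul_inv, one_div_div]
      _ ≤ (3 * X : ℝ) ^ τ / C := by gcongr; push_cast; linarith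
      _ = 3 ^ τ / C * (X : ℝ) ^ τ := by rw [Real.mul_rpow (by norm_num) (by positivity)]; ring
  have hpow : (X : ℝ) ^ τ ≤ (X : ℝ) ^ ⌈τ⌉₊ := by
    rw [← Real.rpow_natCast]
    exact Real.rpow_le_rpow_of_exponent_le hX1 (Nat.le_ceil τ)
  have : (N : ℝ) ≤ (X : ℝ) ^ (⌈τ⌉₊ + 1) :=
    calc (N : ℝ) ≤ 3 ^ τ / C * (X : ℝ) ^ ⌈τ⌉₊ + X ^ ⌈τ⌉₊ := by
          refine hN'.trans (add_le_add (hinv.trans ?_) (one_le_pow₀ hX1))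
          gcongr
      _ = (3 ^ τ / C + 1) * (X : ℝ) ^ ⌈τ⌉₊ := by ring
      _ ≤ X * (X : ℝ) ^ ⌈τ⌉₊ := by gcongr
      _ = (X : ℝ) ^ (⌈τ⌉₊ + 1) := (pow_succ' _ _).symm
  exact_mod_cast this

lemma exists_seq_pow_le {p : ℕ → Prop} {A₀ X₀ : ℕ}
    (h : ∀ X : ℕ, X₀ ≤ X → ∃ N : ℕ, X ≤ N ∧ N ≤ X ^ A₀ ∧ p N) {A : ℕ} (hA : A ≠ 0) (B : ℕ) :
    ∃ N : ℕ → ℕ, B ≤ N 0 ∧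
      ∀ l, N l ^ A ≤ N (l + 1) ∧ N (l + 1) ≤ N l ^ (A * A₀) ∧ p (N l) := by
  choose F le_F F_le hp using h
  have hX₀ {n : ℕ} (hn : X₀ ≤ n) : X₀ ≤ n ^ A := hn.trans (Nat.le_self_pow hA _)
  let step (n : {n : ℕ // X₀ ≤ n ∧ p n}) : {n : ℕ // X₀ ≤ n ∧ p n} :=
    ⟨F (n.1 ^ A) (hX₀ n.2.1), (hX₀ n.2.1).trans (le_F _ _), hp _ _⟩
  let N (l : ℕ) : {n : ℕ // X₀ ≤ n ∧ p n} :=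
    Nat.rec ⟨F (max B X₀) (le_max_right _ _), (le_max_right _ _).trans (le_F _ _), hp _ _⟩
      (fun _ n => step n) l
  refine ⟨fun l => (N l).1, (le_max_left _ _).trans (le_F _ _), fun l => ⟨le_F _ _, ?_, (N l).2.2⟩⟩
  rw [pow_mul]
  exact F_le _ _

/-! ### Choice of the parameters -/

lemma exp_half_le {t : ℝ} (ht0 : 0 ≤ t) (ht1 : t ≤ 1) : Real.exp (t / 2) ≤ 1 + t := by
  refine (Real.exp_bound_div_one_sub_of_interval (by linarith) (by linarith)).trans ?_
  rw [div_le_iff₀ (by linarith)]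
  nlinarith

lemma eventually_mul_pow_lt_exp (C : ℝ) {c e : ℝ} (hc : 0 < c) (he : 0 < e) (Q : ℕ) :
    ∀ᶠ n : ℕ in Filter.atTop, C * (n : ℝ) ^ Q < Real.exp (c * (n : ℝ) ^ e) := by
  have htendsto : Filter.Tendsto (fun n : ℕ => (n : ℝ) ^ e) Filter.atTop Filter.atTop :=
    (tendsto_rpow_atTop he).comp tendsto_natCast_atTop_atTop
  have hlittle := ((isLittleO_rpow_exp_pos_mul_atTop (Q / e) hc).const_mul_left C).comp_tendsto
    htendsto
  filter_upwards [hlittle.def (show (0 : ℝ) < 1 / 2 by norm_num)] with n hn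
  simp only [Function.comp_apply] at hn
  rw [← Real.rpow_mul n.cast_nonneg, mul_div_cancel₀ _ he.ne', Real.rpow_natCast,
    Real.norm_of_nonneg (Real.exp_pos _).le] at hn
  linarith [Real.exp_pos (c * (n : ℝ) ^ e), (Real.le_norm_self _).trans hn]

lemma sq_rpow_sub_half_mul {y : ℝ} (hy : 0 < y) (d : ℝ) :
    (y ^ (d - 1 / 2)) ^ 2 * y = y ^ (2 * d) := by
  rw [← Real.rpow_natCast, ← Real.rpow_mul hy.le, ← Real.rpow_add_one hy.ne']
  congr 1
  push_cast
  ring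

lemma exp_le_one_add_pow {d : ℝ} (hd : d ≤ 1 / 6) {n : ℕ} (hn : 8 ≤ n) :
    Real.exp (1 / 2048 * (n : ℝ) ^ (6 * d)) ≤
      (1 + ((n : ℝ) ^ (3 * d - 1 / 2)) ^ 2 / 128) ^ (n / 4) := by
  have hn1 : (1 : ℝ) ≤ n := mod_cast (by omega : 1 ≤ n)
  set t := ((n : ℝ) ^ (3 * d - 1 / 2)) ^ 2 / 128 with ht
  have ht0 : 0 ≤ t := by positivity
  have htn : t * n = (n : ℝ) ^ (6 * d) / 128 := by
    rw [ht, div_mul_eq_mul_div, sq_rpow_sub_half_mul (by positivity)]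
    ring_nf
  have ht1 : t ≤ 1 := by
    have hpow : (n : ℝ) ^ (3 * d - 1 / 2) ≤ 1 :=
      Real.rpow_le_one_of_one_le_of_nonpos hn1 (by linarith)
    have : ((n : ℝ) ^ (3 * d - 1 / 2)) ^ 2 ≤ 1 := pow_le_one₀ (by positivity) hpow
    linarith
  have hquarter : (n : ℝ) / 8 ≤ (n / 4 : ℕ) := by
    rw [div_le_iff₀ (by norm_num)]
    exact mod_cast (by omega : n ≤ n / 4 * 8)
  calc Real.exp (1 / 2048 * (n : ℝ) ^ (6 * d)) = Real.exp (n / 8 * (t / 2)) := by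
        congr 1
        linarith
    _ ≤ Real.exp ((n / 4 : ℕ) * (t / 2)) := by gcongr
    _ = Real.exp (t / 2) ^ (n / 4) := by rw [Real.exp_nat_mul]
    _ ≤ (1 + t) ^ (n / 4) := by gcongr; exact exp_half_le ht0 ht1

lemma sq_net_mul_le {K d y : ℝ} (hK : 0 ≤ K) (hd : 0 ≤ d) (hy : 1 ≤ y) :
    ((2 * K / (y ^ (d - 1 / 2) / (2 * y)) + 1) * 4 * y ^ 2) ^ 2 ≤ (16 * K + 4) ^ 2 * y ^ 8 := by
  have hy0 : 0 < y := by linarith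
  have hpow : (y ^ (d - 1 / 2))⁻¹ ≤ y := by
    rw [← Real.rpow_neg hy0.le]
    exact Real.rpow_le_self_of_one_le hy (by linarith)
  have hdiv : 2 * K / (y ^ (d - 1 / 2) / (2 * y)) ≤ 4 * K * y ^ 2 :=
    calc 2 * K / (y ^ (d - 1 / 2) / (2 * y)) = 4 * K * (y * (y ^ (d - 1 / 2))⁻¹) := by
          field_simp
          ring
      _ ≤ 4 * K * (y * y) := by gcongr
      _ = 4 * K * y ^ 2 := by ring
  calc ((2 * K / (y ^ (d - 1 / 2) / (2 * y)) + 1) * 4 * y ^ 2) ^ 2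
      ≤ ((4 * K * y ^ 2 + y ^ 2) * 4 * y ^ 2) ^ 2 := by
        gcongr
        exact one_le_pow₀ hy
    _ = (16 * K + 4) ^ 2 * y ^ 8 := by ring

lemma eventually_sq_net_mul_lt {K d : ℝ} (hK : 0 ≤ K) (hd0 : 0 < d) (hd1 : d ≤ 1 / 6) (Q : ℕ) :
    ∀ᶠ n : ℕ in Filter.atTop, ∀ y : ℝ, 1 ≤ y → y ≤ (n : ℝ) ^ Q →
      ((2 * K / (y ^ (d - 1 / 2) / (2 * y)) + 1) * 4 * y ^ 2) ^ 2 <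
        (1 + ((n : ℝ) ^ (3 * d - 1 / 2)) ^ 2 / 128) ^ (n / 4) := by
  filter_upwards [eventually_mul_pow_lt_exp ((16 * K + 4) ^ 2) (c := 1 / 2048) (e := 6 * d)
    (by norm_num) (by linarith) (Q * 8), Filter.eventually_ge_atTop 8] with n hn hn8 y hy hyn
  calc _ ≤ (16 * K + 4) ^ 2 * y ^ 8 := sq_net_mul_le hK hd0.le hy
    _ ≤ (16 * K + 4) ^ 2 * ((n : ℝ) ^ Q) ^ 8 := by gcongr
    _ < Real.exp (1 / 2048 * (n : ℝ) ^ (6 * d)) := by rwa [← pow_mul]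
    _ ≤ _ := exp_le_one_add_pow hd1 hn8

/-- Superexponential growth of a sequence, quantified by the exponent `d` below which powers of its
terms are treated as negligible. -/
structure Growth (x : ℕ → ℝ) (d : ℝ) : Prop where
  large : 2 ^ 16 ≤ x 0
  sq_le : ∀ l, x l ^ 2 ≤ x (l + 1) ^ d
  pow_le : ∀ l, x l ^ 16 ≤ x (l + 1)

namespace Growth

variable {x : ℕ → ℝ} {d : ℝ}

lemma large_le (hx : Growth x d) (l : ℕ) : 2 ^ 16 ≤ x l := by
  induction l with
  | zero => exact hx.large
  | succ l ih =>
    exact ih.trans ((le_self_pow₀ (by linarith) (by norm_num)).trans (hx.pow_le l))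

lemma one_le (hx : Growth x d) (l : ℕ) : 1 ≤ x l := by
  linarith [hx.large_le l]

lemma pos (hx : Growth x d) (l : ℕ) : 0 < x l := by
  linarith [hx.large_le l]

lemma two_mul_le_sq (hx : Growth x d) (l : ℕ) : 2 * x l ≤ x l ^ 2 := by
  nlinarith [hx.large_le l]

lemma two_mul_le (hx : Growth x d) (l : ℕ) : 2 * x l ≤ x (l + 1) :=
  (hx.two_mul_le_sq l).trans
    ((pow_le_pow_right₀ (hx.one_le l) (by norm_num)).trans (hx.pow_le l))

lemma two_pow_mul_le (hx : Growth x d) (m i : ℕ) : 2 ^ i * x m ≤ x (m + i) :=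
  geom_le (u := fun i => x (m + i)) zero_le_two i fun _ _ => hx.two_mul_le _

lemma two_pow_le (hx : Growth x d) (l : ℕ) : 2 ^ (l + 16) ≤ x l :=
  calc (2 : ℝ) ^ (l + 16) = 2 ^ l * 2 ^ 16 := pow_add _ _ _
    _ ≤ 2 ^ l * x 0 := by gcongr; exact hx.large
    _ ≤ x l := by simpa only [zero_add] using hx.two_pow_mul_le 0 l

lemma rpow_neg_le (hx : Growth x d) (hd1 : d ≤ 1) (l : ℕ) :
    x l ^ (-d) ≤ (1 / 2) ^ l * x 0 ^ (-d) := by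
  have hstep (l : ℕ) : 2 * x l ^ d ≤ x (l + 1) ^ d :=
    calc 2 * x l ^ d ≤ 2 * x l := by
          gcongr
          exact Real.rpow_le_self_of_one_le (hx.one_le l) hd1
      _ ≤ x l ^ 2 := hx.two_mul_le_sq l
      _ ≤ x (l + 1) ^ d := hx.sq_le l
  have hpos := Real.rpow_pos_of_pos (hx.pos 0) d
  rw [Real.rpow_neg (hx.pos l).le, Real.rpow_neg (hx.pos 0).le, one_div, inv_pow, ← mul_inv]
  exact inv_anti₀ (by positivity) (geom_le (u := fun l => x l ^ d) zero_le_two l fun l _ => hstep l)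

lemma rpow_neg_eighth_le (hx : Growth x d) (m i : ℕ) :
    x (m + 1 + i) ^ (-(1 / 8 : ℝ)) ≤ (x m)⁻¹ * (1 / 2) ^ (i + 1) := by
  have hpos := hx.pos m
  have hle : x m * 2 ^ (i + 1) ≤ x (m + 1 + i) ^ (1 / 8 : ℝ) :=
    calc x m * 2 ^ (i + 1) = 2 * (2 ^ i * x m) := by ring
      _ ≤ 2 * x (m + i) := by gcongr; exact hx.two_pow_mul_le m i
      _ ≤ x (m + i) ^ 2 := hx.two_mul_le_sq _
      _ = (x (m + i) ^ 16) ^ (1 / 8 : ℝ) := by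
          rw [← Real.rpow_natCast, ← Real.rpow_natCast, ← Real.rpow_mul (hx.pos _).le]
          norm_num
      _ ≤ x (m + 1 + i) ^ (1 / 8 : ℝ) := by
          rw [add_right_comm]
          have := hx.pos (m + i)
          gcongr
          exact hx.pow_le _
  rw [Real.rpow_neg (hx.pos _).le, one_div (2 : ℝ), inv_pow, ← mul_inv]
  exact inv_anti₀ (by positivity) hle

lemma small (hx : Growth x d) (hd : 0 ≤ d) (l : ℕ) :
    16 / (x l ^ 2 * (x l ^ (d - 1 / 2)) ^ 2) ≤ (1 / 2) ^ (l + 1) := by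
  have hpos := hx.pos l
  calc 16 / (x l ^ 2 * (x l ^ (d - 1 / 2)) ^ 2) = 16 / (x l * x l ^ (2 * d)) := by
        rw [← sq_rpow_sub_half_mul hpos]
        ring
    _ ≤ 16 / (2 ^ (l + 16) * 1) := by
        gcongr
        · exact hx.two_pow_le l
        · exact Real.one_le_rpow (hx.one_le l) (by linarith)
    _ = 16 / 2 ^ 15 * (1 / 2) ^ (l + 1) := by
        rw [one_div, inv_pow, mul_one, ← div_eq_mul_inv, div_div, ← pow_add, add_comm 15]
    _ ≤ (1 / 2) ^ (l + 1) := mul_le_of_le_one_left (by positivity) (by norm_num)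

lemma sq_le_rpow_two_mul (hx : Growth x d) (hd : 0 ≤ d) (l : ℕ) :
    x l ^ 2 ≤ x (l + 1) ^ (2 * d) :=
  (hx.sq_le l).trans (Real.rpow_le_rpow_of_exponent_le (hx.one_le _) (by linarith))

lemma weight (hx : Growth x d) (hd : 0 ≤ d) (l : ℕ) :
    7680 * x (l + 1) ^ (d - 1 / 2) * (x l + 1) / x (l + 1) ^ (3 * d - 1 / 2) ≤ (1 / 2) ^ l := by
  have hpos := hx.pos l
  have hsplit : x (l + 1) ^ (3 * d - 1 / 2) = x (l + 1) ^ (2 * d) * x (l + 1) ^ (d - 1 / 2) := by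
    rw [← Real.rpow_add (hx.pos _)]
    ring_nf
  have hpow := Real.rpow_pos_of_pos (hx.pos (l + 1)) (d - 1 / 2)
  calc 7680 * x (l + 1) ^ (d - 1 / 2) * (x l + 1) / x (l + 1) ^ (3 * d - 1 / 2)
      = 7680 * (x l + 1) / x (l + 1) ^ (2 * d) := by
        rw [hsplit, mul_right_comm, mul_div_mul_right _ _ hpow.ne']
    _ ≤ 7680 * (x l + x l) / x l ^ 2 := by
        gcongr
        · exact hx.one_le l
        · exact hx.sq_le_rpow_two_mul hd l
    _ = 15360 / x l := by
        field_simp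
        norm_num
    _ ≤ 15360 / 2 ^ (l + 16) := by gcongr; exact hx.two_pow_le l
    _ = 15360 / 2 ^ 16 * (1 / 2) ^ l := by
        rw [pow_add, one_div, inv_pow]
        field_simp
    _ ≤ (1 / 2) ^ l := mul_le_of_le_one_left (by positivity) (by norm_num)

lemma tail (hx : Growth x d) (hd0 : 0 ≤ d) (hd1 : d ≤ 1 / 8) (l n : ℕ) :
    ∑ i ∈ Finset.range n, x (l + 1 + i) ^ (3 * d - 1 / 2) ≤ x l ^ (d - 1 / 2) :=
  calc ∑ i ∈ Finset.range n, x (l + 1 + i) ^ (3 * d - 1 / 2)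
      ≤ ∑ i ∈ Finset.range n, (x l)⁻¹ * (1 / 2) ^ (i + 1) := by
        refine Finset.sum_le_sum fun i _ => le_trans ?_ (hx.rpow_neg_eighth_le l i)
        exact Real.rpow_le_rpow_of_exponent_le (hx.one_le _) (by linarith)
    _ = (x l)⁻¹ * (1 / 2 * ∑ i ∈ Finset.range n, (1 / 2) ^ i) := by
        rw [Finset.mul_sum, Finset.mul_sum]
        exact Finset.sum_congr rfl fun i _ => by ring
    _ ≤ (x l)⁻¹ * (1 / 2 * 2) := by
        have := hx.pos l
        gcongr
        exact sum_geometric_two_le n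
    _ = x l ^ (-1 : ℝ) := by rw [Real.rpow_neg_one]; ring
    _ ≤ x l ^ (d - 1 / 2) := Real.rpow_le_rpow_of_exponent_le (hx.one_le _) (by linarith)

lemma trunc (hx : Growth x d) (hd0 : 0 ≤ d) (hd1 : d ≤ 1 / 2) (l : ℕ) :
    4 ≤ (x (l + 1) ^ (d - 1 / 2)) ^ 2 * (x (l + 1) - 2) := by
  have hle : (x (l + 1) ^ (d - 1 / 2)) ^ 2 ≤ 1 :=
    pow_le_one₀ (Real.rpow_nonneg (hx.pos _).le _)
      (Real.rpow_le_one_of_one_le_of_nonpos (hx.one_le _) (by linarith))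
  nlinarith [sq_rpow_sub_half_mul (hx.pos (l + 1)) d, hx.sq_le_rpow_two_mul hd0 l, hx.large_le l]

section Params

variable {N : ℕ → ℕ}

lemma scales (hx : Growth (fun l => (N l : ℝ)) d) (hd0 : 0 ≤ d) (hd1 : d ≤ 1 / 2) :
    Scales (fun l => (N l : ℤ) - 2 * (N l / 4 : ℕ) + 1) (fun l => N l)
      (fun l => (N (l + 3) : ℝ) ^ (d - 1 / 2)) (fun l => N (l + 3))
      (fun l => (N (l + 3) : ℝ) ^ (d - 1 / 2) / (2 * N (l + 3))) := by
  have hlarge (l : ℕ) : 2 ^ 16 ≤ N l := mod_cast hx.large_le l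
  have htwo (l : ℕ) : 2 * N l ≤ N (l + 1) := mod_cast hx.two_mul_le l
  have hpos (l : ℕ) : (0 : ℝ) < N l := hx.pos l
  have hh (l : ℕ) : (0 : ℝ) < (N l : ℝ) ^ (d - 1 / 2) := Real.rpow_pos_of_pos (hpos l) _
  have hmono (l : ℕ) : (N l : ℝ) ≤ N (l + 1) := mod_cast by linarith [htwo l]
  have hh_anti (l : ℕ) : (N (l + 1) : ℝ) ^ (d - 1 / 2) ≤ (N l : ℝ) ^ (d - 1 / 2) :=
    Real.rpow_le_rpow_of_nonpos (hpos l) (hmono l) (by linarith)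
  refine ⟨fun l => ?_, fun l => ?_, fun l => ?_, fun l => hx.one_le _, fun l => hmono _,
    fun l => (div_pos (hh _) (mul_pos two_pos (hpos _))).le, fun l => ?_, fun l => hh _,
    fun l => le_rfl, fun l => hx.small hd0 (l + 3)⟩
  · have := hlarge l
    omega
  · have := hlarge l
    omega
  · have := hlarge l
    have := htwo l
    omega
  · have := hpos (l + 3)
    have := hh (l + 3)
    rw [add_right_comm l 1 3]
    exact div_le_div₀ (hh _).le (hh_anti _) (by positivity) (by linarith [hmono (l + 3)])

theorem params (hx : Growth (fun l => (N l : ℝ)) d) {K : ℝ} {Q : ℕ} (hd0 : 0 ≤ d)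
    (hd1 : d ≤ 1 / 8) (hQ : ∀ l, N (l + 3) ≤ N l ^ Q)
    (hbits : ∀ n : ℕ, N 0 ≤ n → ∀ y : ℝ, 1 ≤ y → y ≤ (n : ℝ) ^ Q →
      ((2 * K / (y ^ (d - 1 / 2) / (2 * y)) + 1) * 4 * y ^ 2) ^ 2 <
        (1 + ((n : ℝ) ^ (3 * d - 1 / 2)) ^ 2 / 128) ^ (n / 4)) :
    Params (fun l => (N l : ℤ)) (fun l => N l / 4) (fun l => (N l : ℝ) ^ (3 * d - 1 / 2))
      (fun l => (N (l + 3) : ℝ) ^ (d - 1 / 2)) (fun l => N (l + 3))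
      (fun l => (N (l + 3) : ℝ) ^ (d - 1 / 2) / (2 * N (l + 3))) K := by
  have hpos (l : ℕ) : (0 : ℝ) < N l := hx.pos l
  have hmono : Monotone N := monotone_nat_of_le_succ fun l => by
    have : 2 * N l ≤ N (l + 1) := mod_cast hx.two_mul_le l
    omega
  refine ⟨hx.scales hd0 (by linarith), fun l => Real.rpow_pos_of_pos (hpos l) _,
    fun l => Real.rpow_le_one_of_one_le_of_nonpos (hx.one_le l) (by linarith),
    fun l => div_pos (Real.rpow_pos_of_pos (hpos _) _) (mul_pos two_pos (hpos _)),
    fun l => hbits (N l) (hmono l.zero_le) _ (hx.one_le _) (mod_cast hQ l), fun l => ?_,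
    fun l n => hx.tail hd0 hd1 (l + 3) n, fun l => mod_cast hx.trunc hd0 (by linarith) (l + 2)⟩
  exact (hx.weight hd0 (l + 2)).trans
    (pow_le_pow_of_le_one (by norm_num) (by norm_num) (by omega))

end Params

end Growth

theorem IsDiophantine.exists_params {α : ℝ} (hα : IsDiophantine α) {d K ε : ℝ} (hd0 : 0 < d)
    (hd1 : d ≤ 1 / 8) (hK : 0 ≤ K) (hε : 0 < ε) :
    ∃ (N : ℕ → ℕ) (h β η : ℕ → ℝ), (∀ l, 1 ≤ N l) ∧ (∀ l, WellSeparated α (N l)) ∧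
      Params (fun l => (N l : ℤ)) (fun l => N l / 4) (fun l => (N l : ℝ) ^ (3 * d - 1 / 2))
        h β η K ∧ ∃ u : ℝ, 0 < u ∧ u < ε ∧ ∀ l, (N l : ℝ) ^ (-d) ≤ (1 / 2) ^ l * u := by
  obtain ⟨A₀, X₀, hX⟩ := hα.exists_wellSeparated
  obtain ⟨A, hA⟩ := exists_nat_ge (max 16 (2 / d))
  have hA16 : 16 ≤ A := mod_cast (le_max_left (16 : ℝ) _).trans hA
  have hAd : 2 ≤ A * d := (div_le_iff₀ hd0).1 ((le_max_right _ _).trans hA)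
  obtain ⟨B₁, hB₁⟩ := Filter.eventually_atTop.1
    (eventually_sq_net_mul_lt hK hd0 (by linarith) ((A * A₀) ^ 3))
  obtain ⟨B₂, hB₂⟩ := Filter.eventually_atTop.1 <|
    ((tendsto_rpow_neg_atTop hd0).comp tendsto_natCast_atTop_atTop).eventually_lt_const hε
  obtain ⟨N, hN0, hN⟩ := exists_seq_pow_le hX (show A ≠ 0 by omega) (max (2 ^ 16) (max B₁ B₂))
  simp only [max_le_iff] at hN0
  obtain ⟨hN0, hNB₁, hNB₂⟩ := hN0
  have hN1 (l : ℕ) : 1 ≤ N l := by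
    induction l with
    | zero => exact le_trans (by norm_num) hN0
    | succ l ih => exact (Nat.one_le_pow _ _ ih).trans (hN l).1
  have hN1' (l : ℕ) : (1 : ℝ) ≤ N l := mod_cast hN1 l
  have hpow (l : ℕ) : (N l : ℝ) ^ A ≤ N (l + 1) := mod_cast (hN l).1
  have hgrowth : Growth (fun l => (N l : ℝ)) d := by
    refine ⟨mod_cast hN0, fun l => ?_, fun l => (pow_le_pow_right₀ (hN1' l) hA16).trans (hpow l)⟩
    calc (N l : ℝ) ^ 2 = (N l : ℝ) ^ (2 : ℝ) := (Real.rpow_two _).symm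
      _ ≤ (N l : ℝ) ^ (A * d) := Real.rpow_le_rpow_of_exponent_le (hN1' l) hAd
      _ = ((N l : ℝ) ^ A) ^ d := by rw [Real.rpow_mul (by positivity), Real.rpow_natCast]
      _ ≤ (N (l + 1) : ℝ) ^ d := by gcongr; exact hpow l
  have hQ (l : ℕ) : N (l + 3) ≤ N l ^ (A * A₀) ^ 3 :=
    calc N (l + 3) ≤ ((N l ^ (A * A₀)) ^ (A * A₀)) ^ (A * A₀) :=
          (hN _).2.1.trans (Nat.pow_le_pow_left ((hN _).2.1.trans
            (Nat.pow_le_pow_left (hN l).2.1 _)) _)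
      _ = N l ^ (A * A₀) ^ 3 := by rw [← pow_mul, ← pow_mul]; ring
  exact ⟨N, _, _, _, hN1, fun l => (hN l).2.2,
    hgrowth.params hd0.le hd1 hQ fun n hn => hB₁ n (hNB₁.trans hn), (N 0 : ℝ) ^ (-d),
    Real.rpow_pos_of_pos (by linarith [hN1' 0]) _, hB₂ _ hNB₂, hgrowth.rpow_neg_le (by linarith)⟩

/-! ### Density -/

lemma WellSeparated.exists_bump {x : UnitAddCircle} {N : ℕ} (hx : WellSeparated x N)
    (hN : 0 < N) (p : UnitAddCircle) {s : ℤ → ℝ} (hs : ∀ n, s n ∈ Set.Icc 0 1) :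
    ∃ F : UnitAddCircle → ℝ, (∀ y, F y ∈ Set.Icc 0 1) ∧ LipschitzWith (8 * N) F ∧
      ∀ n : ℤ, |n| ≤ N → F (p + n • x) = s n := by
  have hsep : {n : ℤ | |n| ≤ N}.Pairwise
      fun i j => (((8 * N : NNReal)⁻¹ : NNReal) : ℝ) ≤ dist (p + i • x) (p + j • x) := by
    intro i hi j hj hij
    rw [dist_add_left, dist_eq_norm, ← sub_smul, NNReal.coe_inv, ← one_div]
    refine mod_cast hx (i - j) (sub_ne_zero.2 hij) ?_
    linarith [abs_sub i j, hi.out, hj.out]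
  have hN' : (0 : NNReal) < (8 * N : NNReal)⁻¹ := by positivity
  simpa only [inv_inv, Set.mem_ofPred_eq] using
    exists_lipschitzWith_Icc_extension hN' hsep hs

lemma rpow_mul_rpow_le {y t d : ℝ} (hy : 0 < y) (ht : 0 ≤ t) (hd : -(1 / 8) ≤ d) :
    y ^ (3 * d - 1 / 2) * (8 * y * t) ^ (1 / 2 - 4 * d) ≤
      8 * y ^ (-d) * t ^ (1 / 2 - 4 * d) :=
  calc y ^ (3 * d - 1 / 2) * (8 * y * t) ^ (1 / 2 - 4 * d)
      = 8 ^ (1 / 2 - 4 * d) * y ^ (-d) * t ^ (1 / 2 - 4 * d) := by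
        rw [Real.mul_rpow (by positivity) ht, Real.mul_rpow (by norm_num) hy.le,
          show -d = (3 * d - 1 / 2) + (1 / 2 - 4 * d) by ring, Real.rpow_add hy]
        ring
    _ ≤ 8 * y ^ (-d) * t ^ (1 / 2 - 4 * d) := by
        gcongr
        exact Real.rpow_le_self_of_one_le (by norm_num) (by linarith)

lemma Params.exists_perturbation {N k : ℕ → ℕ} {h β η : ℕ → ℝ} {d K α : ℝ} {m : ℕ}
    (P : Params (fun l => (N l : ℤ)) k (fun l => (N l : ℝ) ^ (3 * d - 1 / 2)) h β η K)
    (hK : 0 ≤ K) (hsep : WellSeparated α (N m)) (hN : 1 ≤ N m) (hd0 : 0 ≤ d) (hd1 : d ≤ 1 / 8)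
    (S : ℕ → (ℤ → ℝ) → Finset ℝ) (ω : ℝ) (V : ℤ → ℝ) :
    ∃ (F : AddCircle (1 : ℝ) → ℝ) (s : ℤ → ℝ),
      IsStage V s K ((N m : ℝ) ^ (3 * d - 1 / 2)) (h (m - 3)) (η m) (β m) (N m - 2 * k m + 1) (N m)
        (resolventTargets (fun l => N l) S V m) ∧
      (∀ y, |F y| ≤ (N m : ℝ) ^ (-d)) ∧
      (∀ y z, |F y - F z| ≤ 8 * (N m : ℝ) ^ (-d) * dist y z ^ (1 / 2 - 4 * d)) ∧
      ∀ n : ℤ, |n| ≤ N m →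
        F ((ω + n * α : ℝ) : AddCircle (1 : ℝ)) = (N m : ℝ) ^ (3 * d - 1 / 2) * s n := by
  obtain ⟨s, hs⟩ := P.exists_stage hK S V m
  obtain ⟨F, hF, hlip, hFs⟩ := hsep.exists_bump hN ω hs.mem_Icc
  have hlam := P.lam_pos m
  refine ⟨fun y => (N m : ℝ) ^ (3 * d - 1 / 2) * F y, s, hs, fun y => ?_, fun y z => ?_,
    fun n hn => ?_⟩
  · rw [abs_of_nonneg (mul_nonneg hlam.le (hF y).1)]
    exact (mul_le_of_le_one_right hlam.le (hF y).2).trans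
      (Real.rpow_le_rpow_of_exponent_le (mod_cast hN) (by linarith))
  · rw [← mul_sub, abs_mul, abs_of_pos hlam]
    refine le_trans ?_ (rpow_mul_rpow_le (mod_cast hN) dist_nonneg (by linarith))
    gcongr
    exact mod_cast abs_sub_le_mul_dist_rpow hF hlip (by linarith) (by linarith) y z
  · rw [← hFs n hn, ← AddCircle.coe_zsmul, ← AddCircle.coe_add, zsmul_eq_mul]

lemma exists_tendsto_of_abs_increment_le {X : Type*} [PseudoMetricSpace X] (F : ℕ → (X → ℝ) → X → ℝ)
    (f : X → ℝ) {b : ℕ → ℝ} {B c γ : ℝ} (hb : HasSum b B) (hF : ∀ m g y, |F m g y| ≤ b m)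
    (hFγ : ∀ m g y z, |F m g y - F m g z| ≤ c * b m * dist y z ^ γ) :
    ∃ (G : ℕ → X → ℝ) (g : X → ℝ), (∀ m y, G (m + 1) y = G m y + F m (G m) y) ∧
      (∀ y, Filter.Tendsto (fun m => G m y) Filter.atTop (nhds (g y))) ∧
      (∀ y, |f y - g y| ≤ B) ∧
      ∀ y z, |(f y - g y) - (f z - g z)| ≤ c * B * dist y z ^ γ := by
  let G (m : ℕ) : X → ℝ := Nat.rec f (fun m g y => g y + F m g y) m
  have hsum (y : X) : Summable fun m => F m (G m) y :=
    .of_norm_bounded hb.summable fun m => hF m _ y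
  have hG (m : ℕ) (y : X) : G m y = f y + ∑ i ∈ Finset.range m, F i (G i) y := by
    induction m with
    | zero => simp [G]
    | succ m ih => rw [Finset.sum_range_succ, ← add_assoc, ← ih]
  refine ⟨G, fun y => f y + ∑' m, F m (G m) y, fun _ _ => rfl, fun y => ?_, fun y => ?_,
    fun y z => ?_⟩
  · simp only [hG]
    exact (hsum y).hasSum.tendsto_sum_nat.const_add _
  · rw [sub_add_cancel_left, abs_neg]
    exact tsum_of_norm_bounded (f := fun m => F m (G m) y) hb fun m => hF m _ y
  · rw [sub_add_cancel_left, sub_add_cancel_left, neg_sub_neg, ← (hsum z).tsum_sub (hsum y),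
      dist_comm]
    exact tsum_of_norm_bounded (f := fun m => F m (G m) z - F m (G m) y)
      ((hb.mul_left c).mul_right _) fun m => hFγ m _ z y

lemma IsHolder.exists_bound {γ : ℝ} (hγ : 0 ≤ γ) {f : AddCircle (1 : ℝ) → ℝ}
    (hf : IsHolder γ f) : ∃ M, ∀ x, |f x| ≤ M := by
  obtain ⟨C, hC, hf⟩ := hf
  refine ⟨|f 0| + C, fun x => ?_⟩
  have hdist : dist x 0 ≤ 1 := by
    have := AddCircle.norm_le_half_period (1 : ℝ) (x := x) one_ne_zero
    rw [abs_one] at this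
    rw [dist_zero_right]
    linarith
  calc |f x| ≤ |f 0| + |f x - f 0| := by simpa using abs_add_le (f 0) (f x - f 0)
    _ ≤ |f 0| + C := by
        gcongr
        exact (hf x 0).trans (mul_le_of_le_one_right hC (Real.rpow_le_one dist_nonneg hdist hγ))

lemma IsHolder.of_sub {γ C : ℝ} {f g : AddCircle (1 : ℝ) → ℝ} (hf : IsHolder γ f) (hC : 0 ≤ C)
    (hfg : ∀ x y, |(f x - g x) - (f y - g y)| ≤ C * dist x y ^ γ) : IsHolder γ g := by
  obtain ⟨D, hD, hf⟩ := hf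
  refine ⟨D + C, add_nonneg hD hC, fun x y => ?_⟩
  calc |g x - g y| = |(f x - f y) - ((f x - g x) - (f y - g y))| := by ring_nf
    _ ≤ |f x - f y| + |(f x - g x) - (f y - g y)| := abs_sub _ _
    _ ≤ D * dist x y ^ γ + C * dist x y ^ γ := add_le_add (hf x y) (hfg x y)
    _ = (D + C) * dist x y ^ γ := by ring

/-- Suppose `α` is Diophantine: there are `C > 0` and `τ > 0` with `|α - p/q| ≥ C q^{-τ}`
for all integers `p` and all positive integers `q`. Then for every phase `ω` and every
`γ ∈ (0, 1/2)`, the set of `γ`-Hölder functions `f` for which the Schrödinger operator with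
potential `V(n) = f(ω + nα)` has pure point spectrum is dense in `C^γ(𝕋,ℝ)` with respect to
the Hölder norm `‖f‖_γ = ‖f‖_∞ + sup_{x≠y} |f(x)-f(y)|/dist(x,y)^γ`; density is expressed by
approximating an arbitrary `γ`-Hölder `f` to precision `ε` in the `‖·‖_γ` norm. -/
theorem dense_purePoint_holder (α : ℝ) (hirr : Irrational α)
    (hdio : ∃ C : ℝ, 0 < C ∧ ∃ τ : ℝ, 0 < τ ∧
      ∀ p : ℤ, ∀ q : ℕ, 0 < q → C * (q : ℝ) ^ (-τ) ≤ |α - (p : ℝ) / (q : ℝ)|)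
    (ω : ℝ) (γ : ℝ) (hγ0 : 0 < γ) (hγ : γ < 1/2)
    (f : AddCircle (1:ℝ) → ℝ) (hf : IsHolder γ f) (ε : ℝ) (hε : 0 < ε) :
    ∃ g : AddCircle (1:ℝ) → ℝ, IsHolder γ g ∧
      (∃ C₁ C₂ : ℝ, 0 ≤ C₁ ∧ 0 ≤ C₂ ∧ C₁ + C₂ < ε ∧
        (∀ x, |f x - g x| ≤ C₁) ∧
        (∀ x y, |(f x - g x) - (f y - g y)| ≤ C₂ * dist x y ^ γ)) ∧
      HasPurePointSpectrum (fun n : ℤ => g ((ω + n * α : ℝ) : AddCircle (1:ℝ))) := by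
  obtain ⟨M, hM⟩ := hf.exists_bound hγ0.le
  have hM0 : 0 ≤ M := (abs_nonneg _).trans (hM 0)
  obtain ⟨d, rfl⟩ : ∃ d, γ = 1 / 2 - 4 * d := ⟨(1 / 2 - γ) / 4, by ring⟩
  obtain ⟨N, h, β, η, hN, hsep, P, u, hu0, huε, hu⟩ := IsDiophantine.exists_params hdio
    (d := d) (K := 2 + (M + ε)) (ε := ε / 18) (by linarith) (by linarith) (by linarith)
    (by positivity)
  obtain ⟨S, hS⟩ := P.scales.exists_isResonanceCover
  choose F s hstage hF hFγ hFs using fun m (g : AddCircle (1 : ℝ) → ℝ) =>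
    P.exists_perturbation (by linarith) (hsep m) (hN m) (by linarith) (by linarith) S ω
      fun n => g ((ω + n * α : ℝ) : AddCircle (1 : ℝ))
  obtain ⟨G, g, hG, hlim, hfg, hfgγ⟩ := exists_tendsto_of_abs_increment_le F f
    (hasSum_geometric_two.mul_right u) (fun m g y => (hF m g y).trans (hu m))
    fun m g y z => (hFγ m g y z).trans (by gcongr; exact hu m)
  refine ⟨g, hf.of_sub (by positivity) hfgγ, ⟨2 * u, 8 * (2 * u), by positivity, by positivity,
    by linarith, hfg, hfgγ⟩, ?_⟩
  refine IsPerturbationSequence.hasPurePointSpectrum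
    (V := fun m n => G m ((ω + n * α : ℝ) : AddCircle (1 : ℝ))) (s := fun m => s m (G m))
    ⟨fun m n hn => by rw [hG, hFs m (G m) n hn], fun n => hlim _, fun m => hstage m (G m)⟩
    P hS fun n => ?_
  linarith [abs_sub_abs_le_abs_sub (g (ω + n * α : ℝ)) (f (ω + n * α : ℝ)), abs_sub_comm
    (f (ω + n * α : ℝ)) (g (ω + n * α : ℝ)), hfg (ω + n * α : ℝ), hM (ω + n * α : ℝ)]
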